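/- arXiv:math/0212329 — 2 statements merged into one kernel-verified Lean document; each statement's English description precedes it below -/
import Mathlib

section
/- For every locally compact metric space X, dim_Z X ≤ dim X; and if dim X < ∞ then dim_Z X = dim X. -/
open Set Function

open scoped ENNReal

noncomputable section

/-! ### Covering dimension -/

/-- `CovDimLE X n` : every open cover of `X` has an open refinement of order at most `n + 1`
(i.e. at most `n + 1` members of the refinement have a common point). -/
def CovDimLE (X : Type*) [TopologicalSpace X] (n : ℕ) : Prop :=
  ∀ U : Set (Set X), (∀ u ∈ U, IsOpen u) → ⋃₀ U = univ →
    ∃ V : Set (Set X), (∀ v ∈ V, IsOpen v) ∧ ⋃₀ V = univ ∧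
      (∀ v ∈ V, ∃ u ∈ U, v ⊆ u) ∧
      ∀ T : Finset (Set X), ↑T ⊆ V → (⋂₀ (T : Set (Set X))).Nonempty → T.card ≤ n + 1

/-- The (Lebesgue) covering dimension of a topological space, valued in `ℕ∞`. -/
noncomputable def covDim (X : Type*) [TopologicalSpace X] : ℕ∞ :=
  sInf {e : ℕ∞ | ∃ n : ℕ, e = (n : ℕ∞) ∧ CovDimLE X n}

/-! ### Alexander–Spanier (Čech) cohomology -/

namespace AS

variable (A : Type*) [AddCommGroup A]

/-- Alexander–Spanier `n`-cochains on `X` with coefficients in `A`. -/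
abbrev Cochain (X : Type*) (n : ℕ) : Type _ := (Fin (n + 1) → X) → A

/-- The Alexander–Spanier coboundary operator. -/
def d (X : Type*) (n : ℕ) : Cochain A X n →+ Cochain A X (n + 1) :=
  AddMonoidHom.mk' (fun φ s => ∑ i : Fin (n + 2), ((-1 : ℤ) ^ (i : ℕ)) • φ (s ∘ i.succAbove))
    (fun φ ψ => funext fun s => by
      simp [smul_add, Finset.sum_add_distrib])

/-- An open cover of `X`. -/
def IsOpenCover {X : Type*} [TopologicalSpace X] (U : Set (Set X)) : Prop :=
  (∀ u ∈ U, IsOpen u) ∧ ⋃₀ U = univ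

/-- A tuple is `U`-small if it is contained in a single member of `U`. -/
def Small {X : Type*} (U : Set (Set X)) {k : ℕ} (s : Fin k → X) : Prop :=
  ∃ u ∈ U, ∀ i, s i ∈ u

/-- The subgroup of cochains vanishing on all tuples that are small with respect to
some open cover (i.e. vanishing in a neighbourhood of the diagonal). -/
def locZero (X : Type*) [TopologicalSpace X] (n : ℕ) : AddSubgroup (Cochain A X n) where
  carrier := {φ | ∃ U, IsOpenCover U ∧ ∀ s : Fin (n + 1) → X, Small U s → φ s = 0}
  zero_mem' := ⟨{univ}, ⟨fun u hu => by rw [mem_singleton_iff] at hu; rw [hu]; exact isOpen_univ,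
      by simp⟩, fun s _ => rfl⟩
  add_mem' := by
    rintro φ ψ ⟨U, ⟨hUo, hUc⟩, hφ⟩ ⟨W, ⟨hWo, hWc⟩, hψ⟩
    refine ⟨(fun p : Set X × Set X => p.1 ∩ p.2) '' (U ×ˢ W), ⟨?_, ?_⟩, ?_⟩
    · rintro _ ⟨⟨u, w⟩, ⟨hu, hw⟩, rfl⟩
      exact (hUo u hu).inter (hWo w hw)
    · apply eq_univ_of_forall
      intro x
      have hx1 : x ∈ ⋃₀ U := hUc ▸ mem_univ x
      have hx2 : x ∈ ⋃₀ W := hWc ▸ mem_univ x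
      obtain ⟨u, hu, hxu⟩ := hx1
      obtain ⟨w, hw, hxw⟩ := hx2
      exact ⟨u ∩ w, ⟨⟨u, w⟩, ⟨hu, hw⟩, rfl⟩, hxu, hxw⟩
    · rintro s ⟨_, ⟨⟨u, w⟩, ⟨hu, hw⟩, rfl⟩, hs⟩
      have h1 : φ s = 0 := hφ s ⟨u, hu, fun i => (hs i).1⟩
      have h2 : ψ s = 0 := hψ s ⟨w, hw, fun i => (hs i).2⟩
      show φ s + ψ s = 0
      rw [h1, h2, add_zero]
  neg_mem' := by
    rintro φ ⟨U, hU, hφ⟩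
    exact ⟨U, hU, fun s hs => by show -φ s = 0; rw [hφ s hs, neg_zero]⟩

/-- The Alexander–Spanier cochain complex: cochains modulo locally zero cochains. -/
abbrev QC (X : Type*) [TopologicalSpace X] (n : ℕ) : Type _ := Cochain A X n ⧸ locZero A X n

lemma d_locZero (X : Type*) [TopologicalSpace X] (n : ℕ) :
    locZero A X n ≤ (locZero A X (n + 1)).comap (d A X n) := by
  rintro φ ⟨U, hU, hφ⟩
  refine ⟨U, hU, fun s ⟨u, hu, hs⟩ => ?_⟩
  show (d A X n φ) s = 0
  have : ∀ i : Fin (n + 2), φ (s ∘ i.succAbove) = 0 :=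
    fun i => hφ _ ⟨u, hu, fun j => hs _⟩
  simp only [d, AddMonoidHom.mk'_apply]
  exact Finset.sum_eq_zero fun i _ => by rw [this i, smul_zero]

/-- The induced differential on the Alexander–Spanier complex. -/
def dQ (X : Type*) [TopologicalSpace X] (n : ℕ) : QC A X n →+ QC A X (n + 1) :=
  QuotientAddGroup.map _ _ (d A X n) (d_locZero A X n)

/-- Cocycles. -/
def cocycles (X : Type*) [TopologicalSpace X] (n : ℕ) : AddSubgroup (QC A X n) :=
  (dQ A X n).ker

/-- Coboundaries (the trivial subgroup in degree `0`). -/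
def cobounds (X : Type*) [TopologicalSpace X] (n : ℕ) : AddSubgroup (QC A X n) :=
  match n with
  | 0 => ⊥
  | (m + 1) => (dQ A X m).range

/-- Alexander–Spanier cohomology of `X` with coefficients in `A`; for paracompact Hausdorff
(e.g. metric) spaces this is naturally isomorphic to Čech cohomology. -/
def ASH (n : ℕ) (X : Type*) [TopologicalSpace X] : Type _ :=
  ↥(cocycles A X n) ⧸ ((cobounds A X n).comap (cocycles A X n).subtype)

instance (n : ℕ) (X : Type*) [TopologicalSpace X] : AddCommGroup (ASH A n X) :=
  inferInstanceAs (AddCommGroup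
    (↥(cocycles A X n) ⧸ ((cobounds A X n).comap (cocycles A X n).subtype)))

end AS

namespace AS

variable (A : Type*) [AddCommGroup A]

/-- Pullback of Alexander–Spanier cochains along a map. -/
def pull {X Y : Type*} (f : X → Y) (n : ℕ) : Cochain A Y n →+ Cochain A X n :=
  AddMonoidHom.mk' (fun φ s => φ (f ∘ s)) (fun φ ψ => rfl)

lemma pull_d {X Y : Type*} (f : X → Y) (n : ℕ) (φ : Cochain A Y n) :
    pull A f (n + 1) (d A Y n φ) = d A X n (pull A f n φ) := rfl

lemma pull_locZero {X Y : Type*} [TopologicalSpace X] [TopologicalSpace Y] {f : X → Y}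
    (hf : Continuous f) (n : ℕ) :
    locZero A Y n ≤ (locZero A X n).comap (pull A f n) := by
  rintro φ ⟨U, ⟨hUo, hUc⟩, hφ⟩
  refine ⟨(f ⁻¹' ·) '' U, ⟨?_, ?_⟩, ?_⟩
  · rintro _ ⟨u, hu, rfl⟩
    exact (hUo u hu).preimage hf
  · apply eq_univ_of_forall
    intro x
    have : f x ∈ ⋃₀ U := hUc ▸ mem_univ _
    obtain ⟨u, hu, hx⟩ := this
    exact ⟨f ⁻¹' u, ⟨u, hu, rfl⟩, hx⟩
  · rintro s ⟨_, ⟨u, hu, rfl⟩, hs⟩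
    exact hφ _ ⟨u, hu, fun i => hs i⟩

/-- Pullback on the Alexander–Spanier complex. -/
def pullQ {X Y : Type*} [TopologicalSpace X] [TopologicalSpace Y] {f : X → Y}
    (hf : Continuous f) (n : ℕ) : QC A Y n →+ QC A X n :=
  QuotientAddGroup.map _ _ (pull A f n) (pull_locZero A hf n)

lemma pullQ_d {X Y : Type*} [TopologicalSpace X] [TopologicalSpace Y] {f : X → Y}
    (hf : Continuous f) (n : ℕ) (x : QC A Y n) :
    pullQ A hf (n + 1) (dQ A Y n x) = dQ A X n (pullQ A hf n x) := by
  refine QuotientAddGroup.induction_on x ?_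
  intro φ
  simp only [pullQ, dQ, QuotientAddGroup.map_mk, pull_d]

lemma pullQ_cocycles {X Y : Type*} [TopologicalSpace X] [TopologicalSpace Y] {f : X → Y}
    (hf : Continuous f) (n : ℕ) {x : QC A Y n} (hx : x ∈ cocycles A Y n) :
    pullQ A hf n x ∈ cocycles A X n := by
  have : dQ A Y n x = 0 := hx
  show dQ A X n (pullQ A hf n x) = 0
  rw [← pullQ_d, this, map_zero]

lemma pullQ_cobounds {X Y : Type*} [TopologicalSpace X] [TopologicalSpace Y] {f : X → Y}
    (hf : Continuous f) (n : ℕ) {x : QC A Y n} (hx : x ∈ cobounds A Y n) :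
    pullQ A hf n x ∈ cobounds A X n := by
  match n with
  | 0 =>
    have : x = 0 := hx
    rw [this, map_zero]
    exact (⊥ : AddSubgroup (QC A X 0)).zero_mem
  | (m + 1) =>
    obtain ⟨y, rfl⟩ := hx
    exact ⟨pullQ A hf m y, (pullQ_d A hf m y).symm⟩

/-- The map on cocycles induced by a continuous map. -/
def pullZ {X Y : Type*} [TopologicalSpace X] [TopologicalSpace Y] {f : X → Y}
    (hf : Continuous f) (n : ℕ) : ↥(cocycles A Y n) →+ ↥(cocycles A X n) :=
  AddMonoidHom.codRestrict ((pullQ A hf n).comp (cocycles A Y n).subtype) _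
    (fun x => pullQ_cocycles A hf n x.2)

/-- The homomorphism induced on Alexander–Spanier (Čech) cohomology by a continuous map.
Note the contravariance: a map `f : X → Y` induces `ASHmap : ASH A n Y →+ ASH A n X`. -/
def ASHmap {X Y : Type*} [TopologicalSpace X] [TopologicalSpace Y] {f : X → Y}
    (hf : Continuous f) (n : ℕ) : ASH A n Y →+ ASH A n X :=
  QuotientAddGroup.map _ _ (pullZ A hf n) (by
    rintro ⟨x, hx⟩ hmem
    have : x ∈ cobounds A Y n := hmem
    exact pullQ_cobounds A hf n this)

end AS

namespace AS

variable (A : Type*) [AddCommGroup A]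

/-- Čech cohomology with compact supports: for compact `B` this is the (Alexander–Spanier =
Čech) cohomology of `B` itself, and for noncompact `B` it is that of the one-point
compactification of `B`. -/
def Hc (n : ℕ) (B : Type*) [TopologicalSpace B] : Type _ :=
  open scoped Classical in
  if CompactSpace B then ASH A n B else ASH A n (OnePoint B)

end AS

/-- The cohomological dimension `dim_A X` of a space `X` with respect to an abelian group `A`:
the supremum of the integers `n` for which there is a locally compact subset `B ⊆ X` with
`H^n_c(B; A) ≠ 0`. -/
noncomputable def cohDim (A : Type*) [AddCommGroup A] (X : Type*) [TopologicalSpace X] : ℕ∞ :=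
  sSup {e : ℕ∞ | ∃ n : ℕ, e = (n : ℕ∞) ∧
    ∃ B : Set X, LocallyCompactSpace B ∧ Nontrivial (AS.Hc A n B)}

/-! The cohomological dimension is at most the covering dimension because, on tuples that are small
with respect to a fine finite cover, the identity is homotopic to a map factoring through the nerve,
and the cohomology of a nerve of dimension `n` vanishes above `n`.

For the converse, suppose `dim X ≤ m + 1` and let all the groups `H^{m+1}_c(B)` vanish. The members
of a fine locally finite cover `P` whose closures have order `m + 2` must be shrunk so that no
`m + 2` of them meet. The sets `Q = ⋂ v ∈ σ, closure (P v)` with `σ.card = m + 2` are disjoint, so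
this can be done on each of them separately. There the cover amounts to a map of `Q` to an
`(m + 1)`-simplex, and a shrinking of it without a point common to all members amounts to a map to
the boundary sphere which agrees with the given one off the preimage `B` of the interior. The
obstruction is the image of the generator of `H^m(S^m)` in `H^{m+1}_c(B) = 0`, and by Hopf's theorem
it is the only one, since `dim Q ≤ m + 1`. Hopf's theorem is proved for covers by induction on `m`,
starting from the circle, where an integral cocycle gives a lift to `ℝ`: cutting the nerve along an
equator and using the Mayer-Vietoris connecting map lowers the dimension, and a map of the equator
to `S^m` suspends to a map to `S^{m+1}`. -/

namespace Alexandroff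

/-- The coboundary of a cochain on `k`-tuples. Tuples are indexed by their length, so that the
augmented complex starts at `k = 0`. -/
def coboundary {A V : Type*} [AddCommGroup A] {k : ℕ} :
    ((Fin k → V) → A) →+ ((Fin (k + 1) → V) → A) :=
  AddMonoidHom.mk' (fun φ s => ∑ i : Fin (k + 1), (-1 : ℤ) ^ (i : ℕ) • φ (s ∘ i.succAbove))
    fun φ ψ => by funext s; simp [Finset.sum_add_distrib]

local notation "δ" => coboundary

section Cochains

variable {A V W : Type*} [AddCommGroup A] {k : ℕ}

lemma coboundary_apply (φ : (Fin k → V) → A) (s : Fin (k + 1) → V) :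
    δ φ s = ∑ i : Fin (k + 1), (-1 : ℤ) ^ (i : ℕ) • φ (s ∘ i.succAbove) := rfl

lemma coboundary_congr {φ ψ : (Fin k → V) → A} {s : Fin (k + 1) → V}
    (h : ∀ i : Fin (k + 1), φ (s ∘ i.succAbove) = ψ (s ∘ i.succAbove)) : δ φ s = δ ψ s := by
  simp only [coboundary_apply, h]

lemma coboundary_eq_zero {φ : (Fin k → V) → A} {s : Fin (k + 1) → V}
    (h : ∀ i : Fin (k + 1), φ (s ∘ i.succAbove) = 0) : δ φ s = 0 := by
  simp only [coboundary_apply, h, smul_zero, Finset.sum_const_zero]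

lemma coboundary_comp (g : V → W) (φ : (Fin k → W) → A) (s : Fin (k + 1) → V) :
    δ (fun t => φ (g ∘ t)) s = δ φ (g ∘ s) := rfl

lemma coboundary_zero_apply (φ : (Fin 0 → V) → A) (s : Fin 1 → V) (t : Fin 0 → V) :
    δ φ s = φ t := by
  simp [coboundary_apply, Subsingleton.elim (s ∘ _) t]

/-- Contraction of a cochain with a vertex. -/
def cone (a : V) : ((Fin (k + 1) → V) → A) →+ ((Fin k → V) → A) :=
  AddMonoidHom.mk' (fun φ s => φ (Fin.cons a s)) fun _ _ => rfl

lemma cone_apply (a : V) (φ : (Fin (k + 1) → V) → A) (s : Fin k → V) :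
    cone a φ s = φ (Fin.cons a s) := rfl

lemma exists_eq_cons (x : Fin (k + 1) → V) : ∃ a r, x = Fin.cons a r :=
  ⟨x 0, Fin.tail x, (Fin.cons_self_tail x).symm⟩

lemma cons_comp_succAbove_zero (a : V) (s : Fin k → V) :
    (Fin.cons a s : Fin (k + 1) → V) ∘ (0 : Fin (k + 1)).succAbove = s := by
  funext i
  simp

lemma cons_comp_succAbove_succ (a : V) (s : Fin (k + 1) → V) (j : Fin (k + 1)) :
    (Fin.cons a s : Fin (k + 2) → V) ∘ j.succ.succAbove = Fin.cons a (s ∘ j.succAbove) := by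
  funext i
  refine Fin.cases ?_ (fun i => ?_) i <;> simp

lemma coboundary_cons (a : V) (φ : (Fin (k + 1) → V) → A) (s : Fin (k + 1) → V) :
    δ φ (Fin.cons a s) = φ s - δ (cone a φ) s := by
  simp only [coboundary_apply, Fin.sum_univ_succ (n := k + 1), cons_comp_succAbove_zero,
    cons_comp_succAbove_succ, Fin.val_zero, pow_zero, one_smul, Fin.val_succ, cone_apply,
    pow_succ, mul_neg, mul_one, neg_smul, Finset.sum_neg_distrib, sub_eq_add_neg]

lemma cone_coboundary (a : V) (φ : (Fin (k + 1) → V) → A) :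
    cone a (δ φ) = φ - δ (cone a φ) :=
  funext fun s => coboundary_cons a φ s

lemma coboundary_coboundary {k : ℕ} (φ : (Fin k → V) → A) : δ (δ φ) = 0 := by
  induction k with
  | zero =>
    funext s
    simp [coboundary_apply (δ φ), coboundary_zero_apply φ _ Fin.elim0]
  | succ k ih =>
    funext s
    obtain ⟨a, r, rfl⟩ := exists_eq_cons s
    simp [coboundary_cons, cone_coboundary, ih]

/-- The prism operator, a chain homotopy between the maps induced by two vertex maps. -/
def prism (f g : V → W) : {k : ℕ} → ((Fin (k + 1) → W) → A) → (Fin k → V) → A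
  | 0, _, _ => 0
  | _ + 1, φ, x => φ (Fin.cons (f (x 0)) (Fin.cons (g (x 0)) (g ∘ Fin.tail x))) -
      prism f g (cone (f (x 0)) φ) (Fin.tail x)

lemma prism_cons (f g : V → W) (φ : (Fin (k + 2) → W) → A) (a : V) (r : Fin k → V) :
    prism f g φ (Fin.cons a r) =
      φ (Fin.cons (f a) (Fin.cons (g a) (g ∘ r))) - prism f g (cone (f a) φ) r := by
  simp only [prism, Fin.cons_zero, Fin.tail_cons]

lemma prism_sub (f g : V → W) {k : ℕ} (φ ψ : (Fin (k + 1) → W) → A) (x : Fin k → V) :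
    prism f g (φ - ψ) x = prism f g φ x - prism f g ψ x := by
  induction k with
  | zero => exact (sub_zero 0).symm
  | succ k ih =>
    simp only [prism, map_sub, ih, Pi.sub_apply]
    abel

lemma coboundary_prism (f g : V → W) {k : ℕ} (φ : (Fin (k + 1) → W) → A)
    (x : Fin (k + 1) → V) :
    δ (prism f g φ) x + prism f g (δ φ) x = φ (g ∘ x) - φ (f ∘ x) := by
  induction k with
  | zero =>
    obtain ⟨a, r, rfl⟩ := exists_eq_cons x
    rw [coboundary_zero_apply _ _ r, prism_cons, coboundary_cons,
      coboundary_zero_apply _ _ (f ∘ r), Fin.comp_cons, Fin.comp_cons]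
    simp [prism, cone_apply]
  | succ k ih =>
    obtain ⟨a, r, rfl⟩ := exists_eq_cons x
    have cone_prism : cone a (prism f g φ) =
        (fun t => cone (g a) (cone (f a) φ) (g ∘ t)) - prism f g (cone (f a) φ) :=
      funext fun t => prism_cons f g φ a t
    have homotopy := ih (cone (f a) φ) r
    rw [cone_apply (f a) φ (f ∘ r)] at homotopy
    rw [coboundary_cons, prism_cons, coboundary_cons, cone_coboundary, prism_sub, cone_prism,
      map_sub, Pi.sub_apply, coboundary_cons, coboundary_comp, Fin.comp_cons, Fin.comp_cons,
      eq_sub_of_add_eq homotopy, ← sub_eq_zero]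
    abel

lemma prism_eq_zero (f g : V → W) {k : ℕ} (φ : (Fin (k + 1) → W) → A) (x : Fin k → V)
    (h : ∀ t : Fin (k + 1) → W, t 0 ∈ range (f ∘ x) →
      (∀ j, ∃ i, t j = f (x i) ∨ t j = g (x i)) → φ t = 0) :
    prism f g φ x = 0 := by
  induction k with
  | zero => rfl
  | succ k ih =>
    rw [prism, h, ih, sub_zero]
    · refine fun t _ ht => h _ ⟨0, rfl⟩ (Fin.cases ⟨0, Or.inl rfl⟩ fun j => ?_)
      exact (ht j).imp' Fin.succ fun _ => id
    · exact ⟨0, rfl⟩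
    · exact Fin.cases ⟨0, Or.inl rfl⟩ (Fin.cases ⟨0, Or.inr rfl⟩ fun j => ⟨j.succ, Or.inr rfl⟩)

end Cochains

section Complexes

variable {A V W : Type*} [AddCommGroup A] {k : ℕ}

/-- The tuples whose entries all lie in a common simplex of `F`, with repetitions allowed. -/
def tuplesIn (F : Set (Finset V)) : Set (Fin k → V) :=
  {s | ∃ σ ∈ F, ∀ j, s j ∈ σ}

lemma tuplesIn_mono {F M : Set (Finset V)} (h : M ⊆ F) :
    (tuplesIn M : Set (Fin k → V)) ⊆ tuplesIn F :=
  fun _ ⟨σ, hσ, hs⟩ => ⟨σ, h hσ, hs⟩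

lemma comp_mem_tuplesIn {F : Set (Finset V)} {s : Fin k → V} (h : s ∈ tuplesIn F) {l : ℕ}
    (r : Fin l → Fin k) : s ∘ r ∈ tuplesIn F :=
  let ⟨σ, hσ, hs⟩ := h
  ⟨σ, hσ, fun j => hs (r j)⟩

lemma eqOn_coboundary {F : Set (Finset V)} {φ ψ : (Fin k → V) → A}
    (h : EqOn φ ψ (tuplesIn F)) : EqOn (δ φ) (δ ψ) (tuplesIn F) :=
  fun _ hs => coboundary_congr fun _ => h (comp_mem_tuplesIn hs _)

lemma mem_tuplesIn_insert {F : Set (Finset V)} {τ : Finset V} {s : Fin k → V} :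
    s ∈ tuplesIn (insert τ F) ↔ (∀ j, s j ∈ τ) ∨ s ∈ tuplesIn F := by
  simp [tuplesIn]

lemma isLowerSet_insert_of_ssubset {M : Set (Finset V)} (hM : IsLowerSet M) {τ : Finset V}
    (hτ : ∀ σ, σ ⊂ τ → σ ∈ M) : IsLowerSet (insert τ M) := by
  rintro σ ρ hρσ (rfl | hσ)
  · exact (eq_or_ssubset_of_subset hρσ).imp id (hτ ρ)
  · exact Or.inr (hM hρσ hσ)

lemma exists_minimal_notMem [Finite V] {F M : Set (Finset V)} (hF : IsLowerSet F)
    (hFM : ¬ F ⊆ M) : ∃ τ ∈ F, τ ∉ M ∧ ∀ σ, σ ⊂ τ → σ ∈ M := by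
  obtain ⟨τ, ⟨hτF, hτM⟩, hmin⟩ :=
    (F \ M).toFinite.exists_minimal (sdiff_nonempty.2 hFM)
  exact ⟨τ, hτF, hτM, fun σ hσ => by_contra fun h => hσ.2 (hmin ⟨hF hσ.1 hτF, h⟩ hσ.1)⟩

/-- Extending a primitive over a single simplex `τ`: coning from a vertex gives a primitive on `τ`,
and its difference with `β` is a cocycle on the boundary of `τ`, hence a coboundary there. -/
lemma exists_extend_primitive_insert
    (acyclic : ∀ F : Set (Finset V), IsLowerSet F → (∀ σ ∈ F, σ.card ≤ k) →
      ∀ w : (Fin (k + 1) → V) → A, EqOn (δ w) 0 (tuplesIn F) →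
      ∃ β : (Fin k → V) → A, EqOn (δ β) w (tuplesIn F))
    {M : Set (Finset V)} (hM : IsLowerSet M) {τ : Finset V} (hτ : τ ∉ M)
    (hτM : ∀ σ, σ ⊂ τ → σ ∈ M) (hcard : τ.card ≤ k + 1) {w : (Fin (k + 2) → V) → A}
    (hw : ∀ s : Fin (k + 3) → V, (∀ j, s j ∈ τ) → δ w s = 0)
    {β : (Fin (k + 1) → V) → A} (hβ : EqOn (δ β) w (tuplesIn M)) :
    ∃ β' : (Fin (k + 1) → V) → A,
      EqOn β' β (tuplesIn M) ∧ EqOn (δ β') w (tuplesIn (insert τ M)) := by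
  classical
  rcases τ.eq_empty_or_nonempty with rfl | ⟨a, ha⟩
  · exact ⟨β, fun _ _ => rfl, fun s hs =>
      hβ ((mem_tuplesIn_insert.1 hs).resolve_left fun h => Finset.notMem_empty _ (h 0))⟩
  have primitive_cone : ∀ s : Fin (k + 2) → V, (∀ j, s j ∈ τ) → δ (cone a w) s = w s := by
    intro s hs
    have := coboundary_cons a w s
    rwa [hw _ (Fin.cases ha hs), eq_comm, sub_eq_zero, eq_comm] at this
  obtain ⟨η, hη⟩ := acyclic {σ | σ ⊂ τ} (fun σ ρ h hσ => lt_of_le_of_lt h hσ)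
    (fun σ hσ => Nat.lt_succ_iff.1 ((Finset.card_lt_card hσ).trans_le hcard)) (β - cone a w) (by
      rintro s ⟨σ, hσ, hs⟩
      simp [hβ ⟨σ, hτM σ hσ, hs⟩, primitive_cone s fun j => hσ.1 (hs j)])
  have agree : ∀ t : Fin (k + 1) → V, (∀ j, t j ∈ τ) → t ∈ tuplesIn M →
      β t = (cone a w + δ η) t := by
    rintro t htτ ⟨σ, hσ, htσ⟩
    have hssub : σ ∩ τ ⊂ τ := ⟨Finset.inter_subset_right, fun h =>
      hτ (hM (fun x hx => (Finset.mem_inter.1 (h hx)).1) hσ)⟩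
    rw [Pi.add_apply, hη ⟨σ ∩ τ, hssub, fun j => Finset.mem_inter.2 ⟨htσ j, htτ j⟩⟩]
    simp
  refine ⟨(tuplesIn M).piecewise β (cone a w + δ η), piecewise_eqOn _ _ _, fun s hs => ?_⟩
  by_cases hsM : s ∈ tuplesIn M
  · exact (eqOn_coboundary (piecewise_eqOn _ _ _) hsM).trans (hβ hsM)
  · have hsτ := (mem_tuplesIn_insert.1 hs).resolve_right hsM
    have congr : δ ((tuplesIn M).piecewise β (cone a w + δ η)) s = δ (cone a w + δ η) s :=
      coboundary_congr fun i => by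
        by_cases h : s ∘ i.succAbove ∈ tuplesIn M
        · exact (piecewise_eq_of_mem _ _ _ h).trans (agree _ (fun j => hsτ _) h)
        · exact piecewise_eq_of_notMem _ _ _ h
    rw [congr, map_add, coboundary_coboundary, add_zero, primitive_cone s hsτ]

lemma exists_extend_primitive_of_step [Finite V] {F : Set (Finset V)} (hF : IsLowerSet F)
    {w : (Fin (k + 1) → V) → A}
    (step : ∀ M : Set (Finset V), IsLowerSet M → ∀ τ ∈ F, τ ∉ M → (∀ σ, σ ⊂ τ → σ ∈ M) →
      τ.card ≤ k → ∀ β : (Fin k → V) → A, EqOn (δ β) w (tuplesIn M) →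
      ∃ β', EqOn β' β (tuplesIn M) ∧ EqOn (δ β') w (tuplesIn (insert τ M)))
    {M : Set (Finset V)} (hM : IsLowerSet M) (hcard : ∀ σ ∈ F, σ ∉ M → σ.card ≤ k)
    {β : (Fin k → V) → A} (hβ : EqOn (δ β) w (tuplesIn M)) :
    ∃ β', EqOn β' β (tuplesIn M) ∧ EqOn (δ β') w (tuplesIn F) := by
  induction hn : (F \ M).ncard using Nat.strong_induction_on generalizing M β with
  | _ n ih =>
  by_cases hFM : F ⊆ M
  · exact ⟨β, fun _ _ => rfl, hβ.mono (tuplesIn_mono hFM)⟩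
  obtain ⟨τ, hτF, hτM, hτ⟩ := exists_minimal_notMem hF hFM
  obtain ⟨β₁, h₁, hβ₁⟩ := step M hM τ hτF hτM hτ (hcard τ hτF hτM) β hβ
  have hlt : (F \ insert τ M).ncard < n := hn ▸ Set.ncard_lt_ncard
    ⟨sdiff_subset_sdiff_right (subset_insert τ M), fun h => (h ⟨hτF, hτM⟩).2 (mem_insert τ M)⟩
  obtain ⟨β₂, h₂, hβ₂⟩ := ih _ hlt (isLowerSet_insert_of_ssubset hM hτ)
    (fun σ hσ h => hcard σ hσ fun h' => h (Or.inr h')) hβ₁ rfl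
  exact ⟨β₂, (h₂.mono (tuplesIn_mono (subset_insert τ M))).trans h₁, hβ₂⟩

/-- A relative form of the vanishing of cohomology above the dimension. -/
theorem exists_extend_primitive [Finite V] {F M : Set (Finset V)} (hF : IsLowerSet F)
    (hM : IsLowerSet M) (hcard : ∀ σ ∈ F, σ ∉ M → σ.card ≤ k) {w : (Fin (k + 1) → V) → A}
    (hw : EqOn (δ w) 0 (tuplesIn F)) {β : (Fin k → V) → A} (hβ : EqOn (δ β) w (tuplesIn M)) :
    ∃ β', EqOn β' β (tuplesIn M) ∧ EqOn (δ β') w (tuplesIn F) := by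
  induction k generalizing F M with
  | zero =>
    refine ⟨β, fun _ _ => rfl, fun s ⟨σ, hσ, hs⟩ => hβ ⟨σ, by_contra fun h => ?_, hs⟩⟩
    exact Finset.notMem_empty (s 0) (Finset.card_eq_zero.1 (Nat.le_zero.1 (hcard σ hσ h)) ▸ hs 0)
  | succ k ih =>
    have acyclic : ∀ F : Set (Finset V), IsLowerSet F → (∀ σ ∈ F, σ.card ≤ k) →
        ∀ w : (Fin (k + 1) → V) → A, EqOn (δ w) 0 (tuplesIn F) →
        ∃ β : (Fin k → V) → A, EqOn (δ β) w (tuplesIn F) := fun F hF hc w hw =>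
      let ⟨β, _, hβ⟩ := ih (M := ∅) (β := 0) hF (fun _ _ _ h => h) (fun σ hσ _ => hc σ hσ) hw
        fun s ⟨_, h, _⟩ => h.elim
      ⟨β, hβ⟩
    exact exists_extend_primitive_of_step hF (fun M hM τ hτF hτM hτ hτc β hβ =>
      exists_extend_primitive_insert acyclic hM hτM hτ hτc (fun s hs => hw ⟨τ, hτF, hs⟩) hβ)
      hM hcard hβ

/-- The cochain on labels `Fin (m + 2)`, the vertices of an `(m + 1)`-simplex, that is the
alternating cochain dual to the facet opposite the vertex `0`. On the boundary of the simplex it is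
a cocycle representing a generator of the cohomology of this `m`-sphere. -/
def kappa (m : ℕ) (j : Fin (m + 1) → Fin (m + 2)) : ℤ :=
  (Matrix.of fun i k : Fin (m + 1) => if j i = k.succ then (1 : ℤ) else 0).det

lemma kappa_eq_zero {m : ℕ} {j : Fin (m + 1) → Fin (m + 2)} {i : Fin (m + 1)} (h : j i = 0) :
    kappa m j = 0 :=
  Matrix.det_eq_zero_of_row_eq_zero i fun k => by simp [h, (Fin.succ_ne_zero k).symm]

lemma coboundary_kappa (m : ℕ) (j : Fin (m + 2) → Fin (m + 2)) :
    δ (kappa m) j = (Matrix.of fun i k : Fin (m + 2) => if j i = k then (1 : ℤ) else 0).det := by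
  let B : Matrix (Fin (m + 2)) (Fin (m + 2)) ℤ := Matrix.of fun i k => if j i = k then 1 else 0
  have row_sums : (fun k => ∑ i, (1 : ℤ) • B k i) = fun _ => 1 := by
    funext k
    simp [B]
  have h := Matrix.det_updateCol_sum B 0 (fun _ => 1)
  rw [one_smul, row_sums] at h
  change _ = B.det
  rw [← h, Matrix.det_succ_column_zero, coboundary_apply]
  refine Finset.sum_congr rfl fun i _ => ?_
  rw [Matrix.updateCol_self, mul_one, smul_eq_mul]
  congr 1

lemma coboundary_kappa_eq_zero {m : ℕ} {j : Fin (m + 2) → Fin (m + 2)} {i : Fin (m + 2)}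
    (h : ∀ k, j k ≠ i) : δ (kappa m) j = 0 := by
  rw [coboundary_kappa]
  exact Matrix.det_eq_zero_of_column_eq_zero i fun k => by simp [h]

lemma kappa_comp_succ (m : ℕ) (j : Fin (m + 2) → Fin (m + 2)) :
    kappa (m + 1) (Fin.succ ∘ j) = δ (kappa m) j := by
  rw [coboundary_kappa, kappa]
  simp

end Complexes

section Subdivision

variable {V : Type*}

/-- The barycentric subdivision of a complex: its simplices are the flags of nonempty simplices. -/
def sd (F : Set (Finset V)) : Set (Finset (Finset V)) :=
  {c | (∀ σ ∈ c, σ ∈ F ∧ σ.Nonempty) ∧ IsChain (· ⊆ ·) (c : Set (Finset V))}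

lemma isLowerSet_sd (F : Set (Finset V)) : IsLowerSet (sd F) := fun _ _ h hc =>
  ⟨fun σ hσ => hc.1 σ (h hσ), hc.2.mono h⟩

lemma exists_top {c : Finset (Finset V)} (hc : IsChain (· ⊆ ·) (c : Set (Finset V)))
    (hne : c.Nonempty) : ∃ τ ∈ c, ∀ σ ∈ c, σ ⊆ τ :=
  let ⟨τ, hτ⟩ := c.exists_maximal hne
  ⟨τ, hτ.1, fun _ hσ => (hc.total hσ hτ.1).elim id (hτ.2 hσ)⟩

lemma exists_bot {c : Finset (Finset V)} (hc : IsChain (· ⊆ ·) (c : Set (Finset V)))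
    (hne : c.Nonempty) : ∃ τ ∈ c, ∀ σ ∈ c, τ ⊆ σ :=
  let ⟨τ, hτ⟩ := c.exists_minimal hne
  ⟨τ, hτ.1, fun _ hσ => (hc.total hτ.1 hσ).elim id (hτ.2 hσ)⟩

lemma exists_top_of_mem_tuplesIn_sd {F : Set (Finset V)} {k : ℕ} {s : Fin (k + 1) → Finset V}
    (hs : s ∈ tuplesIn (sd F)) : ∃ j₀, ∀ j, s j ⊆ s j₀ := by
  obtain ⟨c, hc, hsc⟩ := hs
  obtain ⟨j₀, hj₀⟩ := Finite.exists_max fun j => (s j).card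
  exact ⟨j₀, fun j => (hc.2.total (hsc j) (hsc j₀)).elim id fun h =>
    (Finset.eq_of_subset_of_card_le h (hj₀ j)).ge⟩

lemma card_le_of_isChain {c : Finset (Finset V)} (hc : IsChain (· ⊆ ·) (c : Set (Finset V)))
    {a b : ℕ} (h : ∀ σ ∈ c, a ≤ σ.card ∧ σ.card ≤ b) : c.card ≤ b + 1 - a := by
  rw [← Nat.card_Icc]
  refine Finset.card_le_card_of_injOn Finset.card (fun σ hσ => by simpa using h σ hσ) ?_
  intro σ hσ τ hτ heq
  rcases hc.total hσ hτ with h | h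
  · exact Finset.eq_of_subset_of_card_le h heq.ge
  · exact (Finset.eq_of_subset_of_card_le h heq.le).symm

lemma card_le_of_mem_sd {F : Set (Finset V)} {n : ℕ} (hF : ∀ σ ∈ F, σ.card ≤ n)
    {c : Finset (Finset V)} (hc : c ∈ sd F) : c.card ≤ n :=
  card_le_of_isChain (a := 1) hc.2 fun σ hσ =>
    ⟨Finset.card_pos.2 (hc.1 σ hσ).2, hF σ (hc.1 σ hσ).1⟩

/-- A vertex of the simplex `σ`, having the property `P` whenever some vertex of `σ` does. As a
vertex map from the subdivision of a complex to the complex, it is simplicial. -/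
def pick [Nonempty V] (P : V → Prop) (σ : Finset V) : V :=
  Classical.epsilon fun v => v ∈ σ ∧ ((∃ u ∈ σ, P u) → P v)

section Pick

variable [Nonempty V] {P : V → Prop} {σ : Finset V}

lemma pick_mem_and_imp (h : σ.Nonempty) : pick P σ ∈ σ ∧ ((∃ u ∈ σ, P u) → P (pick P σ)) := by
  refine Classical.epsilon_spec (p := fun v => v ∈ σ ∧ ((∃ u ∈ σ, P u) → P v)) ?_
  by_cases hP : ∃ u ∈ σ, P u
  · exact hP.imp fun u hu => ⟨hu.1, fun _ => hu.2⟩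
  · exact h.imp fun v hv => ⟨hv, fun h' => absurd h' hP⟩

lemma pick_mem (h : σ.Nonempty) : pick P σ ∈ σ :=
  (pick_mem_and_imp h).1

lemma pick_spec (h : ∃ v ∈ σ, P v) : P (pick P σ) :=
  (pick_mem_and_imp (h.imp fun _ => And.left)).2 h

lemma pick_mem_of_exists (h : ∃ v ∈ σ, P v) : pick P σ ∈ σ :=
  pick_mem (h.imp fun _ => And.left)

lemma pick_comp_mem_tuplesIn {F : Set (Finset V)} {k : ℕ} {s : Fin (k + 1) → Finset V}
    (hs : s ∈ tuplesIn (sd F)) : pick P ∘ s ∈ tuplesIn F := by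
  obtain ⟨j₀, htop⟩ := exists_top_of_mem_tuplesIn_sd hs
  obtain ⟨c, hc, hsc⟩ := hs
  exact ⟨s j₀, (hc.1 _ (hsc j₀)).1, fun j => htop j (pick_mem (hc.1 _ (hsc j)).2)⟩

end Pick

variable {X : Type*}

/-- The nerve of a family of sets. -/
def nerve (U : V → Set X) : Set (Finset V) :=
  {σ | ∃ x, ∀ v ∈ σ, x ∈ U v}

lemma isLowerSet_nerve (U : V → Set X) : IsLowerSet (nerve U) :=
  fun _ _ h ⟨x, hx⟩ => ⟨x, fun v hv => hx v (h hv)⟩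

lemma mem_tuplesIn_nerve {U : V → Set X} {k : ℕ} {s : Fin k → V} {x : X}
    (h : ∀ j, x ∈ U (s j)) : s ∈ tuplesIn (nerve U) := by
  classical
  exact ⟨Finset.univ.image s, ⟨x, by simpa using h⟩, fun j => by simp⟩

/-- The points whose barycentric coordinates `φ v` are positive for `v ∈ σ`, and larger there than
at all vertices outside `σ`. -/
def barycentricStar (φ : V → X → ℝ) (σ : Finset V) : Set X :=
  {x | σ.Nonempty ∧ ∀ v ∈ σ, 0 < φ v x ∧ ∀ u ∉ σ, φ u x < φ v x}

lemma barycentricStar_total {φ : V → X → ℝ} {σ τ : Finset V} {x : X}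
    (hσ : x ∈ barycentricStar φ σ) (hτ : x ∈ barycentricStar φ τ) : σ ⊆ τ ∨ τ ⊆ σ := by
  by_contra! h
  obtain ⟨⟨v, hv, hv'⟩, ⟨u, hu, hu'⟩⟩ := And.imp Finset.not_subset.1 Finset.not_subset.1 h
  exact lt_asymm ((hσ.2 v hv).2 u hu') ((hτ.2 u hu).2 v hv')

variable [TopologicalSpace X]

/-- An open cover indexed by the simplices of the nerve of `U`, refining `U` like the cover of the
geometric realization of a complex by the open stars of its barycentric subdivision. -/
structure IsSubdivision (U : V → Set X) (U' : Finset V → Set X) : Prop where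
  isOpen : ∀ σ, IsOpen (U' σ)
  covers : ∀ x, ∃ σ, x ∈ U' σ
  nonempty : ∀ {σ x}, x ∈ U' σ → σ.Nonempty
  mem : ∀ {σ x v}, x ∈ U' σ → v ∈ σ → x ∈ U v
  total : ∀ {σ τ x}, x ∈ U' σ → x ∈ U' τ → σ ⊆ τ ∨ τ ⊆ σ

lemma IsSubdivision.mem_nerve {U : V → Set X} {U' : Finset V → Set X} (h : IsSubdivision U U')
    {σ : Finset V} {x : X} (hx : x ∈ U' σ) : σ ∈ nerve U :=
  ⟨x, fun _ => h.mem hx⟩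

lemma IsSubdivision.nerve_subset {U : V → Set X} {U' : Finset V → Set X}
    (h : IsSubdivision U U') : nerve U' ⊆ sd (nerve U) :=
  fun _ ⟨_, hx⟩ => ⟨fun σ hσ => ⟨h.mem_nerve (hx σ hσ), h.nonempty (hx σ hσ)⟩,
    fun σ hσ τ hτ _ => h.total (hx σ hσ) (hx τ hτ)⟩

lemma isOpen_barycentricStar [Finite V] {φ : V → X → ℝ} (hφ : ∀ v, Continuous (φ v))
    (σ : Finset V) : IsOpen (barycentricStar φ σ) := by
  simp only [barycentricStar, ofPred_and, ofPred_forall]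
  exact isOpen_const.inter (isOpen_biInter_finset fun v _ =>
    (isOpen_lt continuous_const (hφ v)).inter (isOpen_iInter_of_finite fun u =>
      isOpen_iInter_of_finite fun _ => isOpen_lt (hφ u) (hφ v)))

lemma exists_isSubdivision [NormalSpace X] [Finite V] {U : V → Set X} (hU : ∀ v, IsOpen (U v))
    (hcov : ∀ x, ∃ v, x ∈ U v) : ∃ U' : Finset V → Set X, IsSubdivision U U' := by
  classical
  have := Fintype.ofFinite V
  obtain ⟨f, hf⟩ := PartitionOfUnity.exists_isSubordinate_of_locallyFinite (s := univ)
    isClosed_univ U hU (locallyFinite_of_finite U) fun x _ => mem_iUnion.2 (hcov x)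
  refine ⟨barycentricStar fun v => f v, isOpen_barycentricStar fun v => (f v).continuous,
    fun x => ?_, And.left, fun {σ x v} hx hv => hf v (subset_tsupport _ (hx.2 v hv).1.ne'),
    barycentricStar_total⟩
  refine ⟨Finset.univ.filter fun v => 0 < f v x, ?_, fun v hv => ?_⟩
  · exact (f.exists_pos (mem_univ x)).imp fun v hv => by simpa using hv
  · have hpos : 0 < f v x := by simpa using hv
    exact ⟨hpos, fun u hu => lt_of_le_of_lt (by simpa using hu) hpos⟩

end Subdivision

section LabelledCovers

universe u v

/-- An open cover with empty intersection. Composing a partition of unity subordinate to it with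
barycentric coordinates gives a map to the boundary of the simplex with vertex set `ι`. -/
structure IsBoundaryCover {ι X : Type*} [TopologicalSpace X] (W : ι → Set X) : Prop where
  isOpen : ∀ i, IsOpen (W i)
  covers : ∀ x, ∃ i, x ∈ W i
  exists_notMem : ∀ x, ∃ i, x ∉ W i

/-- A Hopf extension problem, stated with covers. The labels `l` of the vertices in `I` define a
simplicial map from part of the nerve of `U` to the boundary of an `(m + 1)`-simplex, which is an
`m`-sphere, and the cocycle `w` extends the pullback of the generator `kappa m` to all of the
nerve, which has dimension at most `m + 1`. -/
structure LabelledCover (m : ℕ) (X : Type u) (V : Type v) [TopologicalSpace X] where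
  U : V → Set X
  isOpen : ∀ v, IsOpen (U v)
  covers : ∀ x, ∃ v, x ∈ U v
  card_le : ∀ σ ∈ nerve U, σ.card ≤ m + 2
  I : Set V
  l : V → Fin (m + 2)
  exists_ne : ∀ σ ∈ nerve U, ↑σ ⊆ I → ∃ i, ∀ v ∈ σ, l v ≠ i
  w : (Fin (m + 1) → V) → ℤ
  cocycle : EqOn (δ w) 0 (tuplesIn (nerve U))
  standard : ∀ s ∈ tuplesIn (nerve U), (∀ j, s j ∈ I) → w s = kappa m (l ∘ s)

lemma kappa_zero_eq_zero_iff (j : Fin 1 → Fin 2) : kappa 0 j = 0 ↔ j 0 = 0 := by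
  rw [kappa, Matrix.det_fin_one]
  rcases Fin.exists_fin_two.1 ⟨j 0, rfl⟩ with h | h <;> simp [h]

namespace LabelledCover

variable {m : ℕ} {X : Type u} {V : Type v} [TopologicalSpace X]

/-- The points without constraint, or lying in a set of the cover with label `i`. -/
def labelled (H : LabelledCover m X V) (i : Fin (m + 2)) : Set X :=
  {x | ∃ v, x ∈ H.U v ∧ (v ∈ H.I → H.l v = i)}

/-- The map to the sphere defined by the labels near `I` extends to all of `X`. -/
def Solvable (H : LabelledCover m X V) : Prop :=
  ∃ W : Fin (m + 2) → Set X, IsBoundaryCover W ∧ ∀ i, W i ⊆ H.labelled i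

lemma notMem_labelled {H : LabelledCover m X V} {i : Fin (m + 2)} {x : X} :
    x ∉ H.labelled i ↔ ∀ v, x ∈ H.U v → v ∈ H.I ∧ H.l v ≠ i := by
  simp [labelled]

lemma isOpen_labelled (H : LabelledCover m X V) (i : Fin (m + 2)) : IsOpen (H.labelled i) := by
  simp only [labelled, ofPred_exists, ofPred_and]
  exact isOpen_iUnion fun v => (H.isOpen v).inter isOpen_const

lemma cocycle_pair (H : LabelledCover 0 X V) {x : X} {a b : V} (ha : x ∈ H.U a)
    (hb : x ∈ H.U b) : H.w (fun _ => a) = H.w fun _ => b := by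
  have h : δ H.w ![a, b] = 0 :=
    H.cocycle (mem_tuplesIn_nerve (x := x) (Fin.forall_fin_two.2 ⟨ha, hb⟩))
  have eb : (![a, b] : Fin 2 → V) ∘ Fin.succAbove 0 = fun _ => b := by
    funext i; fin_cases i; rfl
  have ea : (![a, b] : Fin 2 → V) ∘ Fin.succAbove 1 = fun _ => a := by
    funext i; fin_cases i; rfl
  rw [coboundary_apply, Fin.sum_univ_two, eb, ea] at h
  simp only [Fin.val_zero, pow_zero, one_smul, Fin.val_one, pow_one, neg_smul] at h
  linarith

lemma solvable_zero (H : LabelledCover 0 X V) : H.Solvable := by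
  refine ⟨fun i => {x | ∃ v, x ∈ H.U v ∧ (H.w (fun _ => v) = 0 ↔ i = 0)}, ⟨fun i => ?_,
    fun x => ?_, fun x => ?_⟩, fun i x ⟨v, hv, hvi⟩ => ⟨v, hv, fun hI => ?_⟩⟩
  · simp only [ofPred_exists, ofPred_and]
    exact isOpen_iUnion fun v => (H.isOpen v).inter isOpen_const
  · obtain ⟨v, hv⟩ := H.covers x
    by_cases h : H.w (fun _ => v) = 0
    · exact ⟨0, v, hv, by simp [h]⟩
    · exact ⟨1, v, hv, by simp [h]⟩
  · by_contra! h
    obtain ⟨⟨a, ha, ha0⟩, ⟨b, hb, hb1⟩⟩ := And.intro (h 0) (h 1)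
    rw [H.cocycle_pair ha hb] at ha0
    exact one_ne_zero (hb1.1 (ha0.2 rfl))
  · rw [H.standard _ (mem_tuplesIn_nerve (x := x) fun _ => hv) fun _ => hI,
      kappa_zero_eq_zero_iff] at hvi
    change H.l v = 0 ↔ i = 0 at hvi
    have h01 : ∀ i j : Fin 2, (j = 0 ↔ i = 0) → j = i := by decide
    exact h01 i (H.l v) hvi

end LabelledCover

section Arcs

/-- The positions of three vertices on the circle `ℝ / ℤ`. -/
def vertexPos : Fin 3 → ℝ := ![0, 1 / 3, -1 / 3]

/-- The preimage in `ℝ` of the open star of a vertex of the circle `ℝ / ℤ`. -/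
def arc (i : Fin 3) : Set ℝ := {t | ∃ k : ℤ, |t + k - vertexPos i| < 1 / 3}

lemma isOpen_arc (i : Fin 3) : IsOpen (arc i) := by
  simp only [arc, ofPred_exists]
  exact isOpen_iUnion fun k => isOpen_lt (by fun_prop) continuous_const

lemma add_intCast_mem_arc {i : Fin 3} {t : ℝ} (n : ℤ) (h : t + n ∈ arc i) : t ∈ arc i := by
  obtain ⟨k, hk⟩ := h
  exact ⟨n + k, by push_cast; rwa [← add_assoc]⟩

lemma exists_mem_arc (t : ℝ) : ∃ i, t ∈ arc i := by
  have fract_nonneg := Int.fract_nonneg t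
  have fract_lt_one := Int.fract_lt_one t
  have self_sub_floor := Int.self_sub_floor t
  rcases lt_or_ge (Int.fract t) (1 / 3) with h | h
  · refine ⟨0, -⌊t⌋, abs_lt.2 ?_⟩
    push_cast; simp only [vertexPos, Matrix.cons_val]; constructor <;> linarith
  rcases lt_or_ge (Int.fract t) (2 / 3) with h' | h'
  · refine ⟨1, -⌊t⌋, abs_lt.2 ?_⟩
    push_cast; simp only [vertexPos, Matrix.cons_val]; constructor <;> linarith
  · refine ⟨2, -⌊t⌋ - 1, abs_lt.2 ?_⟩
    push_cast; simp only [vertexPos, Matrix.cons_val]; constructor <;> linarith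

lemma exists_notMem_arc (t : ℝ) : ∃ i, t ∉ arc i := by
  by_contra! h
  obtain ⟨⟨a, ha⟩, ⟨b, hb⟩, ⟨c, hc⟩⟩ := And.intro (h 0) (And.intro (h 1) (h 2))
  simp only [vertexPos, Matrix.cons_val, abs_lt] at ha hb hc
  have eq_of_lt {x y : ℤ} (hxy : (x : ℝ) < y + 1) (hyx : (y : ℝ) < x + 1) : x = y := by
    have hxy' : x < y + 1 := by exact_mod_cast hxy
    have hyx' : y < x + 1 := by exact_mod_cast hyx
    omega
  obtain rfl : a = b := eq_of_lt (by linarith) (by linarith)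
  obtain hca | hca : c = a ∨ c = a - 1 := by
    rcases lt_or_ge (c : ℝ) a with _ | _
    · right
      exact eq_of_lt (by push_cast; linarith) (by push_cast; linarith)
    · left
      exact eq_of_lt (by linarith) (by linarith)
  all_goals
    rw [hca] at hc
    push_cast at hc
    linarith

lemma Icc_subset_compl_arc {i : Fin 3} {p : ℝ} {n : ℤ} (h : p + n = vertexPos i + 1 / 3) :
    Icc p (p + 1 / 3) ⊆ (arc i)ᶜ := by
  rintro t ⟨hpt, htp⟩ ⟨k, hk⟩
  rw [abs_lt] at hk
  have hkn : k < n := by exact_mod_cast (by linarith : (k : ℝ) < n)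
  have hnk : n < k + 1 := by exact_mod_cast (by linarith : (n : ℝ) < k + 1)
  omega

lemma kappa_one (a b : Fin 3) : kappa 1 ![a, b] =
    (if a = 1 then 1 else 0) * (if b = 2 then 1 else 0) -
      (if a = 2 then 1 else 0) * (if b = 1 then 1 else 0) := by
  rw [kappa, Matrix.det_fin_two]
  simp only [Matrix.of_apply]
  revert a b
  decide

/-- The lifts `kappa 1 ![a, b] + vertexPos b` of the two vertices `b ≠ i` bound a lift of the edge
opposite to `i`. -/
lemma exists_Icc_subset_compl_arc {i a : Fin 3} (ha : a ≠ i) : ∃ p : ℝ,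
    (∀ b, b ≠ i → (kappa 1 ![a, b] : ℝ) + vertexPos b ∈ Icc p (p + 1 / 3)) ∧
      Icc p (p + 1 / 3) ⊆ (arc i)ᶜ := by
  refine ⟨(![![0, 1 / 3, -2 / 3], ![-1 / 3, 0, -1 / 3], ![0, 0, 0]] : Fin 3 → Fin 3 → ℝ) i a,
    fun b hb => ?_, ?_⟩
  · rw [kappa_one]
    fin_cases i <;> fin_cases a <;> first
      | exact absurd rfl ha
      | (fin_cases b <;> first
          | exact absurd rfl hb
          | norm_num [vertexPos, Fin.ext_iff])
  · fin_cases i <;> fin_cases a <;> first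
      | exact absurd rfl ha
      | (refine Icc_subset_compl_arc (n := 0) ?_; norm_num [vertexPos]; done)
      | (refine Icc_subset_compl_arc (n := 1) ?_; norm_num [vertexPos])

end Arcs

namespace LabelledCover

variable {X : Type u} {V : Type v} [TopologicalSpace X]

lemma cocycle_triple (H : LabelledCover 1 X V) {x : X} {a b c : V} (ha : x ∈ H.U a)
    (hb : x ∈ H.U b) (hc : x ∈ H.U c) : H.w ![a, c] = H.w ![b, c] + H.w ![a, b] := by
  have h : δ H.w ![a, b, c] = 0 :=
    H.cocycle (mem_tuplesIn_nerve (x := x) (by simp [Fin.forall_fin_succ, ha, hb, hc]))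
  have e0 : (![a, b, c] : Fin 3 → V) ∘ Fin.succAbove 0 = ![b, c] := by
    funext i; fin_cases i <;> rfl
  have e1 : (![a, b, c] : Fin 3 → V) ∘ Fin.succAbove 1 = ![a, c] := by
    funext i; fin_cases i <;> rfl
  have e2 : (![a, b, c] : Fin 3 → V) ∘ Fin.succAbove 2 = ![a, b] := by
    funext i; fin_cases i <;> rfl
  rw [coboundary_apply, Fin.sum_univ_three, e0, e1, e2] at h
  simp only [Fin.val_zero, Fin.val_one, Fin.val_two, pow_zero, pow_one, one_smul, neg_smul,
    even_two.neg_one_pow] at h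
  omega

/-- The lift to `ℝ` of the circle-valued map defined by the cocycle, near the vertex `v`. -/
def angle [Fintype V] (H : LabelledCover 1 X V) (φ : V → X → ℝ) (v : V) (x : X) : ℝ :=
  ∑ u, φ u x * (H.w ![v, u] + vertexPos (H.l u))

variable [Fintype V] {H : LabelledCover 1 X V} {φ : V → X → ℝ} {x : X}

lemma angle_eq_add (hφ_nonneg : ∀ v, 0 ≤ φ v x) (hφ_sum : ∑ v, φ v x = 1)
    (hU : ∀ v, 0 < φ v x → x ∈ H.U v) {a b : V} (ha : 0 < φ a x) (hb : 0 < φ b x) :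
    H.angle φ a x = H.angle φ b x + H.w ![a, b] := by
  rw [← one_mul (H.w ![a, b] : ℝ), ← hφ_sum, Finset.sum_mul, angle, angle, ← Finset.sum_add_distrib]
  refine Finset.sum_congr rfl fun u _ => ?_
  rcases (hφ_nonneg u).eq_or_lt with h | h
  · simp [← h]
  · rw [H.cocycle_triple (hU a ha) (hU b hb) (hU u h)]
    push_cast
    ring

lemma angle_mem_Icc (hφ_nonneg : ∀ v, 0 ≤ φ v x) (hφ_sum : ∑ v, φ v x = 1) {v : V} {p q : ℝ}
    (h : ∀ u, 0 < φ u x → (H.w ![v, u] : ℝ) + vertexPos (H.l u) ∈ Icc p q) :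
    H.angle φ v x ∈ Icc p q := by
  have hterm (u : V) : φ u x * p ≤ φ u x * (H.w ![v, u] + vertexPos (H.l u)) ∧
      φ u x * (H.w ![v, u] + vertexPos (H.l u)) ≤ φ u x * q := by
    rcases (hφ_nonneg u).eq_or_lt with hu | hu
    · simp [← hu]
    · exact ⟨mul_le_mul_of_nonneg_left (h u hu).1 hu.le,
        mul_le_mul_of_nonneg_left (h u hu).2 hu.le⟩
  rw [← one_mul p, ← one_mul q, ← hφ_sum, Finset.sum_mul, Finset.sum_mul]
  exact ⟨Finset.sum_le_sum fun u _ => (hterm u).1, Finset.sum_le_sum fun u _ => (hterm u).2⟩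

lemma angle_notMem_arc (hφ_nonneg : ∀ v, 0 ≤ φ v x) (hφ_sum : ∑ v, φ v x = 1)
    (hU : ∀ v, 0 < φ v x → x ∈ H.U v) {i : Fin 3} (hx : x ∉ H.labelled i) {v : V}
    (hv : 0 < φ v x) : H.angle φ v x ∉ arc i := by
  rw [notMem_labelled] at hx
  obtain ⟨p, hp, harc⟩ := exists_Icc_subset_compl_arc (hx v (hU v hv)).2
  refine harc (angle_mem_Icc hφ_nonneg hφ_sum fun u hu => ?_)
  have hvu : ∀ j, x ∈ H.U (![v, u] j) := Fin.forall_fin_two.2 ⟨hU v hv, hU u hu⟩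
  have hl : H.l ∘ ![v, u] = ![H.l v, H.l u] := by
    funext i; fin_cases i <;> rfl
  rw [H.standard _ (mem_tuplesIn_nerve hvu) fun j => (hx _ (hvu j)).1, hl]
  exact hp _ (hx u (hU u hu)).2

omit [Fintype V] in
lemma solvable_one [NormalSpace X] [Finite V] (H : LabelledCover 1 X V) : H.Solvable := by
  have := Fintype.ofFinite V
  obtain ⟨φ, hφ⟩ := PartitionOfUnity.exists_isSubordinate_of_locallyFinite (s := univ)
    isClosed_univ H.U H.isOpen (locallyFinite_of_finite H.U) fun x _ => mem_iUnion.2 (H.covers x)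
  have hφ_nonneg (x : X) (v : V) : 0 ≤ φ v x := φ.nonneg v x
  have hφ_sum (x : X) : ∑ v, φ v x = 1 := by
    rw [← finsum_eq_sum_of_fintype]
    exact φ.sum_eq_one (mem_univ x)
  have hU (x : X) (v : V) (hv : 0 < φ v x) : x ∈ H.U v := hφ v (subset_tsupport _ hv.ne')
  let f : V → X → ℝ := H.angle fun v => φ v
  have hf (v : V) : Continuous (f v) :=
    continuous_finsetSum _ fun u _ => (φ u).continuous.mul continuous_const
  refine ⟨fun i => {x | ∃ v, 0 < φ v x ∧ f v x ∈ arc i}, ⟨fun i => ?_, fun x => ?_, fun x => ?_⟩,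
    fun i x ⟨v, hv, hvi⟩ => ?_⟩
  · simp only [ofPred_exists, ofPred_and]
    exact isOpen_iUnion fun v => (isOpen_lt continuous_const (φ v).continuous).inter
      ((isOpen_arc i).preimage (hf v))
  · obtain ⟨v, hv⟩ := φ.exists_pos (mem_univ x)
    obtain ⟨i, hi⟩ := exists_mem_arc (f v x)
    exact ⟨i, v, hv, hi⟩
  · obtain ⟨v, hv⟩ := φ.exists_pos (mem_univ x)
    obtain ⟨i, hi⟩ := exists_notMem_arc (f v x)
    refine ⟨i, fun ⟨u, hu, hui⟩ => hi (add_intCast_mem_arc (H.w ![u, v]) ?_)⟩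
    rwa [← angle_eq_add (hφ_nonneg x) (hφ_sum x) (hU x) hu hv]
  · by_contra hx
    exact angle_notMem_arc (hφ_nonneg x) (hφ_sum x) (hU x) hx hv hvi

end LabelledCover

end LabelledCovers

section Equator

/-- The simplices of `F` whose vertices all lie in `S`. -/
def fullSubcomplex {V : Type*} (F : Set (Finset V)) (S : Set V) : Set (Finset V) :=
  {σ ∈ F | ↑σ ⊆ S}

/-- The simplices of `F` with vertices on both sides of `T`. Their flags form a complex which
separates the full subcomplexes on `T` and `Tᶜ`. -/
def separating {V : Type*} (F : Set (Finset V)) (T : Set V) : Set (Finset V) :=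
  {σ ∈ F | (∃ v ∈ σ, v ∈ T) ∧ ∃ v ∈ σ, v ∉ T}

/-- The connecting map of the Mayer-Vietoris sequence on cochains: if `βp` and `βm` are primitives
of the cocycle `w` on the two sides of `T`, they differ by a cocycle on the separating complex. -/
def connecting {A V : Type*} [AddCommGroup A] [Nonempty V] {k : ℕ} (T : Set V)
    (βp βm : (Fin k → V) → A) (w : (Fin (k + 1) → V) → A) : (Fin k → Finset V) → A :=
  (fun s => βp (pick (· ∈ T) ∘ s)) - (fun s => βm (pick (· ∉ T) ∘ s)) -
    prism (pick (· ∉ T)) (pick (· ∈ T)) w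

variable {A V : Type*} [AddCommGroup A] {k : ℕ} {F : Set (Finset V)} {T : Set V}

lemma isLowerSet_fullSubcomplex (hF : IsLowerSet F) (S : Set V) :
    IsLowerSet (fullSubcomplex F S) := fun _ _ h hσ =>
  ⟨hF h hσ.1, (Finset.coe_subset.2 h).trans hσ.2⟩

lemma card_le_of_mem_sd_separating {n : ℕ} (hF : ∀ σ ∈ F, σ.card ≤ n + 1)
    {c : Finset (Finset V)} (hc : c ∈ sd (separating F T)) : c.card ≤ n :=
  card_le_of_isChain (a := 2) hc.2 fun σ hσ => by
    obtain ⟨hσF, ⟨u, hu, huT⟩, v, hv, hvT⟩ := (hc.1 σ hσ).1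
    exact ⟨Finset.one_lt_card.2 ⟨u, hu, v, hv, fun h => hvT (h ▸ huT)⟩, hF σ hσF⟩

lemma exists_top_of_mem_tuplesIn_sd_separating {s : Fin (k + 1) → Finset V}
    (hs : s ∈ tuplesIn (sd (separating F T))) :
    ∃ j₀, s j₀ ∈ F ∧ ∀ j, s j ⊆ s j₀ ∧ (∃ v ∈ s j, v ∈ T) ∧ ∃ v ∈ s j, v ∉ T := by
  obtain ⟨j₀, htop⟩ := exists_top_of_mem_tuplesIn_sd hs
  obtain ⟨c, hc, hsc⟩ := hs
  exact ⟨j₀, (hc.1 _ (hsc j₀)).1.1, fun j => ⟨htop j, (hc.1 _ (hsc j)).1.2⟩⟩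

variable [Nonempty V]

lemma pick_comp_mem_tuplesIn_fullSubcomplex (hF : IsLowerSet F) {P : V → Prop} {σ : Finset V}
    (hσ : σ ∈ F) {s : Fin k → Finset V} (hs : ∀ j, s j ⊆ σ ∧ ∃ v ∈ s j, P v) {S : Set V}
    (hS : ∀ v ∈ σ, P v → v ∈ S) : pick P ∘ s ∈ tuplesIn (fullSubcomplex F S) := by
  classical
  refine ⟨σ.filter P, ⟨hF (Finset.filter_subset _ _) hσ, fun v hv => ?_⟩, fun j => ?_⟩
  · obtain ⟨hvσ, hPv⟩ := Finset.mem_filter.1 (Finset.mem_coe.1 hv)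
    exact hS v hvσ hPv
  · exact Finset.mem_filter.2 ⟨(hs j).1 (pick_mem_of_exists (hs j).2), pick_spec (hs j).2⟩

lemma coboundary_connecting (hF : IsLowerSet F) {βp βm : (Fin k → V) → A}
    {w : (Fin (k + 1) → V) → A} (hw : EqOn (δ w) 0 (tuplesIn F))
    (hp : EqOn (δ βp) w (tuplesIn (fullSubcomplex F T)))
    (hm : EqOn (δ βm) w (tuplesIn (fullSubcomplex F Tᶜ))) :
    EqOn (δ (connecting T βp βm w)) 0 (tuplesIn (sd (separating F T))) := by
  intro s hs
  obtain ⟨j₀, hj₀, hsj⟩ := exists_top_of_mem_tuplesIn_sd_separating hs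
  have prism_cocycle : prism (pick (· ∉ T)) (pick (· ∈ T)) (δ w) s = 0 := by
    refine prism_eq_zero _ _ _ _ fun t _ ht => hw ⟨s j₀, hj₀, fun j => ?_⟩
    obtain ⟨i, hi | hi⟩ := ht j
    · exact hi ▸ (hsj i).1 (pick_mem_of_exists (hsj i).2.2)
    · exact hi ▸ (hsj i).1 (pick_mem_of_exists (hsj i).2.1)
  have homotopy := coboundary_prism (pick (· ∉ T)) (pick (· ∈ T)) w s
  rw [prism_cocycle, add_zero] at homotopy
  rw [connecting, map_sub, map_sub, Pi.sub_apply, Pi.sub_apply, coboundary_comp, coboundary_comp,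
    homotopy,
    hp (pick_comp_mem_tuplesIn_fullSubcomplex hF hj₀ (fun j => ⟨(hsj j).1, (hsj j).2.1⟩)
      fun _ _ h => h),
    hm (pick_comp_mem_tuplesIn_fullSubcomplex hF hj₀ (fun j => ⟨(hsj j).1, (hsj j).2.2⟩)
      fun _ _ h => h)]
  exact sub_self _

end Equator

section Gluing

variable {X : Type*} [TopologicalSpace X]

/-- The points all of whose simplices have vertices on both sides of `T`. -/
def equator {V : Type*} (U : Finset V → Set X) (T : Set V) : Set X :=
  {x | ∀ σ, x ∈ U σ → (∃ v ∈ σ, v ∈ T) ∧ ∃ v ∈ σ, v ∉ T}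

lemma isClosed_equator {V : Type*} {U : Finset V → Set X} (hU : ∀ σ, IsOpen (U σ)) (T : Set V) :
    IsClosed (equator U T) := by
  simp only [equator, ofPred_forall]
  exact isClosed_iInter fun σ => isClosed_imp (hU σ) isClosed_const

lemma exists_open_extension [NormalSpace X] {X₀ : Set X} (hX₀ : IsClosed X₀) {ι : Type*}
    [Finite ι] [Nonempty ι] {W : ι → Set X₀} (hW : IsBoundaryCover W) :
    ∃ O : ι → Set X, (∀ i, IsOpen (O i)) ∧ (∀ x : X₀, ∃ i, x ∈ W i ∧ ↑x ∈ O i) ∧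
      ∀ x, ∃ i, x ∉ O i := by
  have : NormalSpace X₀ := hX₀.isClosedEmbedding_subtypeVal.normalSpace
  obtain ⟨E, hEcov, hEclosed, hEW⟩ := exists_iUnion_eq_closed_subset hW.isOpen
    (fun _ => toFinite _) (eq_univ_of_forall fun x => mem_iUnion.2 (hW.covers x))
  have compl_cov : ⋃ i, (Subtype.val '' E i)ᶜ = univ := by
    refine eq_univ_of_forall fun x => by_contra fun h => ?_
    simp only [mem_iUnion, mem_compl_iff, not_exists, not_not] at h
    obtain ⟨y, -, rfl⟩ := h (Classical.arbitrary ι)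
    obtain ⟨i, hi⟩ := hW.exists_notMem y
    exact hi (hEW i (Subtype.val_injective.mem_set_image.1 (h i)))
  obtain ⟨K, hKcov, hKclosed, hKE⟩ := exists_iUnion_eq_closed_subset
    (fun i => (hX₀.isClosedEmbedding_subtypeVal.isClosedMap _ (hEclosed i)).isOpen_compl)
    (fun _ => toFinite _) compl_cov
  refine ⟨fun i => (K i)ᶜ, fun i => (hKclosed i).isOpen_compl, fun x => ?_, fun x => ?_⟩
  · obtain ⟨i, hi⟩ := mem_iUnion.1 (hEcov ▸ mem_univ x)
    exact ⟨i, hEW i hi, fun hK => hKE i hK ⟨x, hi, rfl⟩⟩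
  · obtain ⟨i, hi⟩ := mem_iUnion.1 (hKcov ▸ mem_univ x)
    exact ⟨i, fun h => h hi⟩

/-- A map from the equator `X₀` to the equatorial sphere extends to a map of `X` to the suspension,
taking the two sides `Xm` and `⋃ i, P i` of `X₀` to the two hemispheres. -/
lemma exists_isBoundaryCover_suspension [NormalSpace X] {X₀ : Set X} (hX₀ : IsClosed X₀) {n : ℕ}
    {W : Fin (n + 1) → Set X₀} (hW : IsBoundaryCover W) {Xm : Set X} {P : Fin (n + 1) → Set X}
    {G : Fin (n + 2) → Set X} (hXm : IsOpen Xm) (hP : ∀ i, IsOpen (P i)) (hG : ∀ i, IsOpen (G i))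
    (hdisj : ∀ i, Disjoint Xm (P i)) (hcov : ∀ x ∉ X₀, x ∈ Xm ∨ ∃ i, x ∈ P i)
    (hXmG : Xm ⊆ G 0) (hPG : ∀ i, P i ⊆ G i.succ)
    (hWG : ∀ i, ∀ x ∈ W i, ↑x ∈ G i.succ) :
    ∃ W' : Fin (n + 2) → Set X, IsBoundaryCover W' ∧ ∀ i, W' i ⊆ G i := by
  obtain ⟨O, hO, hWO, hOempty⟩ := exists_open_extension hX₀ hW
  refine ⟨Fin.cons Xm fun i => O i ∩ G i.succ ∪ P i, ⟨Fin.cases hXm fun i =>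
    ((hO i).inter (hG _)).union (hP i), fun x => ?_, fun x => ?_⟩, Fin.cases hXmG fun i =>
    union_subset inter_subset_right (hPG i)⟩
  · by_cases hx : x ∈ X₀
    · obtain ⟨i, hiW, hiO⟩ := hWO ⟨x, hx⟩
      exact ⟨i.succ, Or.inl ⟨hiO, hWG i _ hiW⟩⟩
    · rcases hcov x hx with h | ⟨i, hi⟩
      · exact ⟨0, h⟩
      · exact ⟨i.succ, Or.inr hi⟩
  · by_cases hx : x ∈ Xm
    · obtain ⟨i, hi⟩ := hOempty x
      exact ⟨i.succ, fun h => h.elim (fun h => hi h.1) (disjoint_left.1 (hdisj i) hx)⟩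
    · exact ⟨0, hx⟩

end Gluing

/-- Collapses the label `0` to the first of the remaining labels. -/
def dropZero {m : ℕ} : Fin (m + 3) → Fin (m + 2) := Fin.cases 0 id

lemma succ_dropZero {m : ℕ} {i : Fin (m + 3)} (hi : i ≠ 0) : (dropZero i).succ = i := by
  obtain ⟨j, rfl⟩ := Fin.exists_succ_eq.2 hi
  rfl

namespace LabelledCover

universe u v

section Collar

variable {m : ℕ} {X : Type u} {V : Type v} [TopologicalSpace X]

/-- A set of vertices containing all neighbours of `I`, to which the labels still give the
cocycle. -/
structure IsCollar (H : LabelledCover m X V) (N : Set V) : Prop where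
  subset : H.I ⊆ N
  subset_of_exists_mem : ∀ σ ∈ nerve H.U, (∃ v ∈ σ, v ∈ H.I) → ↑σ ⊆ N
  standard : ∀ s ∈ tuplesIn (nerve H.U), (∀ j, s j ∈ N) → H.w s = kappa m (H.l ∘ s)

/-- The labelled cover obtained by subdividing and pulling back along a vertex map that prefers
the vertices in `I`. -/
def subdivide [Nonempty V] (H : LabelledCover m X V) {U' : Finset V → Set X}
    (hU' : IsSubdivision H.U U') : LabelledCover m X (Finset V) where
  U := U'
  isOpen := hU'.isOpen
  covers := hU'.covers
  card_le _ hc := card_le_of_mem_sd H.card_le (hU'.nerve_subset hc)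
  I := {σ | σ.Nonempty ∧ ↑σ ⊆ H.I}
  l := H.l ∘ pick (· ∈ H.I)
  exists_ne c hc hI := by
    rcases c.eq_empty_or_nonempty with rfl | hne
    · exact ⟨0, by simp⟩
    · have hflag := hU'.nerve_subset hc
      obtain ⟨τ, hτ, htop⟩ := exists_top hflag.2 hne
      obtain ⟨i, hi⟩ := H.exists_ne τ (hflag.1 τ hτ).1 (hI hτ).2
      exact ⟨i, fun σ hσ => hi _ (htop σ hσ (pick_mem (hflag.1 σ hσ).2))⟩
  w s := H.w (pick (· ∈ H.I) ∘ s)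
  cocycle s hs := by
    rw [coboundary_comp]
    exact H.cocycle (pick_comp_mem_tuplesIn (tuplesIn_mono hU'.nerve_subset hs))
  standard s hs hI := by
    exact H.standard _ (pick_comp_mem_tuplesIn (tuplesIn_mono hU'.nerve_subset hs)) fun j =>
      (hI j).2 (pick_mem (hI j).1)

lemma isCollar_subdivide [Nonempty V] (H : LabelledCover m X V) {U' : Finset V → Set X}
    (hU' : IsSubdivision H.U U') : (H.subdivide hU').IsCollar {σ | ∃ v ∈ σ, v ∈ H.I} where
  subset _ hσ := hσ.1.imp fun _ hv => ⟨hv, hσ.2 hv⟩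
  subset_of_exists_mem c hc := by
    rintro ⟨σ, hσ, hσI⟩ ρ hρ
    have hflag := hU'.nerve_subset hc
    rcases hflag.2.total hσ hρ with h | h
    · obtain ⟨v, hv⟩ := hσI.1
      exact ⟨v, h hv, hσI.2 hv⟩
    · obtain ⟨v, hv⟩ := (hflag.1 ρ hρ).2
      exact ⟨v, hv, hσI.2 (h hv)⟩
  standard s hs hN :=
    H.standard _ (pick_comp_mem_tuplesIn (tuplesIn_mono hU'.nerve_subset hs)) fun j =>
      pick_spec (hN j)

lemma Solvable.of_subdivide [Nonempty V] {H : LabelledCover m X V} {U' : Finset V → Set X}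
    {hU' : IsSubdivision H.U U'} (h : (H.subdivide hU').Solvable) : H.Solvable := by
  obtain ⟨W, hW, hWl⟩ := h
  refine ⟨W, hW, fun i x hx => ?_⟩
  obtain ⟨σ, hσ, hl⟩ := hWl i hx
  by_contra hx'
  rw [notMem_labelled] at hx'
  have hmem (v : V) (hv : v ∈ σ) := hx' v (hU'.mem hσ hv)
  exact (hmem _ (pick_mem (hU'.nonempty hσ))).2 (hl ⟨hU'.nonempty hσ, fun v hv => (hmem v hv).1⟩)

end Collar

section Suspension

variable {m : ℕ} {X : Type u} {V : Type v} [TopologicalSpace X]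

/-- The simplices of the collar `N` away from the label `0`. -/
def away (H : LabelledCover (m + 1) X V) (N : Set V) : Set (Finset V) :=
  {σ | ∀ v ∈ σ, v ∈ N ∧ H.l v ≠ 0}

/-- The barycentres on the side opposite to the label `0`. The simplices of dimension at most `m`
are added away from `I`, so that the simplices on the other side have dimension at least
`m + 1`. -/
def hemisphere (H : LabelledCover (m + 1) X V) (N : Set V) : Set (Finset V) :=
  H.away N ∪ {σ | σ.card ≤ m + 1 ∧ ∀ v ∈ σ, v ∈ H.I → H.l v ≠ 0}

/-- A vertex map from the subdivision which prefers the label `0`. -/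
def vtx [Nonempty V] (H : LabelledCover (m + 1) X V) : Finset V → V :=
  pick (H.l · = 0)

/-- The labels on the equator, read off on the hemisphere away from the label `0`. -/
def equatorLabel [Nonempty V] (H : LabelledCover (m + 1) X V) (N : Set V)
    (c : Finset (Finset V)) : Fin (m + 2) :=
  dropZero (H.l (H.vtx (pick (· ∈ H.hemisphere N) c)))

variable {H : LabelledCover (m + 1) X V} {N : Set V} {σ : Finset V} {c : Finset (Finset V)}

lemma IsCollar.mem_away (hN : H.IsCollar N) (hI : ↑σ ⊆ H.I) (hσ : σ ∈ H.hemisphere N) :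
    σ ∈ H.away N :=
  hσ.elim id fun h v hv => ⟨hN.subset (hI hv), h.2 v hv (hI hv)⟩

lemma IsCollar.exists_l_eq_zero (hN : H.IsCollar N) (hI : ↑σ ⊆ H.I)
    (hσ : σ ∉ H.hemisphere N) : ∃ v ∈ σ, H.l v = 0 := by
  by_contra! h
  exact hσ (Or.inl fun v hv => ⟨hN.subset (hI hv), h v hv⟩)

variable [Nonempty V]

lemma coboundary_comp_vtx (H : LabelledCover (m + 1) X V) :
    EqOn (δ fun s => H.w (H.vtx ∘ s)) 0 (tuplesIn (sd (nerve H.U))) := fun s hs => by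
  rw [coboundary_comp]
  exact H.cocycle (pick_comp_mem_tuplesIn hs)

/-- The primitive on the first hemisphere: near `I` it is the standard one, and the remaining
flags have too few vertices to obstruct its extension. -/
lemma IsCollar.exists_primitive_hemisphere [Finite V] (hN : H.IsCollar N) :
    ∃ β : (Fin (m + 1) → Finset V) → ℤ,
      EqOn β (fun s => kappa m (dropZero ∘ H.l ∘ H.vtx ∘ s))
        (tuplesIn (fullSubcomplex (sd (nerve H.U)) (H.away N))) ∧
      EqOn (δ β) (fun s => H.w (H.vtx ∘ s))
        (tuplesIn (fullSubcomplex (sd (nerve H.U)) (H.hemisphere N))) := by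
  refine exists_extend_primitive (isLowerSet_fullSubcomplex (isLowerSet_sd _) _)
    (isLowerSet_fullSubcomplex (isLowerSet_sd _) _) (fun c hc hcM => ?_)
    (H.coboundary_comp_vtx.mono (tuplesIn_mono fun _ => And.left)) fun s hs => ?_
  · have hne : c.Nonempty := Finset.nonempty_iff_ne_empty.2 fun h => hcM ⟨hc.1, by simp [h]⟩
    obtain ⟨τ, hτ, htop⟩ := exists_top hc.1.2 hne
    have hτ_away : τ ∉ H.away N := fun h =>
      hcM ⟨hc.1, fun σ hσ v hv => h v (htop σ hσ hv)⟩
    exact card_le_of_isChain (a := 1) hc.1.2 fun σ hσ => ⟨Finset.card_pos.2 (hc.1.1 σ hσ).2,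
      (Finset.card_le_card (htop σ hσ)).trans ((hc.2 hτ).resolve_left hτ_away).1⟩
  · have hs' := pick_comp_mem_tuplesIn (P := (H.l · = 0)) (tuplesIn_mono (fun _ => And.left) hs)
    obtain ⟨c, hc, hsc⟩ := hs
    have hl (j) : H.vtx (s j) ∈ N ∧ H.l (H.vtx (s j)) ≠ 0 :=
      hc.2 (hsc j) _ (pick_mem (hc.1.1 _ (hsc j)).2)
    have e : H.l ∘ H.vtx ∘ s = Fin.succ ∘ (dropZero ∘ H.l ∘ H.vtx ∘ s) :=
      funext fun j => (succ_dropZero (hl j).2).symm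
    calc δ (fun s => kappa m (dropZero ∘ H.l ∘ H.vtx ∘ s)) s
        = δ (kappa m) (dropZero ∘ H.l ∘ H.vtx ∘ s) :=
          coboundary_comp (dropZero ∘ H.l ∘ H.vtx) (kappa m) s
      _ = kappa (m + 1) (H.l ∘ H.vtx ∘ s) := by rw [← kappa_comp_succ, ← e]
      _ = H.w (H.vtx ∘ s) := (hN.standard _ hs' fun j => (hl j).1).symm

/-- The primitive on the second hemisphere: it vanishes near the label `0`, and the remaining
flags consist of simplices of dimension at least `m + 1`, so they have at most two members. -/
lemma IsCollar.exists_primitive_compl_hemisphere [Finite V] (hm : 1 ≤ m) (hN : H.IsCollar N) :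
    ∃ β : (Fin (m + 1) → Finset V) → ℤ,
      EqOn β 0 (tuplesIn (fullSubcomplex (sd (nerve H.U)) {σ | ↑σ ⊆ N ∧ ∃ v ∈ σ, H.l v = 0})) ∧
      EqOn (δ β) (fun s => H.w (H.vtx ∘ s))
        (tuplesIn (fullSubcomplex (sd (nerve H.U)) (H.hemisphere N)ᶜ)) := by
  refine exists_extend_primitive (isLowerSet_fullSubcomplex (isLowerSet_sd _) _)
    (isLowerSet_fullSubcomplex (isLowerSet_sd _) _) (fun c hc hcM => ?_)
    (H.coboundary_comp_vtx.mono (tuplesIn_mono fun _ => And.left)) fun s hs => ?_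
  · refine (card_le_of_isChain (a := m + 2) (b := m + 3) hc.1.2 fun ρ hρ => ⟨?_,
      H.card_le ρ (hc.1.1 ρ hρ).1⟩).trans (by lia)
    obtain ⟨τ, hτ, hbot⟩ := exists_bot hc.1.2 ⟨ρ, hρ⟩
    by_contra! hlt
    have hτ_card : τ.card ≤ m + 1 := (Finset.card_le_card (hbot ρ hρ)).trans (by lia)
    obtain ⟨v, hv, hvI, hv0⟩ : ∃ v ∈ τ, v ∈ H.I ∧ H.l v = 0 := by
      by_contra! h
      exact hc.2 hτ (Or.inr ⟨hτ_card, h⟩)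
    exact hcM ⟨hc.1, fun σ hσ =>
      ⟨hN.subset_of_exists_mem σ (hc.1.1 σ hσ).1 ⟨v, hbot σ hσ hv, hvI⟩, v, hbot σ hσ hv, hv0⟩⟩
  · have hs' := pick_comp_mem_tuplesIn (P := (H.l · = 0)) (tuplesIn_mono (fun _ => And.left) hs)
    obtain ⟨c, hc, hsc⟩ := hs
    have hvtx (j) : H.vtx (s j) ∈ N := (hc.2 (hsc j)).1 (pick_mem_of_exists (hc.2 (hsc j)).2)
    have hl (j) : H.l (H.vtx (s j)) = 0 := pick_spec (hc.2 (hsc j)).2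
    rw [map_zero]
    exact ((hN.standard _ hs' hvtx).trans (kappa_eq_zero (i := 0) (hl 0))).symm

lemma IsCollar.exists_l_eq_succ_equatorLabel (hN : H.IsCollar N)
    (hc : ∃ σ ∈ c, σ ∈ H.hemisphere N) (hI : ∀ σ ∈ c, σ.Nonempty ∧ ↑σ ⊆ H.I) :
    ∃ σ ∈ c, ∃ v ∈ σ, H.l v = (H.equatorLabel N c).succ := by
  have hσ := pick_mem_of_exists hc
  have hv : H.vtx _ ∈ _ := pick_mem (hI _ hσ).1
  exact ⟨_, hσ, _, hv, (succ_dropZero (hN.mem_away (hI _ hσ).2 (pick_spec hc) _ hv).2).symm⟩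

lemma IsCollar.exists_equatorLabel_ne (hN : H.IsCollar N) {C : Finset (Finset (Finset V))}
    (hC : C ∈ sd (separating (sd (nerve H.U)) (H.hemisphere N)))
    (hI : ∀ c ∈ C, ∀ σ ∈ c, ↑σ ⊆ H.I) : ∃ i, ∀ c ∈ C, H.equatorLabel N c ≠ i := by
  rcases C.eq_empty_or_nonempty with rfl | hne
  · exact ⟨0, by simp⟩
  obtain ⟨c, hc, hctop⟩ := exists_top hC.2 hne
  obtain ⟨⟨hcF, -, ρ, hρ, hρT⟩, -⟩ := hC.1 c hc
  obtain ⟨τ, hτ, htop⟩ := exists_top hcF.2 ⟨ρ, hρ⟩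
  obtain ⟨i, hi⟩ := H.exists_ne τ (hcF.1 τ hτ).1 (hI c hc τ hτ)
  obtain ⟨v, hv, hv0⟩ := hN.exists_l_eq_zero (hI c hc ρ hρ) hρT
  obtain ⟨i, rfl⟩ := Fin.exists_succ_eq.2 fun h : i = 0 => hi v (htop ρ hρ hv) (hv0.trans h.symm)
  refine ⟨i, fun c' hc' hl => ?_⟩
  obtain ⟨σ, hσ, u, hu, hul⟩ := hN.exists_l_eq_succ_equatorLabel (hC.1 c' hc').1.2.1 fun σ hσ =>
    ⟨(hcF.1 σ (hctop c' hc' hσ)).2, hI c' hc' σ hσ⟩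
  exact hi u (htop σ (hctop c' hc' hσ) hu) (hul.trans (hl ▸ rfl))

lemma IsCollar.connecting_eq_kappa (hN : H.IsCollar N) {βp βm : (Fin (m + 1) → Finset V) → ℤ}
    (hp : EqOn βp (fun s => kappa m (dropZero ∘ H.l ∘ H.vtx ∘ s))
      (tuplesIn (fullSubcomplex (sd (nerve H.U)) (H.away N))))
    (hm : EqOn βm 0
      (tuplesIn (fullSubcomplex (sd (nerve H.U)) {σ | ↑σ ⊆ N ∧ ∃ v ∈ σ, H.l v = 0})))
    {s : Fin (m + 1) → Finset (Finset V)}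
    (hs : s ∈ tuplesIn (sd (separating (sd (nerve H.U)) (H.hemisphere N))))
    (hI : ∀ j, ∀ σ ∈ s j, ↑σ ⊆ H.I) :
    connecting (H.hemisphere N) βp βm (fun s => H.w (H.vtx ∘ s)) s =
      kappa m (H.equatorLabel N ∘ s) := by
  obtain ⟨j₀, hj₀, hsj⟩ := exists_top_of_mem_tuplesIn_sd_separating hs
  have plus : βp (pick (· ∈ H.hemisphere N) ∘ s) = kappa m (H.equatorLabel N ∘ s) :=
    hp (pick_comp_mem_tuplesIn_fullSubcomplex (isLowerSet_sd _) hj₀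
      (fun j => ⟨(hsj j).1, (hsj j).2.1⟩) fun σ hσ hT => hN.mem_away (hI j₀ σ hσ) hT)
  have minus : βm (pick (· ∉ H.hemisphere N) ∘ s) = 0 :=
    hm (pick_comp_mem_tuplesIn_fullSubcomplex (isLowerSet_sd _) hj₀
      (fun j => ⟨(hsj j).1, (hsj j).2.2⟩) fun σ hσ hT =>
        ⟨(hI j₀ σ hσ).trans hN.subset, hN.exists_l_eq_zero (hI j₀ σ hσ) hT⟩)
  have prism_zero : prism (pick (· ∉ H.hemisphere N)) (pick (· ∈ H.hemisphere N))
      (fun s => H.w (H.vtx ∘ s)) s = 0 := by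
    refine prism_eq_zero _ _ _ _ fun t ht0 ht => ?_
    have mem_top (j) : t j ∈ s j₀ := by
      obtain ⟨i, hi | hi⟩ := ht j
      · exact hi ▸ (hsj i).1 (pick_mem_of_exists (hsj i).2.2)
      · exact hi ▸ (hsj i).1 (pick_mem_of_exists (hsj i).2.1)
    obtain ⟨i, hi⟩ := ht0
    have label_zero : H.l (H.vtx (t 0)) = 0 := pick_spec
      (hN.exists_l_eq_zero (hI j₀ _ (mem_top 0)) (hi ▸ pick_spec (hsj i).2.2))
    exact (hN.standard _ (pick_comp_mem_tuplesIn ⟨s j₀, hj₀, mem_top⟩) fun j =>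
      hN.subset (hI j₀ _ (mem_top j) (pick_mem (hj₀.1 _ (mem_top j)).2))).trans
        (kappa_eq_zero (i := 0) label_zero)
  simp only [connecting, Pi.sub_apply, plus, minus, prism_zero, sub_zero]

end Suspension

section Equator

variable {m : ℕ} {X : Type u} {V : Type v} [TopologicalSpace X] {H : LabelledCover (m + 1) X V}
  {N : Set V} {U' : Finset V → Set X} {U₂ : Finset (Finset V) → Set X}

lemma nerve_equator_subset (hU' : IsSubdivision H.U U') (hU₂ : IsSubdivision U' U₂)
    (T : Set (Finset V)) : nerve (fun c => (Subtype.val ⁻¹' U₂ c : Set (equator U₂ T))) ⊆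
      sd (separating (sd (nerve H.U)) T) :=
  fun _ ⟨x, hx⟩ => ⟨fun c hc => ⟨⟨hU'.nerve_subset (hU₂.mem_nerve (hx c hc)), x.2 c (hx c hc)⟩,
    hU₂.nonempty (hx c hc)⟩, fun c hc c' hc' _ => hU₂.total (hx c hc) (hx c' hc')⟩

variable {c : Finset (Finset V)} {x : X}

lemma l_ne_of_notMem_labelled (hU' : IsSubdivision H.U U') (hU₂ : IsSubdivision U' U₂)
    (hc : x ∈ U₂ c) {i : Fin (m + 3)} (hx : x ∉ H.labelled i) {σ : Finset V} (hσ : σ ∈ c) :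
    σ.Nonempty ∧ ↑σ ⊆ H.I ∧ ∀ v ∈ σ, H.l v ≠ i := by
  have hxσ := hU₂.mem hc hσ
  have h (v : V) (hv : v ∈ σ) := notMem_labelled.1 hx v (hU'.mem hxσ hv)
  exact ⟨hU'.nonempty hxσ, fun v hv => (h v hv).1, fun v hv => (h v hv).2⟩

lemma IsCollar.mem_labelled_zero (hN : H.IsCollar N) (hU' : IsSubdivision H.U U')
    (hU₂ : IsSubdivision U' U₂) (hx : x ∈ U₂ c) (hc : ∃ σ ∈ c, σ ∉ H.hemisphere N) :
    x ∈ H.labelled 0 := by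
  by_contra hx0
  obtain ⟨σ, hσ, hσT⟩ := hc
  obtain ⟨-, hσI, hl⟩ := l_ne_of_notMem_labelled hU' hU₂ hx hx0 hσ
  obtain ⟨v, hv, hv0⟩ := hN.exists_l_eq_zero hσI hσT
  exact hl v hv hv0

variable [Nonempty V]

/-- The extension problem on the equator, one dimension lower. -/
def IsCollar.equatorCover (hN : H.IsCollar N) (hU' : IsSubdivision H.U U')
    (hU₂ : IsSubdivision U' U₂) {βp βm : (Fin (m + 1) → Finset V) → ℤ}
    (hp₀ : EqOn βp (fun s => kappa m (dropZero ∘ H.l ∘ H.vtx ∘ s))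
      (tuplesIn (fullSubcomplex (sd (nerve H.U)) (H.away N))))
    (hp : EqOn (δ βp) (fun s => H.w (H.vtx ∘ s))
      (tuplesIn (fullSubcomplex (sd (nerve H.U)) (H.hemisphere N))))
    (hm₀ : EqOn βm 0
      (tuplesIn (fullSubcomplex (sd (nerve H.U)) {σ | ↑σ ⊆ N ∧ ∃ v ∈ σ, H.l v = 0})))
    (hm : EqOn (δ βm) (fun s => H.w (H.vtx ∘ s))
      (tuplesIn (fullSubcomplex (sd (nerve H.U)) (H.hemisphere N)ᶜ))) :
    LabelledCover m (equator U₂ (H.hemisphere N)) (Finset (Finset V)) where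
  U c := Subtype.val ⁻¹' U₂ c
  isOpen c := (hU₂.isOpen c).preimage continuous_subtype_val
  covers x := hU₂.covers x
  card_le _ hC := card_le_of_mem_sd_separating (fun _ => card_le_of_mem_sd H.card_le)
    (nerve_equator_subset hU' hU₂ _ hC)
  I := {c | ∀ σ ∈ c, (σ : Set V) ⊆ H.I}
  l := H.equatorLabel N
  exists_ne _ hC hI := hN.exists_equatorLabel_ne (nerve_equator_subset hU' hU₂ _ hC)
    fun _ hc => hI hc
  w := connecting (H.hemisphere N) βp βm fun s => H.w (H.vtx ∘ s)
  cocycle := (coboundary_connecting (isLowerSet_sd _) H.coboundary_comp_vtx hp hm).mono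
    (tuplesIn_mono (nerve_equator_subset hU' hU₂ _))
  standard _ hs hI := hN.connecting_eq_kappa hp₀ hm₀
    (tuplesIn_mono (nerve_equator_subset hU' hU₂ _) hs) hI

lemma IsCollar.mem_labelled_succ (hN : H.IsCollar N) (hU' : IsSubdivision H.U U')
    (hU₂ : IsSubdivision U' U₂) (hx : x ∈ U₂ c) (hc : ∃ σ ∈ c, σ ∈ H.hemisphere N)
    {i : Fin (m + 2)} (hi : (∀ σ ∈ c, ↑σ ⊆ H.I) → H.equatorLabel N c = i) :
    x ∈ H.labelled i.succ := by
  by_contra hxi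
  have h {σ} (hσ : σ ∈ c) := l_ne_of_notMem_labelled hU' hU₂ hx hxi hσ
  obtain ⟨σ, hσ, v, hv, hl⟩ := hN.exists_l_eq_succ_equatorLabel hc fun σ hσ =>
    ⟨(h hσ).1, (h hσ).2.1⟩
  exact (h hσ).2.2 v hv (hl.trans (congrArg Fin.succ (hi fun σ hσ => (h hσ).2.1)))

lemma IsCollar.solvable_of_equator [NormalSpace X] (hN : H.IsCollar N)
    (hU' : IsSubdivision H.U U') (hU₂ : IsSubdivision U' U₂)
    {W : Fin (m + 2) → Set (equator U₂ (H.hemisphere N))} (hW : IsBoundaryCover W)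
    (hWl : ∀ i, ∀ x ∈ W i, ∃ c, ↑x ∈ U₂ c ∧
      ((∀ σ ∈ c, ↑σ ⊆ H.I) → H.equatorLabel N c = i)) : H.Solvable := by
  refine exists_isBoundaryCover_suspension (isClosed_equator hU₂.isOpen _) hW
    (Xm := {x | ∃ c, x ∈ U₂ c ∧ ∀ σ ∈ c, σ ∉ H.hemisphere N})
    (P := fun i => {x | ∃ c, x ∈ U₂ c ∧ (∀ σ ∈ c, σ ∈ H.hemisphere N) ∧ H.equatorLabel N c = i})
    ?_ (fun i => ?_) H.isOpen_labelled (fun i => ?_) (fun x hx => ?_) ?_ (fun i => ?_)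
    fun i x hx => ?_
  · simp only [ofPred_exists, ofPred_and]
    exact isOpen_iUnion fun c => (hU₂.isOpen c).inter isOpen_const
  · simp only [ofPred_exists, ofPred_and]
    exact isOpen_iUnion fun c => (hU₂.isOpen c).inter (isOpen_const.inter isOpen_const)
  · refine disjoint_left.2 fun x ⟨c, hc, hcm⟩ ⟨c', hc', hcp, _⟩ => ?_
    rcases hU₂.total hc hc' with h | h
    · obtain ⟨σ, hσ⟩ := hU₂.nonempty hc
      exact hcm σ hσ (hcp σ (h hσ))
    · obtain ⟨σ, hσ⟩ := hU₂.nonempty hc'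
      exact hcm σ (h hσ) (hcp σ hσ)
  · simp only [equator, mem_ofPred_eq, not_forall, not_and_or] at hx
    obtain ⟨c, hc, h | h⟩ := hx
    · exact Or.inl ⟨c, hc, fun σ hσ hσT => h ⟨σ, hσ, hσT⟩⟩
    · exact Or.inr ⟨_, c, hc, fun σ hσ => by_contra fun hσT => h ⟨σ, hσ, hσT⟩, rfl⟩
  · rintro x ⟨c, hc, hcm⟩
    obtain ⟨σ, hσ⟩ := hU₂.nonempty hc
    exact hN.mem_labelled_zero hU' hU₂ hc ⟨σ, hσ, hcm σ hσ⟩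
  · rintro x ⟨c, hc, hcp, rfl⟩
    obtain ⟨σ, hσ⟩ := hU₂.nonempty hc
    exact hN.mem_labelled_succ hU' hU₂ hc ⟨σ, hσ, hcp σ hσ⟩ fun _ => rfl
  · obtain ⟨c, hc, hci⟩ := hWl i x hx
    exact hN.mem_labelled_succ hU' hU₂ hc (x.2 c hc).1 hci

lemma IsCollar.solvable [NormalSpace X] [Finite V] (hm : 1 ≤ m) (hN : H.IsCollar N)
    (ih : ∀ {Y : Type u} {V : Type v} [TopologicalSpace Y] [NormalSpace Y] [Finite V]
      (H : LabelledCover m Y V), H.Solvable) : H.Solvable := by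
  obtain ⟨U', hU'⟩ := exists_isSubdivision H.isOpen H.covers
  obtain ⟨U₂, hU₂⟩ := exists_isSubdivision hU'.isOpen hU'.covers
  obtain ⟨βp, hp₀, hp⟩ := hN.exists_primitive_hemisphere
  obtain ⟨βm, hm₀, hm⟩ := hN.exists_primitive_compl_hemisphere hm
  have : NormalSpace (equator U₂ (H.hemisphere N)) :=
    (isClosed_equator hU₂.isOpen _).isClosedEmbedding_subtypeVal.normalSpace
  obtain ⟨W, hW, hWl⟩ := ih (hN.equatorCover hU' hU₂ hp₀ hp hm₀ hm)
  exact hN.solvable_of_equator hU' hU₂ hW hWl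

end Equator

/-- The extension theorem of Hopf: the cohomological obstruction is the only one. -/
theorem solvable {m : ℕ} {X : Type u} {V : Type v} [TopologicalSpace X] [NormalSpace X] [Finite V]
    (H : LabelledCover m X V) : H.Solvable := by
  induction m generalizing X V with
  | zero => exact H.solvable_zero
  | succ m ih =>
    rcases isEmpty_or_nonempty X with hX | ⟨⟨x⟩⟩
    · exact ⟨fun _ => ∅, ⟨fun _ => isOpen_empty, hX.elim, hX.elim⟩, fun _ => empty_subset _⟩
    · rcases Nat.eq_zero_or_pos m with rfl | hm
      · exact H.solvable_one
      · have : Nonempty V := (H.covers x).nonempty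
        obtain ⟨U', hU'⟩ := exists_isSubdivision H.isOpen H.covers
        exact ((H.isCollar_subdivide hU').solvable hm fun H => ih H).of_subdivide

end LabelledCover

section CoveringDimension

universe u

variable {X : Type*} {n : ℕ}

section OnePointCover

/-- The cover of the one-point compactification of `B` obtained by restricting a cover of `X` to
`B`, and adding the complement of `L` to the exceptional member. -/
def onePointCover {ι : Type*} {B : Set X} (V : Option ι → Set X) (L : Set B) :
    Option ι → Set (OnePoint B) := fun i =>
  (↑) '' (Subtype.val ⁻¹' V i : Set B) ∪ i.elim ((↑) '' L)ᶜ fun _ => ∅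

variable {ι : Type*} {B : Set X} {V : Option ι → Set X} {L : Set B}

lemma exists_mem_onePointCover (hV : ∀ x, ∃ i, x ∈ V i) (y : OnePoint B) :
    ∃ i, y ∈ onePointCover V L i := by
  by_cases hy : y ∈ ((↑) '' L : Set (OnePoint B))
  · obtain ⟨b, -, rfl⟩ := hy
    exact (hV b).imp fun i hi => Or.inl ⟨b, hi, rfl⟩
  · exact ⟨none, Or.inr hy⟩

lemma card_le_of_mem_nerve_onePointCover (hVL : ∀ i, ∀ b : B, ↑b ∈ V (some i) → b ∈ L)
    (hV : ∀ σ ∈ nerve V, σ.card ≤ n + 1) {σ : Finset (Option ι)}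
    (hσ : σ ∈ nerve (onePointCover V L)) : σ.card ≤ n + 1 := by
  obtain ⟨y, hy⟩ := hσ
  by_cases hyL : y ∈ ((↑) '' L : Set (OnePoint B))
  · obtain ⟨b, hb, rfl⟩ := hyL
    refine hV σ ⟨b, fun i hi => (hy i hi).elim (fun ⟨b', hb', h⟩ =>
      OnePoint.coe_injective h ▸ hb') fun h => ?_⟩
    rcases i with _ | i
    · exact absurd ⟨b, hb, rfl⟩ h
    · exact h.elim
  · have subset_none : σ ⊆ {none} := fun i hi => by
      rcases i with _ | i
      · exact Finset.mem_singleton_self _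
      · obtain ⟨b, hb, rfl⟩ | h := hy _ hi
        · exact absurd ⟨b, hVL i b hb, rfl⟩ hyL
        · exact h.elim
    exact (Finset.card_le_card subset_none).trans (by simp)

variable [TopologicalSpace X]

lemma isOpen_onePointCover (hV : ∀ i, IsOpen (V i)) (hLc : IsClosed L) (hL : IsCompact L)
    (i : Option ι) : IsOpen (onePointCover V L i) :=
  (OnePoint.isOpenEmbedding_coe.isOpenMap _ ((hV i).preimage continuous_subtype_val)).union <| by
    rcases i with _ | _
    · exact OnePoint.isOpen_compl_image_coe.2 ⟨hLc, hL⟩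
    · exact isOpen_empty

end OnePointCover

variable [TopologicalSpace X]

lemma exists_precise_refinement (h : CovDimLE X n) {ι : Type*} {U : ι → Set X}
    (hU : ∀ i, IsOpen (U i)) (hcov : ∀ x, ∃ i, x ∈ U i) :
    ∃ V : ι → Set X, (∀ i, IsOpen (V i)) ∧ (∀ x, ∃ i, x ∈ V i) ∧ (∀ i, V i ⊆ U i) ∧
      ∀ σ ∈ nerve V, σ.card ≤ n + 1 := by
  obtain ⟨V, hVo, hVcov, hVU, hcard⟩ := h (range U) (forall_mem_range.2 hU)
    (eq_univ_of_forall fun x => by simpa using hcov x)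
  have exists_index (v : V) : ∃ i, ↑v ⊆ U i := by simpa using hVU v v.2
  choose r hr using exists_index
  refine ⟨fun i => ⋃ v : V, ⋃ _ : r v = i, ↑v, fun i => isOpen_iUnion fun v =>
    isOpen_iUnion fun _ => hVo v v.2, fun x => ?_, fun i => iUnion₂_subset ?_, ?_⟩
  · obtain ⟨v, hv, hx⟩ : x ∈ ⋃₀ V := hVcov ▸ mem_univ x
    exact ⟨r ⟨v, hv⟩, mem_iUnion₂.2 ⟨⟨v, hv⟩, rfl, hx⟩⟩
  · rintro v rfl
    exact hr v
  · rintro σ ⟨x, hx⟩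
    have exists_member (i : σ) : ∃ v : V, r v = i ∧ x ∈ (v : Set X) := by
      simpa only [mem_iUnion, exists_prop] using hx i i.2
    choose f hf hxf using exists_member
    have f_injective : Injective f := fun i j hij => Subtype.ext (by rw [← hf i, ← hf j, hij])
    have := hcard (Finset.univ.map ⟨_, Subtype.val_injective.comp f_injective⟩)
      (fun v hv => by
        obtain ⟨i, -, rfl⟩ := Finset.mem_map.1 (Finset.mem_coe.1 hv)
        exact (f i).2)
      ⟨x, fun v hv => by
        obtain ⟨i, -, rfl⟩ := Finset.mem_map.1 (Finset.mem_coe.1 hv)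
        exact hxf i⟩
    rwa [Finset.card_map, Finset.card_univ, Fintype.card_coe] at this

lemma covDimLE_of_exists_refinement {Y : Type u} [TopologicalSpace Y]
    (h : ∀ U : Set (Set Y), (∀ u ∈ U, IsOpen u) → ⋃₀ U = univ →
      ∃ (ι : Type u) (V : ι → Set Y), (∀ i, IsOpen (V i)) ∧ (∀ x, ∃ i, x ∈ V i) ∧
        (∀ i, ∃ u ∈ U, V i ⊆ u) ∧ ∀ σ ∈ nerve V, σ.card ≤ n + 1) : CovDimLE Y n := by
  intro U hU hcov
  obtain ⟨ι, V, hVo, hVcov, hVU, hcard⟩ := h U hU hcov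
  refine ⟨range V, forall_mem_range.2 hVo, ?_, forall_mem_range.2 hVU, fun T hT ⟨x, hx⟩ => ?_⟩
  · exact eq_univ_of_forall fun x => by simpa using hVcov x
  · choose f hf using fun v : T => hT v.2
    have f_injective : Injective f := fun v w hvw => Subtype.ext (by rw [← hf v, ← hf w, hvw])
    have := hcard (Finset.univ.map ⟨f, f_injective⟩) ⟨x, fun i hi => by
      obtain ⟨v, -, rfl⟩ := Finset.mem_map.1 hi
      exact hf v ▸ hx v v.2⟩
    rwa [Finset.card_map, Finset.card_univ, Fintype.card_coe] at this

lemma exists_refinement_of_isClosed (h : CovDimLE X n) {C : Set X} (hC : IsClosed C)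
    {ι : Type*} {U : ι → Set X} (hU : ∀ i, IsOpen (U i)) (hcov : ∀ x ∈ C, ∃ i, x ∈ U i) :
    ∃ V : Option ι → Set X, (∀ i, IsOpen (V i)) ∧ (∀ x, ∃ i, x ∈ V i) ∧ V none ⊆ Cᶜ ∧
      (∀ i, V (some i) ⊆ U i) ∧ ∀ σ ∈ nerve V, σ.card ≤ n + 1 := by
  obtain ⟨V, hVo, hVcov, hVU, hcard⟩ := exists_precise_refinement h
    (U := fun i : Option ι => i.elim Cᶜ U) (Option.rec hC.isOpen_compl hU) fun x => by
      by_cases hx : x ∈ C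
      · exact (hcov x hx).elim fun i hi => ⟨some i, hi⟩
      · exact ⟨none, hx⟩
  exact ⟨V, hVo, hVcov, hVU none, fun i => hVU (some i), hcard⟩

lemma covDimLE_of_isClosed (h : CovDimLE X n) {B : Set X} (hB : IsClosed B) : CovDimLE B n := by
  refine covDimLE_of_exists_refinement fun U hU hcov => ?_
  choose O hOo hO using fun u : U => isOpen_induced_iff.1 (hU u u.2)
  obtain ⟨V, hVo, hVcov, hV₀, hVO, hcard⟩ := exists_refinement_of_isClosed h hB hOo fun x hx => by
    obtain ⟨u, hu, hxu⟩ : (⟨x, hx⟩ : B) ∈ ⋃₀ U := hcov ▸ mem_univ _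
    exact ⟨⟨u, hu⟩, (hO ⟨u, hu⟩).ge hxu⟩
  refine ⟨U, fun u => Subtype.val ⁻¹' V (some u),
    fun u => (hVo _).preimage continuous_subtype_val, fun x => ?_,
    fun u => ⟨u, u.2, (preimage_mono (hVO u)).trans (hO u).le⟩, fun σ ⟨x, hx⟩ => ?_⟩
  · obtain ⟨_ | u, hu⟩ := hVcov x
    · exact absurd x.2 (hV₀ hu)
    · exact ⟨u, hu⟩
  · have := hcard (σ.map Embedding.some) ⟨x, fun i hi => by
      obtain ⟨u, hu, rfl⟩ := Finset.mem_map.1 hi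
      exact hx u hu⟩
    rwa [Finset.card_map] at this

lemma covDimLE_onePoint [T2Space X] (h : CovDimLE X n) {B : Set X} [LocallyCompactSpace B] :
    CovDimLE (OnePoint B) n := by
  refine covDimLE_of_exists_refinement fun U hU hcov => ?_
  obtain ⟨u₀, hu₀, h₀⟩ : OnePoint.infty ∈ ⋃₀ U := hcov ▸ mem_univ (OnePoint.infty (X := B))
  set K : Set B := (↑) ⁻¹' u₀ᶜ
  have hK : IsCompact K := ((OnePoint.isOpen_iff_of_mem h₀).1 (hU _ hu₀)).2
  obtain ⟨L, hL, hKL⟩ := exists_compact_superset hK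
  choose O hOo hO using fun u : U => isOpen_induced_iff.1
    (((hU u u.2).preimage OnePoint.continuous_coe).inter (isOpen_interior (s := L)))
  have mem_O {u : U} {b : B} : ↑b ∈ O u ↔ (b : OnePoint B) ∈ (u : Set (OnePoint B)) ∧
      b ∈ interior L := Set.ext_iff.1 (hO u) b
  obtain ⟨V, hVo, hVcov, hV₀, hVO, hcard⟩ := exists_refinement_of_isClosed h
    (hK.image continuous_subtype_val).isClosed hOo <| by
      rintro _ ⟨b, hb, rfl⟩
      obtain ⟨u, hu, hbu⟩ : (b : OnePoint B) ∈ ⋃₀ U := hcov ▸ mem_univ _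
      exact ⟨⟨u, hu⟩, mem_O.2 ⟨hbu, hKL hb⟩⟩
  refine ⟨Option U, onePointCover V L, isOpen_onePointCover hVo hL.isClosed hL,
    exists_mem_onePointCover hVcov, ?_, fun σ => card_le_of_mem_nerve_onePointCover
      (fun u b hb => interior_subset (mem_O.1 (hVO u hb)).2) hcard⟩
  rintro (_ | u)
  · refine ⟨u₀, hu₀, union_subset ?_ fun y hy => by_contra fun hyu => ?_⟩
    · rintro _ ⟨b, hb, rfl⟩
      exact by_contra fun hbu => hV₀ hb ⟨b, hbu, rfl⟩
    · induction y using OnePoint.rec with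
      | infty => exact hyu h₀
      | coe b => exact hy ⟨b, interior_subset (hKL hyu), rfl⟩
  · refine ⟨u, u.2, union_subset ?_ (empty_subset _)⟩
    rintro _ ⟨b, hb, rfl⟩
    exact (mem_O.1 (hVO u hb)).1

end CoveringDimension

section FineCovers

universe u

/-- The neighbourhood of `x` that avoids all members of the finite closed family `F` not
containing `x`. -/
def avoidingNhd {ι Y : Type*} (F : ι → Set Y) (x : Y) : Set Y :=
  {y | ∀ i, y ∈ F i → x ∈ F i}

/-- A finite open cover of order at most `n + 1` with a point in each member, whose stars refine
`U`. -/
structure IsPointedCover {ι Y : Type*} [TopologicalSpace Y] (U : Set (Set Y)) (n : ℕ)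
    (V : ι → Set Y) (p : ι → Y) : Prop where
  isOpen : ∀ i, IsOpen (V i)
  covers : ∀ x, ∃ i, x ∈ V i
  mem : ∀ i, p i ∈ V i
  exists_star_subset : ∀ x, ∃ u ∈ U, ∀ i, x ∈ V i → V i ⊆ u
  card_le : ∀ σ ∈ nerve V, σ.card ≤ n + 1

variable {Y : Type u} [TopologicalSpace Y]

lemma isOpen_avoidingNhd {ι : Type*} [Finite ι] {F : ι → Set Y} (hF : ∀ i, IsClosed (F i))
    (x : Y) : IsOpen (avoidingNhd F x) := by
  simp only [avoidingNhd, imp_iff_not_or, ofPred_forall]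
  exact isOpen_iInter_of_finite fun i => (hF i).isOpen_compl.union isOpen_const

lemma isOpenCover_range_avoidingNhd {ι : Type*} [Finite ι] {F : ι → Set Y}
    (hF : ∀ i, IsClosed (F i)) : AS.IsOpenCover (range (avoidingNhd F)) :=
  ⟨forall_mem_range.2 (isOpen_avoidingNhd hF),
    eq_univ_of_forall fun x => ⟨_, mem_range_self x, fun _ => id⟩⟩

variable [CompactSpace Y] [NormalSpace Y]

lemma exists_star_refinement {U : Set (Set Y)} (hU : AS.IsOpenCover U) :
    ∃ W : Y → Set Y, (∀ x, IsOpen (W x)) ∧ (∀ x, x ∈ W x) ∧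
      ∀ y, ∃ u ∈ U, ∀ x, y ∈ W x → W x ⊆ u := by
  obtain ⟨T, hTU, hTfin, hTcov⟩ := isCompact_univ.elim_finite_subcover_image (b := U) (c := id)
    hU.1 (by simp only [id, ← sUnion_eq_biUnion, hU.2, subset_refl])
  have : Finite T := hTfin
  obtain ⟨F, hFcov, hF, hFT⟩ := exists_iUnion_eq_closed_subset (u := fun t : T => (t : Set Y))
    (fun t => hU.1 t (hTU t.2)) (fun _ => toFinite _)
    (by rw [← sUnion_eq_iUnion, sUnion_eq_biUnion]; exact univ_subset_iff.1 hTcov)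
  refine ⟨fun x => {y | ∀ t : T, x ∈ F t → y ∈ (t : Set Y)} ∩ avoidingNhd F x, fun x => ?_,
    fun x => ⟨fun t ht => hFT t ht, fun _ => id⟩, fun y => ?_⟩
  · refine IsOpen.inter ?_ (isOpen_avoidingNhd hF x)
    simp only [ofPred_forall]
    exact isOpen_iInter_of_finite fun t => isOpen_iInter_of_finite fun _ => hU.1 t (hTU t.2)
  · obtain ⟨t, ht⟩ := mem_iUnion.1 (hFcov ▸ mem_univ y : y ∈ ⋃ t, F t)
    exact ⟨t, hTU t.2, fun x hx z hz => hz.1 t (hx.2 t ht)⟩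

lemma exists_isPointedCover {n : ℕ} (h : CovDimLE Y n) {U : Set (Set Y)}
    (hU : AS.IsOpenCover U) : ∃ (ι : Type u) (_ : Finite ι) (V : ι → Set Y) (p : ι → Y),
      IsPointedCover U n V p := by
  obtain ⟨W, hWo, hxW, hW⟩ := exists_star_refinement hU
  obtain ⟨V, hVo, hVcov, hVW, hcard⟩ := exists_precise_refinement h hWo fun x => ⟨x, hxW x⟩
  obtain ⟨T, hT⟩ := isCompact_univ.elim_finite_subcover V hVo fun x _ => mem_iUnion.2 (hVcov x)
  refine ⟨{i : T // (V i).Nonempty}, inferInstance, fun i => V i, fun i => i.2.some,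
    fun i => hVo _, fun x => ?_, fun i => i.2.some_mem, fun x => ?_, fun σ ⟨x, hx⟩ => ?_⟩
  · obtain ⟨i, hi, hx⟩ := mem_iUnion₂.1 (hT (mem_univ x))
    exact ⟨⟨⟨i, hi⟩, x, hx⟩, hx⟩
  · obtain ⟨u, hu, hux⟩ := hW x
    exact ⟨u, hu, fun i hi => (hVW _).trans (hux i (hVW _ hi))⟩
  · have := hcard (σ.map ((Embedding.subtype _).trans (Embedding.subtype _))) ⟨x, fun i hi => by
      obtain ⟨j, hj, rfl⟩ := Finset.mem_map.1 hi
      exact hx j hj⟩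
    rwa [Finset.card_map] at this

variable {A : Type*} [AddCommGroup A]

/-- On small tuples the map `x ↦ p (r x)`, which factors through the nerve of a fine cover, is
homotopic to the identity. So it suffices to find a primitive on the nerve. -/
theorem exists_sub_coboundary_mem_locZero {n m : ℕ} (h : CovDimLE Y n) (hnm : n ≤ m)
    {φ : AS.Cochain A Y (m + 1)} (hφ : δ φ ∈ AS.locZero A Y (m + 2)) :
    ∃ ψ : AS.Cochain A Y m, φ - δ ψ ∈ AS.locZero A Y (m + 1) := by
  obtain ⟨U, hU, hφ⟩ := hφ
  obtain ⟨ι, _, V, p, hV⟩ := exists_isPointedCover h hU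
  obtain ⟨F, hFcov, hF, hFV⟩ := exists_iUnion_eq_closed_subset hV.isOpen (fun _ => toFinite _)
    (eq_univ_of_forall fun x => mem_iUnion.2 (hV.covers x))
  choose r hr using fun x => mem_iUnion.1 (hFcov ▸ mem_univ x : x ∈ ⋃ i, F i)
  obtain ⟨β, -, hβ⟩ := exists_extend_primitive (isLowerSet_nerve V) isLowerSet_empty
    (w := fun s => φ (p ∘ s)) (β := 0) (fun σ hσ _ => (hV.card_le σ hσ).trans (by lia))
    (fun s ⟨_, ⟨x, hx⟩, hs⟩ => by
      obtain ⟨u, hu, hstar⟩ := hV.exists_star_subset x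
      exact (coboundary_comp p φ s).trans
        (hφ _ ⟨u, hu, fun j => hstar _ (hx _ (hs j)) (hV.mem _)⟩))
    (fun _ ⟨_, h, _⟩ => h.elim)
  refine ⟨(fun s => β (r ∘ s)) - prism id (p ∘ r) φ, _, isOpenCover_range_avoidingNhd hF, ?_⟩
  rintro s ⟨_, ⟨x, rfl⟩, hs⟩
  have hx (j) : x ∈ V (r (s j)) := hFV _ (hs j _ (hr _))
  obtain ⟨u, hu, hstar⟩ := hV.exists_star_subset x
  have prism_cocycle : prism id (p ∘ r) (δ φ) s = 0 := by
    refine prism_eq_zero _ _ _ _ fun t _ ht => hφ _ ⟨u, hu, fun j => ?_⟩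
    obtain ⟨i, hi | hi⟩ := ht j
    · exact hi ▸ hstar _ (hx i) (hFV _ (hr _))
    · exact hi ▸ hstar _ (hx i) (hV.mem _)
  have homotopy := coboundary_prism id (p ∘ r) φ s
  rw [prism_cocycle, add_zero] at homotopy
  have primitive : δ β (r ∘ s) = φ (p ∘ r ∘ s) := hβ (mem_tuplesIn_nerve hx)
  rw [Pi.sub_apply, map_sub, Pi.sub_apply, coboundary_comp, homotopy, primitive]
  exact sub_eq_zero.2 (sub_sub_cancel _ _).symm

end FineCovers

section AlexanderSpanier

variable {A : Type*} [AddCommGroup A]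

lemma subsingleton_ASH_iff {Y : Type*} [TopologicalSpace Y] (m : ℕ) :
    Subsingleton (AS.ASH A (m + 1) Y) ↔
      ∀ φ : AS.Cochain A Y (m + 1), δ φ ∈ AS.locZero A Y (m + 2) →
        ∃ ψ : AS.Cochain A Y m, φ - δ ψ ∈ AS.locZero A Y (m + 1) := by
  have mem_cocycles (φ : AS.Cochain A Y (m + 1)) :
      (φ : AS.QC A Y (m + 1)) ∈ AS.cocycles A Y (m + 1) ↔ δ φ ∈ AS.locZero A Y (m + 2) :=
    QuotientAddGroup.eq_zero_iff _
  have eq_dQ (φ : AS.Cochain A Y (m + 1)) (ψ : AS.Cochain A Y m) :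
      AS.dQ A Y m ψ = φ ↔ φ - δ ψ ∈ AS.locZero A Y (m + 1) := by
    rw [← neg_add_eq_sub]
    exact QuotientAddGroup.eq
  rw [AS.ASH, QuotientAddGroup.subsingleton_iff, AddSubgroup.eq_top_iff']
  constructor
  · intro h φ hφ
    obtain ⟨q, hq⟩ := h ⟨φ, (mem_cocycles φ).2 hφ⟩
    obtain ⟨ψ, rfl⟩ := QuotientAddGroup.mk_surjective q
    exact ⟨ψ, (eq_dQ φ ψ).1 hq⟩
  · rintro h ⟨q, hq⟩
    obtain ⟨φ, rfl⟩ := QuotientAddGroup.mk_surjective q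
    obtain ⟨ψ, hψ⟩ := h φ ((mem_cocycles φ).1 hq)
    exact ⟨ψ, (eq_dQ φ ψ).2 hψ⟩

lemma subsingleton_ASH_of_covDimLE {Y : Type*} [TopologicalSpace Y] [CompactSpace Y]
    [NormalSpace Y] {n m : ℕ} (h : CovDimLE Y n) (hnm : n ≤ m) :
    Subsingleton (AS.ASH A (m + 1) Y) :=
  (subsingleton_ASH_iff m).2 fun _ => exists_sub_coboundary_mem_locZero h hnm

variable (A) in
theorem cohDim_le_covDim (X : Type*) [TopologicalSpace X] [T2Space X] :
    cohDim A X ≤ covDim X := by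
  refine le_sInf fun _ ⟨n, hn, h⟩ => sSup_le fun _ ⟨k, hk, B, _, hne⟩ => ?_
  rw [hn, hk, Nat.cast_le]
  by_contra! hnk
  obtain ⟨m, rfl⟩ := Nat.exists_eq_succ_of_ne_zero (Nat.ne_zero_of_lt hnk)
  rw [← not_subsingleton_iff_nontrivial, AS.Hc] at hne
  refine hne ?_
  split_ifs with hB
  · exact subsingleton_ASH_of_covDimLE
      (covDimLE_of_isClosed h (isCompact_iff_compactSpace.2 hB).isClosed) (by lia)
  · exact subsingleton_ASH_of_covDimLE (covDimLE_onePoint h) (by lia)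

end AlexanderSpanier

section CompactSupports

open scoped Topology
open Filter

variable {A X Y : Type*} [AddCommGroup A] {k m : ℕ}

section LocZero

variable [TopologicalSpace X]

lemma eventually_forall_mem {u : Set X} {x : X} (hu : u ∈ 𝓝 x) :
    ∀ᶠ s : Fin k → X in 𝓝 fun _ => x, ∀ j, s j ∈ u :=
  eventually_all.2 fun j => continuousAt_apply j _ hu

lemma mem_locZero_iff {φ : AS.Cochain A X k} :
    φ ∈ AS.locZero A X k ↔ ∀ x : X, ∀ᶠ s in 𝓝 (fun _ => x), φ s = 0 := by
  constructor
  · rintro ⟨U, hU, hφ⟩ x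
    obtain ⟨u, hu, hx⟩ : x ∈ ⋃₀ U := hU.2 ▸ mem_univ x
    exact (eventually_forall_mem ((hU.1 u hu).mem_nhds hx)).mono fun s hs => hφ s ⟨u, hu, hs⟩
  · intro h
    refine ⟨{u | IsOpen u ∧ ∀ s, (∀ j, s j ∈ u) → φ s = 0}, ⟨fun u hu => hu.1, ?_⟩,
      fun s ⟨u, hu, hs⟩ => hu.2 s hs⟩
    refine eq_univ_of_forall fun x => ?_
    have hx := h x
    rw [nhds_pi] at hx
    obtain ⟨I, t, ht, hIt⟩ := mem_pi'.1 hx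
    exact ⟨interior (⋂ j, t j),
      ⟨isOpen_interior, fun s hs => hIt fun j _ => mem_iInter.1 (interior_subset (hs j)) j⟩,
      mem_interior_iff_mem_nhds.2 (iInter_mem.2 ht)⟩

lemma coboundary_mem_locZero {φ : AS.Cochain A X k} (hφ : φ ∈ AS.locZero A X k) :
    δ φ ∈ AS.locZero A X (k + 1) :=
  AS.d_locZero A X k hφ

lemma exists_compactly_supported_sub_mem_locZero [WeaklyLocallyCompactSpace X]
    {φ : AS.Cochain A X k} {Z : Set X} (hZ : IsCompact Z)
    (hφ : ∀ x ∉ Z, ∀ᶠ s in 𝓝 (fun _ => x), φ s = 0) :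
    ∃ (e : AS.Cochain A X k) (K : Set X), IsCompact K ∧ Z ⊆ interior K ∧
      (∀ s, (∃ j, s j ∉ K) → e s = 0) ∧ φ - e ∈ AS.locZero A X k := by
  classical
  obtain ⟨K, hK, hZK⟩ := exists_compact_superset hZ
  refine ⟨fun s => if ∀ j, s j ∈ K then φ s else 0, K, hK, hZK,
    fun s ⟨j, hj⟩ => if_neg fun hs => hj (hs j), mem_locZero_iff.2 fun x => ?_⟩
  by_cases hx : x ∈ Z
  · exact (eventually_forall_mem (mem_interior_iff_mem_nhds.1 (hZK hx))).mono fun s hs =>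
      sub_eq_zero.2 (if_pos hs).symm
  · exact (hφ x hx).mono fun s hs => by simp only [Pi.sub_apply, hs, ite_self, sub_zero]

end LocZero

/-- The extension of a cochain along a vertex map, by zero outside the image. -/
def extendByZero (f : X → Y) (φ : (Fin k → X) → A) : (Fin k → Y) → A :=
  extend (f ∘ ·) φ 0

lemma extendByZero_comp {f : X → Y} (hf : Injective f) (φ : (Fin k → X) → A) (t : Fin k → X) :
    extendByZero f φ (f ∘ t) = φ t :=
  hf.comp_left.extend_apply φ 0 t

lemma extendByZero_eq_zero {f : X → Y} {φ : (Fin k → X) → A} {s : Fin k → Y}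
    (h : ∀ t, f ∘ t = s → φ t = 0) : extendByZero f φ s = 0 := by
  classical
  rw [extendByZero, extend_def]
  split_ifs with hs
  · exact h _ hs.choose_spec
  · rfl

lemma coboundary_extendByZero_comp {f : X → Y} (hf : Injective f) (φ : (Fin k → X) → A)
    (t : Fin (k + 1) → X) : δ (extendByZero f φ) (f ∘ t) = δ φ t := by
  simp only [coboundary_apply, comp_assoc, extendByZero_comp hf]

lemma coboundary_cone_coboundary (a : X) (φ : (Fin (k + 1) → X) → A) :
    δ (cone a (δ φ)) = δ φ := by
  rw [cone_coboundary, map_sub, coboundary_coboundary, sub_zero]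

variable [TopologicalSpace X] [TopologicalSpace Y]

lemma mem_locZero_of_isOpenEmbedding {f : X → Y} (hf : Topology.IsOpenEmbedding f)
    {φ : AS.Cochain A Y k} (h : (fun t => φ (f ∘ t)) ∈ AS.locZero A X k)
    (h0 : ∀ y ∉ range f, ∀ᶠ s in 𝓝 (fun _ => y), φ s = 0) : φ ∈ AS.locZero A Y k := by
  refine mem_locZero_iff.2 fun y => ?_
  by_cases hy : y ∈ range f
  · obtain ⟨x, rfl⟩ := hy
    have := (Topology.IsOpenEmbedding.piMap fun _ : Fin (k + 1) => hf).map_nhds_eq fun _ => x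
    exact this ▸ mem_locZero_iff.1 h x
  · exact h0 y hy

lemma coboundary_extendByZero_mem_locZero [T2Space Y] {f : X → Y}
    (hf : Topology.IsOpenEmbedding f) {φ : AS.Cochain A X k} {K : Set X} (hK : IsCompact K)
    (hφK : ∀ s, (∃ j, s j ∉ K) → φ s = 0) (hφ : δ φ ∈ AS.locZero A X (k + 1)) :
    δ (extendByZero f φ) ∈ AS.locZero A Y (k + 1) := by
  refine mem_locZero_of_isOpenEmbedding hf ?_ fun y hy => ?_
  · simpa only [coboundary_extendByZero_comp hf.injective] using hφ
  · have hKy : (f '' K)ᶜ ∈ 𝓝 y := (hK.image hf.continuous).isClosed.isOpen_compl.mem_nhds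
      fun hy' => hy (image_subset_range _ _ hy')
    refine (eventually_forall_mem hKy).mono fun s hs => coboundary_eq_zero fun i => ?_
    refine extendByZero_eq_zero fun t ht => hφK t ⟨0, fun h0 => ?_⟩
    exact hs (i.succAbove 0) ⟨t 0, h0, congrFun ht 0⟩

theorem exists_compact_primitive [T2Space X] [LocallyCompactSpace X]
    (h : Subsingleton (AS.Hc A (m + 1) X)) {φ : AS.Cochain A X (m + 1)} {K : Set X}
    (hK : IsCompact K) (hφK : ∀ s, (∃ j, s j ∉ K) → φ s = 0)
    (hφ : δ φ ∈ AS.locZero A X (m + 2)) :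
    ∃ (ψ : AS.Cochain A X m) (K' : Set X), IsCompact K' ∧
      (∀ s, (∀ j, s j ∉ K') → ψ s = 0) ∧ φ - δ ψ ∈ AS.locZero A X (m + 1) := by
  rw [AS.Hc] at h
  split_ifs at h with hX
  · obtain ⟨ψ, hψ⟩ := (subsingleton_ASH_iff m).1 h φ hφ
    exact ⟨ψ, univ, isCompact_univ, fun s hs => absurd (mem_univ _) (hs 0), hψ⟩
  let E : AS.Cochain A (OnePoint X) (m + 1) := extendByZero (↑) φ
  obtain ⟨ψ, hψ⟩ := (subsingleton_ASH_iff m).1 h E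
    (coboundary_extendByZero_mem_locZero OnePoint.isOpenEmbedding_coe hK hφK hφ)
  obtain ⟨U, hU, hUψ⟩ := id hψ
  obtain ⟨u, hu, hinf⟩ : OnePoint.infty ∈ ⋃₀ U := hU.2 ▸ mem_univ _
  refine ⟨fun s => cone OnePoint.infty (δ ψ) ((↑) ∘ s), ((↑) ⁻¹' u)ᶜ,
    ((OnePoint.isOpen_iff_of_mem hinf).1 (hU.1 u hu)).2, fun s hs => ?_, ?_⟩
  · have hE0 : E (Fin.cons OnePoint.infty ((↑) ∘ s)) = 0 :=
      extendByZero_eq_zero fun t ht => absurd (congrFun ht 0) (OnePoint.coe_ne_infty _)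
    have hsub := hUψ (Fin.cons OnePoint.infty ((↑) ∘ s))
      ⟨u, hu, fun j => Fin.cases hinf (fun j => not_not.1 (hs j)) j⟩
    rwa [Pi.sub_apply, hE0, zero_sub, neg_eq_zero] at hsub
  · have pulled : (fun s => (E - δ (cone OnePoint.infty (δ ψ))) ((↑) ∘ s)) ∈
        AS.locZero A X (m + 1) := by
      rw [coboundary_cone_coboundary]
      exact AS.pull_locZero A OnePoint.continuous_coe (m + 1) hψ
    convert pulled using 1
    funext s
    exact congrArg₂ (· - ·) (extendByZero_comp OnePoint.coe_injective φ s).symm rfl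

/-- A cocycle that is locally zero outside a compact set `Z` represents a class with compact
support in any open neighbourhood of `Z`, whose vanishing provides a primitive supported there. -/
theorem exists_primitive_of_subsingleton_Hc [LocallyCompactSpace X] [T2Space Y] {f : X → Y}
    (hf : Topology.IsOpenEmbedding f) (h : Subsingleton (AS.Hc A (m + 1) X))
    {φ : AS.Cochain A Y (m + 1)} (hφ : δ φ ∈ AS.locZero A Y (m + 2)) {Z : Set Y}
    (hZ : IsCompact Z) (hZf : Z ⊆ range f) (hφZ : ∀ y ∉ Z, ∀ᶠ s in 𝓝 (fun _ => y), φ s = 0) :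
    ∃ (ψ : AS.Cochain A Y m) (L : Set Y), IsClosed L ∧ Z ⊆ interior L ∧ L ⊆ range f ∧
      (∀ s, (∀ j, s j ∉ L) → ψ s = 0) ∧ φ - δ ψ ∈ AS.locZero A Y (m + 1) := by
  have : T2Space X := hf.toIsEmbedding.t2Space
  obtain ⟨e, K, hK, hZK, heK, he⟩ := exists_compactly_supported_sub_mem_locZero
    (φ := fun t : Fin (m + 2) → X => φ (f ∘ t)) (hf.isInducing.isCompact_preimage' hZ hZf)
    fun x hx => ((Pi.continuous_postcomp hf.continuous).tendsto fun _ => x).eventually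
      (hφZ (f x) hx)
  have hδe : δ e ∈ AS.locZero A X (m + 2) := by
    rw [← sub_sub_cancel (fun t : Fin (m + 2) → X => φ (f ∘ t)) e, map_sub]
    exact sub_mem (AS.pull_locZero A hf.continuous (m + 2) hφ) (coboundary_mem_locZero he)
  obtain ⟨c, K', hK', hcK', hc⟩ := exists_compact_primitive h hK heK hδe
  have hL : IsClosed (f '' (K ∪ K')) := ((hK.union hK').image hf.continuous).isClosed
  have hcL (s : Fin (m + 1) → Y) (hs : ∀ j, s j ∉ f '' (K ∪ K')) : extendByZero f c s = 0 :=
    extendByZero_eq_zero fun t ht => hcK' t fun j hj =>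
      hs j ⟨t j, Or.inr hj, congrFun ht j⟩
  refine ⟨extendByZero f c, f '' (K ∪ K'), hL, ?_, image_subset_range _ _, hcL, ?_⟩
  · rintro y hy
    obtain ⟨x, rfl⟩ := hZf hy
    exact interior_mono (image_mono subset_union_left)
      (hf.isOpenMap.image_interior_subset K (mem_image_of_mem f (hZK hy)))
  refine mem_locZero_of_isOpenEmbedding hf ?_ fun y hy => ?_
  · convert add_mem he hc using 1
    funext t
    rw [Pi.add_apply, Pi.sub_apply, Pi.sub_apply, Pi.sub_apply, sub_add_sub_cancel,
      coboundary_extendByZero_comp hf.injective]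
  · filter_upwards [hφZ y fun hyZ => hy (hZf hyZ), eventually_forall_mem
      (hL.isOpen_compl.mem_nhds fun hyL => hy (image_subset_range _ _ hyL))] with s hφs hs
    rw [Pi.sub_apply, hφs, coboundary_eq_zero fun i => hcL _ fun j => hs _, sub_zero]

end CompactSupports

section Shrinking

open scoped Topology
open Filter

universe u

variable {ι : Type*} {Q : Type u} {m : ℕ}

/-- A set so small that, for any labelling of its points subordinate to `F`, either a label is
missing or the set lies in `L`, and any label occurring off `L` is the index of a member of `V`
containing the set. -/
structure IsAdapted (F V : ι → Set Q) (L u : Set Q) : Prop where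
  subset_or_disjoint : u ⊆ L ∨ ∃ i, Disjoint u (F i)
  subset_of_mem : ∀ i, ∀ y ∈ u, (y ∉ L → y ∈ F i) → u ⊆ V i

lemma IsAdapted.mono {F V : ι → Set Q} {L u v : Set Q} (hu : IsAdapted F V L u) (hv : v ⊆ u) :
    IsAdapted F V L v where
  subset_or_disjoint := hu.subset_or_disjoint.imp hv.trans fun ⟨i, hi⟩ => ⟨i, hi.mono_left hv⟩
  subset_of_mem := fun i y hy hyF => hv.trans (hu.subset_of_mem i y (hv hy) hyF)

variable [TopologicalSpace Q]

lemma exists_isAdapted [Finite ι] {F V : ι → Set Q} (hF : ∀ i, IsClosed (F i))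
    (hV : ∀ i, IsOpen (V i)) (hFV : ∀ i, F i ⊆ V i) {L : Set Q} (hL : IsClosed L)
    (hFL : ⋂ i, F i ⊆ interior L) (hLV : L ⊆ ⋂ i, V i) (x : Q) :
    ∃ u ∈ 𝓝 x, IsAdapted F V L u := by
  have near_F : ∀ᶠ y in 𝓝 x, y ∈ avoidingNhd F x :=
    (isOpen_avoidingNhd hF x).mem_nhds fun _ => id
  have near_V : ∀ᶠ y in 𝓝 x, ∀ i, x ∈ V i → y ∈ V i :=
    eventually_all.2 fun i => eventually_imp_distrib_left.2 (hV i).mem_nhds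
  have near_L : ∀ᶠ y in 𝓝 x, x ∈ ⋂ i, F i → y ∈ L :=
    eventually_imp_distrib_left.2 fun hx => mem_interior_iff_mem_nhds.1 (hFL hx)
  have off_L : ∀ᶠ y in 𝓝 x, x ∉ L → y ∉ L :=
    eventually_imp_distrib_left.2 fun hx => hL.isOpen_compl.mem_nhds hx
  refine ⟨_, (near_F.and near_V).and (near_L.and off_L), ?_, fun i y hy hyF z hz => ?_⟩
  · by_cases hx : x ∈ ⋂ i, F i
    · exact Or.inl fun y hy => hy.2.1 hx
    · obtain ⟨i, hi⟩ : ∃ i, x ∉ F i := by simpa using hx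
      exact Or.inr ⟨i, disjoint_left.2 fun y hy hyF => hi (hy.1.1 i hyF)⟩
  · refine hz.1.2 i ?_
    by_cases hx : x ∈ L
    · exact mem_iInter.1 (hLV hx) i
    · exact hFV i (hy.1.1 i (hyF (hy.2.2 hx)))

lemma exists_isOpenCover_isAdapted [Finite ι] {F V : ι → Set Q} (hF : ∀ i, IsClosed (F i))
    (hV : ∀ i, IsOpen (V i)) (hFV : ∀ i, F i ⊆ V i) {L : Set Q} (hL : IsClosed L)
    (hFL : ⋂ i, F i ⊆ interior L) (hLV : L ⊆ ⋂ i, V i) {O : Set (Set Q)}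
    (hO : AS.IsOpenCover O) :
    ∃ U, AS.IsOpenCover U ∧ ∀ u ∈ U, IsAdapted F V L u ∧ ∃ o ∈ O, u ⊆ o := by
  refine ⟨{u | IsOpen u ∧ IsAdapted F V L u ∧ ∃ o ∈ O, u ⊆ o},
    ⟨fun u hu => hu.1, eq_univ_of_forall fun x => ?_⟩, fun u hu => hu.2⟩
  obtain ⟨u, hu, hFu⟩ := exists_isAdapted hF hV hFV hL hFL hLV x
  obtain ⟨o, ho, hx⟩ : x ∈ ⋃₀ O := hO.2 ▸ mem_univ x
  exact ⟨o ∩ interior u, ⟨(hO.1 o ho).inter isOpen_interior,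
    hFu.mono (inter_subset_right.trans interior_subset), o, ho, inter_subset_left⟩,
    hx, mem_interior_iff_mem_nhds.2 hu⟩

/-- The cochain `w` turns the labelling `r` into a Hopf extension problem on the nerve of a fine
cover, whose solution is a shrinking of `V`. -/
theorem exists_isBoundaryCover_subset [CompactSpace Q] [NormalSpace Q]
    (hQ : CovDimLE Q (m + 1)) {F V : Fin (m + 2) → Set Q} (hF : ∀ i, IsClosed (F i))
    (hV : ∀ i, IsOpen (V i)) (hFV : ∀ i, F i ⊆ V i) {r : Q → Fin (m + 2)}
    (hr : ∀ x, x ∈ F (r x)) {L : Set Q} (hL : IsClosed L) (hFL : ⋂ i, F i ⊆ interior L)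
    (hLV : L ⊆ ⋂ i, V i) {w : AS.Cochain ℤ Q m} (hw : δ w ∈ AS.locZero ℤ Q (m + 1))
    (hwL : ∀ s, (∀ j, s j ∉ L) → w s = kappa m (r ∘ s)) :
    ∃ W : Fin (m + 2) → Set Q, IsBoundaryCover W ∧ ∀ i, W i ⊆ V i := by
  obtain ⟨O, hO, hwO⟩ := hw
  obtain ⟨U, hU, hUO⟩ := exists_isOpenCover_isAdapted hF hV hFV hL hFL hLV hO
  obtain ⟨κ, _, P, p, hP⟩ := exists_isPointedCover hQ hU
  have star (x : Q) : ∃ u, IsAdapted F V L u ∧ (∃ o ∈ O, u ⊆ o) ∧ ∀ v, x ∈ P v → P v ⊆ u := by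
    obtain ⟨u, hu, hxu⟩ := hP.exists_star_subset x
    exact ⟨u, (hUO u hu).1, (hUO u hu).2, hxu⟩
  let H : LabelledCover m Q κ :=
    { U := P
      isOpen := hP.isOpen
      covers := hP.covers
      card_le := hP.card_le
      I := p ⁻¹' Lᶜ
      l := r ∘ p
      exists_ne := by
        rintro σ ⟨x, hx⟩ hσ
        obtain ⟨u, hu, -, hxu⟩ := star x
        have hpu (v) (hv : v ∈ σ) : p v ∈ u := hxu v (hx v hv) (hP.mem v)
        rcases hu.subset_or_disjoint with huL | ⟨i, hi⟩
        · exact ⟨0, fun v hv => (hσ hv (huL (hpu v hv))).elim⟩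
        · exact ⟨i, fun v hv hvi => disjoint_left.1 hi (hpu v hv) (hvi ▸ hr (p v))⟩
      w := fun s => w (p ∘ s)
      cocycle := by
        rintro s ⟨σ, ⟨x, hx⟩, hs⟩
        obtain ⟨u, -, ⟨o, ho, huo⟩, hxu⟩ := star x
        exact hwO (p ∘ s) ⟨o, ho, fun j => huo (hxu _ (hx _ (hs j)) (hP.mem _))⟩
      standard := fun s _ hs => hwL (p ∘ s) hs }
  obtain ⟨W, hW, hWH⟩ := H.solvable
  refine ⟨W, hW, fun i x hx => ?_⟩
  obtain ⟨v, hv, hvi⟩ := hWH i hx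
  obtain ⟨u, hu, -, hxu⟩ := star x
  exact hu.subset_of_mem i (p v) (hxu v hv (hP.mem v)) (fun hvL => hvi hvL ▸ hr (p v))
    (hxu v hv hv)

theorem exists_isBoundaryCover_of_subsingleton_Hc [CompactSpace Q] [T2Space Q]
    (hQ : CovDimLE Q (m + 1)) {V : Fin (m + 2) → Set Q} (hV : ∀ i, IsOpen (V i))
    (hVcov : ∀ x, ∃ i, x ∈ V i) {B : Type*} [TopologicalSpace B] [LocallyCompactSpace B]
    {j : B → Q} (hj : Topology.IsOpenEmbedding j) (hjV : range j = ⋂ i, V i)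
    (h : Subsingleton (AS.Hc ℤ (m + 1) B)) :
    ∃ W : Fin (m + 2) → Set Q, IsBoundaryCover W ∧ ∀ i, W i ⊆ V i := by
  obtain ⟨F, hFcov, hF, hFV⟩ := exists_iUnion_eq_closed_subset hV (fun _ => toFinite _)
    (eq_univ_of_forall fun x => mem_iUnion.2 (hVcov x))
  choose r hr using fun x => mem_iUnion.1 (hFcov ▸ mem_univ x : x ∈ ⋃ i, F i)
  have cocycle : δ (fun s : Fin (m + 2) → Q => δ (kappa m) (r ∘ s)) = 0 :=
    funext fun s => (coboundary_comp r _ s).trans (congrFun (coboundary_coboundary _) _)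
  have locZero_off (x : Q) (hx : x ∉ ⋂ i, F i) :
      ∀ᶠ s : Fin (m + 2) → Q in 𝓝 fun _ => x, δ (kappa m) (r ∘ s) = 0 := by
    obtain ⟨i, hi⟩ : ∃ i, x ∉ F i := by simpa using hx
    exact (eventually_forall_mem ((hF i).isOpen_compl.mem_nhds hi)).mono fun s hs =>
      coboundary_kappa_eq_zero fun k (hk : r (s k) = i) => hs k (hk ▸ hr (s k))
  obtain ⟨ψ, L, hL, hFL, hLj, hψ, hφψ⟩ := exists_primitive_of_subsingleton_Hc hj h
    (cocycle ▸ zero_mem _) (isClosed_iInter hF).isCompact (hjV ▸ iInter_mono hFV) locZero_off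
  refine exists_isBoundaryCover_subset hQ hF hV hFV hr hL hFL (hjV ▸ hLj)
    (w := (fun s => kappa m (r ∘ s)) - ψ) (by rwa [map_sub]) fun s hs => ?_
  rw [Pi.sub_apply, hψ s hs, sub_zero]

end Shrinking

section OrderReduction

universe u

lemma eq_of_card_eq {ι X : Type*} {C : ι → Set X} {k : ℕ} (hC : ∀ σ ∈ nerve C, σ.card ≤ k)
    {σ τ : Finset ι} (hσ : σ.card = k) (hτ : τ.card = k) {x : X} (hxσ : ∀ v ∈ σ, x ∈ C v)
    (hxτ : ∀ v ∈ τ, x ∈ C v) : σ = τ := by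
  classical
  have hcard := hC (σ ∪ τ) ⟨x, fun v hv => (Finset.mem_union.1 hv).elim (hxσ v) (hxτ v)⟩
  exact (Finset.eq_of_subset_of_card_le Finset.subset_union_left (hcard.trans_eq hσ.symm)).trans
    (Finset.eq_of_subset_of_card_le Finset.subset_union_right (hcard.trans_eq hτ.symm)).symm

lemma locallyFinite_biInter_finset {ι X : Type*} [TopologicalSpace X] {C : ι → Set X}
    (hC : LocallyFinite C) : LocallyFinite fun σ : Finset ι => ⋂ v ∈ σ, C v := fun x => by
  obtain ⟨t, ht, hfin⟩ := hC x
  refine ⟨t, ht, (Finset.finite_toSet hfin.toFinset.powerset).subset ?_⟩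
  rintro σ ⟨y, hy, hyt⟩
  exact Finset.mem_coe.2 (Finset.mem_powerset.2 fun v hv =>
    hfin.mem_toFinset.2 ⟨y, mem_iInter₂.1 hy v hv, hyt⟩)

lemma exists_mem_of_mem_iInter_closure {ι X : Type*} [TopologicalSpace X] {P : ι → Set X}
    (hcov : ∀ x, ∃ v, x ∈ P v) {k : ℕ}
    (hcard : ∀ τ ∈ nerve fun v => closure (P v), τ.card ≤ k) {σ : Finset ι} (hσ : σ.card = k)
    {x : X} (hx : x ∈ ⋂ v ∈ σ, closure (P v)) : ∃ v ∈ σ, x ∈ P v := by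
  classical
  obtain ⟨v, hv⟩ := hcov x
  refine ⟨v, by_contra fun hvσ => ?_, hv⟩
  have := hcard (insert v σ) ⟨x, (Finset.forall_mem_insert _ _ _).2
    ⟨subset_closure hv, mem_iInter₂.1 hx⟩⟩
  rw [Finset.card_insert_of_notMem hvσ, hσ] at this
  exact this.not_gt k.lt_succ_self

/-- Removing `G v` from `P v` leaves a cover of the common closure `⋂ v ∈ σ, closure (P v)`, but
with no point in all of its members. -/
structure IsCut {ι X : Type*} [TopologicalSpace X] (P : ι → Set X) (σ : Finset ι)
    (G : ι → Set X) : Prop where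
  isClosed : ∀ v, IsClosed (G v)
  subset : ∀ v, G v ⊆ ⋂ v ∈ σ, closure (P v)
  exists_notMem : ∀ x ∈ ⋂ v ∈ σ, closure (P v), ∃ v ∈ σ, x ∈ P v ∧ x ∉ G v
  exists_mem : ∀ x ∈ ⋂ v ∈ σ, closure (P v), ∃ v ∈ σ, x ∈ G v

variable {X : Type u} [TopologicalSpace X] [T2Space X] [LocallyCompactSpace X] {m : ℕ}

lemma exists_isCut {ι : Type*} (hX : CovDimLE X (m + 1))
    (hB : ∀ B : Set X, LocallyCompactSpace B → Subsingleton (AS.Hc ℤ (m + 1) B))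
    {P : ι → Set X} (hP : ∀ v, IsOpen (P v)) {σ : Finset ι} (hσ : σ.card = m + 2)
    (hcompact : IsCompact (⋂ v ∈ σ, closure (P v)))
    (hcov : ∀ x ∈ ⋂ v ∈ σ, closure (P v), ∃ v ∈ σ, x ∈ P v) : ∃ G, IsCut P σ G := by
  set Q : Set X := ⋂ v ∈ σ, closure (P v)
  have : CompactSpace Q := isCompact_iff_compactSpace.1 hcompact
  have hB_open : IsOpen (⋂ v ∈ σ, P v) := isOpen_biInter_finset fun v _ => hP v
  have hBQ : ⋂ v ∈ σ, P v ⊆ Q := iInter₂_mono fun v _ => subset_closure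
  have : LocallyCompactSpace ↥(⋂ v ∈ σ, P v) := hB_open.locallyCompactSpace
  let f : Fin (m + 2) ≃ σ := (σ.equivFinOfCardEq hσ).symm
  obtain ⟨W, hW, hWP⟩ := exists_isBoundaryCover_of_subsingleton_Hc (m := m) (Q := Q)
    (V := fun i => (↑) ⁻¹' P (f i)) (covDimLE_of_isClosed hX hcompact.isClosed)
    (fun i => (hP _).preimage continuous_subtype_val)
    (fun x => by
      obtain ⟨v, hv, hx⟩ := hcov x x.2
      exact ⟨f.symm ⟨v, hv⟩, by rwa [mem_preimage, f.apply_symm_apply]⟩)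
    (j := inclusion hBQ)
    ⟨Topology.IsEmbedding.inclusion hBQ, by
      rw [range_inclusion]
      exact hB_open.preimage continuous_subtype_val⟩
    (by
      ext x
      rw [range_inclusion]
      simp [f.forall_congr_left])
    (hB _ this)
  refine ⟨fun v => ⋃ hv : v ∈ σ, (↑) '' (W (f.symm ⟨v, hv⟩))ᶜ, fun v => ?_, fun v => ?_,
    fun x hx => ?_, fun x hx => ?_⟩
  · exact isClosed_iUnion_of_finite fun hv =>
      hcompact.isClosed.isClosedMap_subtype_val _ (hW.isOpen _).isClosed_compl
  · exact iUnion_subset fun hv => Subtype.coe_image_subset _ _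
  · obtain ⟨i, hi⟩ := hW.covers ⟨x, hx⟩
    refine ⟨f i, (f i).2, hWP i hi, ?_⟩
    simpa using fun _ => ⟨hx, hi⟩
  · obtain ⟨i, hi⟩ := hW.exists_notMem ⟨x, hx⟩
    refine ⟨f i, (f i).2, mem_iUnion.2 ⟨(f i).2, ⟨x, hx⟩, ?_, rfl⟩⟩
    rwa [Subtype.coe_eta, f.symm_apply_apply]

variable [ParacompactSpace X]

lemma exists_locallyFinite_compact_refinement {n : ℕ} (hX : CovDimLE X n) {U : Set (Set X)}
    (hU : ∀ u ∈ U, IsOpen u) (hcov : ⋃₀ U = univ) :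
    ∃ P : X → Set X, (∀ v, IsOpen (P v)) ∧ (∀ x, ∃ v, x ∈ P v) ∧
      LocallyFinite (fun v => closure (P v)) ∧ (∀ v, IsCompact (closure (P v))) ∧
      (∀ v, ∃ u ∈ U, P v ⊆ u) ∧ ∀ σ ∈ nerve fun v => closure (P v), σ.card ≤ n + 1 := by
  have exists_nhd (x : X) : ∃ A, IsOpen A ∧ x ∈ A ∧ IsCompact (closure A) ∧ ∃ u ∈ U, A ⊆ u := by
    obtain ⟨u, hu, hx⟩ : x ∈ ⋃₀ U := hcov ▸ mem_univ x
    obtain ⟨K, hK, hxK, hKu⟩ := exists_compact_subset (hU u hu) hx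
    exact ⟨interior K, isOpen_interior, hxK,
      hK.closure_of_subset interior_subset, u, hu, interior_subset.trans hKu⟩
  choose A hA hxA hA_compact u hu hAu using exists_nhd
  obtain ⟨A', hA', hA'_cov, hA'_fin, hA'A⟩ := precise_refinement A hA
    (eq_univ_of_forall fun x => mem_iUnion.2 ⟨x, hxA x⟩)
  obtain ⟨V, hV, hV_cov, hVA', hcard⟩ := exists_precise_refinement hX hA'
    fun x => mem_iUnion.1 (hA'_cov ▸ mem_univ x)
  have hV_fin : LocallyFinite V := hA'_fin.subset hVA'
  obtain ⟨P, hP_cov, hP, hPV⟩ := exists_iUnion_eq_closure_subset hV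
    (fun x => hV_fin.point_finite x) (eq_univ_of_forall fun x => mem_iUnion.2 (hV_cov x))
  have hPA (v : X) : P v ⊆ A v :=
    subset_closure.trans ((hPV v).trans ((hVA' v).trans (hA'A v)))
  exact ⟨P, hP, fun x => mem_iUnion.1 (hP_cov ▸ mem_univ x), hV_fin.subset hPV,
    fun v => (hA_compact v).of_isClosed_subset isClosed_closure (closure_mono (hPA v)),
    fun v => ⟨u v, hu v, (hPA v).trans (hAu v)⟩,
    fun σ ⟨x, hx⟩ => hcard σ ⟨x, fun v hv => hPV v (hx v hv)⟩⟩

theorem covDimLE_of_subsingleton_Hc (hX : CovDimLE X (m + 1))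
    (hB : ∀ B : Set X, LocallyCompactSpace B → Subsingleton (AS.Hc ℤ (m + 1) B)) :
    CovDimLE X m := by
  refine covDimLE_of_exists_refinement fun U hU hcov => ?_
  obtain ⟨P, hP, hP_cov, hP_fin, hP_compact, hPU, hcard⟩ :=
    exists_locallyFinite_compact_refinement hX hU hcov
  have exists_cut (σ : {σ : Finset X // σ.card = m + 2}) : ∃ G, IsCut P σ G := by
    refine exists_isCut hX hB hP σ.2 ?_ fun x => exists_mem_of_mem_iInter_closure hP_cov hcard σ.2
    obtain ⟨v, hv⟩ : σ.1.Nonempty := Finset.card_pos.1 (by omega)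
    exact (hP_compact v).of_isClosed_subset (isClosed_biInter fun _ _ => isClosed_closure)
      (biInter_subset_of_mem hv)
  choose G hG using exists_cut
  have isClosed_iUnion_cut (v : X) : IsClosed (⋃ σ, G σ v) :=
    (((locallyFinite_biInter_finset hP_fin).comp_injective Subtype.val_injective).subset
      fun σ => (hG σ).subset v).isClosed_iUnion fun σ => (hG σ).isClosed v
  refine ⟨X, fun v => P v \ ⋃ σ, G σ v, fun v => (hP v).sdiff (isClosed_iUnion_cut v),
    fun x => ?_, fun v => (hPU v).imp fun u hu => ⟨hu.1, sdiff_subset.trans hu.2⟩, ?_⟩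
  · by_cases hx : ∃ σ : {σ : Finset X // σ.card = m + 2}, x ∈ ⋂ v ∈ σ.1, closure (P v)
    · obtain ⟨σ, hσ⟩ := hx
      obtain ⟨v, -, hxv, hxG⟩ := (hG σ).exists_notMem x hσ
      refine ⟨v, hxv, fun h => ?_⟩
      obtain ⟨τ, hτ⟩ := mem_iUnion.1 h
      have : σ = τ := Subtype.ext <| eq_of_card_eq hcard σ.2 τ.2 (mem_iInter₂.1 hσ)
        (mem_iInter₂.1 ((hG τ).subset v hτ))
      exact hxG (this ▸ hτ)
    · obtain ⟨v, hv⟩ := hP_cov x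
      refine ⟨v, hv, fun h => hx ?_⟩
      exact (mem_iUnion.1 h).imp fun σ hσ => (hG σ).subset v hσ
  · rintro σ ⟨x, hx⟩
    by_contra! hσ
    obtain ⟨τ, hτσ, hτ⟩ := Finset.exists_subset_card_eq (Nat.succ_le_of_lt hσ)
    obtain ⟨v, hv, hxv⟩ := (hG ⟨τ, hτ⟩).exists_mem x
      (mem_iInter₂.2 fun v hv => subset_closure (hx v (hτσ hv)).1)
    exact (hx v (hτσ hv)).2 (mem_iUnion.2 ⟨⟨τ, hτ⟩, hxv⟩)

end OrderReduction

end Alexandroff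

theorem cohDim_int_le_covDim_general (X : Type*) [TopologicalSpace X] [T2Space X]
    [ParacompactSpace X] [LocallyCompactSpace X] :
    cohDim ℤ X ≤ covDim X ∧ (covDim X < ⊤ → cohDim ℤ X = covDim X) := by
  have hle : cohDim ℤ X ≤ covDim X := Alexandroff.cohDim_le_covDim ℤ X
  refine ⟨hle, fun hlt => hle.antisymm ?_⟩
  obtain ⟨_, ⟨n, rfl, hn⟩, -⟩ := sInf_lt_iff.1 hlt
  have covDim_le {k : ℕ} (hk : CovDimLE X k) : covDim X ≤ k := sInf_le ⟨k, rfl, hk⟩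
  induction n with
  | zero => exact (covDim_le hn).trans (by simp)
  | succ m ih =>
    by_cases hB : ∀ B : Set X, LocallyCompactSpace B → Subsingleton (AS.Hc ℤ (m + 1) B)
    · exact ih (Alexandroff.covDimLE_of_subsingleton_Hc hn hB)
    · simp only [not_forall, not_subsingleton_iff_nontrivial] at hB
      obtain ⟨B, hlc, hne⟩ := hB
      exact (covDim_le hn).trans (le_sSup ⟨m + 1, rfl, B, hlc, hne⟩)

/-- **Theorem 6** (Alexandroff's fundamental theorem of homological dimension).
For every locally compact metric space `X`, `dim_ℤ X ≤ dim X`, and if `dim X < ∞` then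
`dim_ℤ X = dim X`. -/
theorem cohDim_int_le_covDim (X : Type) [MetricSpace X] [LocallyCompactSpace X] :
    cohDim ℤ X ≤ covDim X ∧ (covDim X < ⊤ → cohDim ℤ X = covDim X) :=
  cohDim_int_le_covDim_general X
end
end

section
/- For any locally compact metric space X and any prime p, the following Bockstein inequalities hold: (1) dim_{Z(p^∞)} X ≤ dim_{Z/pZ} X; (2) dim_{Z/pZ} X ≤ dim_{Z(p^∞)} X + 1; (3) dim_Q X ≤ dim_{Z_(p)} X; (4) dim_{Z/pZ} X ≤ dim_{Z_(p)} X; (5) dim_{Z(p^∞)} X ≤ max{ dim_Q X, dim_{Z_(p)} X − 1 }; (6) dim_{Z_(p)} X ≤ max{ dim_Q X, dim_{Z(p^∞)} X + 1 }. -/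
open Set Function

open scoped ENNReal

noncomputable section

/-- The integers localized at `p`, realized as the additive subgroup of `ℚ` consisting of
rationals whose denominator is not divisible by `p`. -/
def ZLocalAt (p : ℕ) (hp : p.Prime) : AddSubgroup ℚ where
  carrier := {q : ℚ | ¬ (p ∣ q.den)}
  zero_mem' := by
    simp only [Set.mem_setOf_eq, Rat.den_zero, Nat.dvd_one]
    exact hp.ne_one
  add_mem' := by
    intro a b ha hb h
    rcases (hp.dvd_mul.mp (h.trans (Rat.add_den_dvd a b))) with h' | h'
    exacts [ha h', hb h']
  neg_mem' := by
    intro a ha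
    simpa only [Set.mem_setOf_eq, Rat.den_neg_eq_den] using ha

/-- The Prüfer `p`-group `ℤ(p^∞)`, realized as the subgroup of `ℚ/ℤ` of elements annihilated
by a power of `p`. -/
def Prufer (p : ℕ) : AddSubgroup (ℚ ⧸ AddSubgroup.zmultiples (1 : ℚ)) where
  carrier := {x | ∃ k : ℕ, (p ^ k : ℕ) • x = 0}
  zero_mem' := ⟨0, smul_zero _⟩
  add_mem' := by
    rintro a b ⟨k, hk⟩ ⟨l, hl⟩
    refine ⟨k + l, ?_⟩
    rw [smul_add, pow_add, mul_comm, mul_smul, hk, smul_zero, zero_add, mul_comm, mul_smul,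
      hl, smul_zero]
  neg_mem' := by
    rintro a ⟨k, hk⟩
    exact ⟨k, by rw [smul_neg, hk, neg_zero]⟩

/-!
A short exact sequence of coefficient groups induces one of Alexander–Spanier cochain complexes, and
the resulting long exact sequence gives (2), (4), (5) and (6) for `ℤ/p → ℤ(p^∞) → ℤ(p^∞)`,
`ℤ_(p) → ℤ_(p) → ℤ/p` and `ℤ_(p) → ℚ → ℤ(p^∞)`.

For (1) and (3), the cohomology of a compact space with torsion coefficients is torsion. Indeed,
let `f` be a map of finite range, not assumed continuous, which moves each point only slightly.
The prism homotopy makes a cocycle cohomologous to its pullback along `f`; this takes finitely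
many values, so a single integer annihilates it. If now `H^n(K; ℤ/p) = 0`, then multiplication by
`p` is injective on the `p`-torsion group `H^n(K; ℤ(p^∞))`. If `H^n(K; ℤ_(p)) = 0`, then the
`ℚ`-vector space `H^n(K; ℚ)` embeds into the torsion group `H^n(K; ℤ(p^∞))`. Either group is
therefore zero.
-/

namespace AS

section Tuples

variable {A X : Type*} [AddCommGroup A] {k : ℕ}

/-- The alternating coboundary on functions of `k`-tuples. The augmentation `k = 0`, which `AS.d`
leaves out, is where inductions on the length of tuples start. -/
def delta (φ : (Fin k → X) → A) (s : Fin (k + 1) → X) : A :=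
  ∑ i : Fin (k + 1), ((-1 : ℤ) ^ (i : ℕ)) • φ (s ∘ i.succAbove)

/-- The slice `φ(x, ·)`, which by `delta_cons` contracts the augmented complex of all cochains. -/
def slice (x : X) (φ : (Fin (k + 1) → X) → A) (t : Fin k → X) : A :=
  φ (Fin.cons x t)

lemma slice_sub (x : X) (φ ψ : (Fin (k + 1) → X) → A) :
    slice x (φ - ψ) = slice x φ - slice x ψ := rfl

lemma delta_sub (φ ψ : (Fin k → X) → A) : delta (φ - ψ) = delta φ - delta ψ := by
  funext s
  simp [delta, smul_sub, Finset.sum_sub_distrib]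

lemma delta_of_length_zero (φ : (Fin 0 → X) → A) (s : Fin 1 → X) : delta φ s = φ ![] := by
  simp [delta, Matrix.empty_eq]

lemma delta_cons (φ : (Fin (k + 1) → X) → A) (x : X) (t : Fin (k + 1) → X) :
    delta φ (Fin.cons x t) = φ t - delta (slice x φ) t := by
  have omit_zero : (Fin.cons x t : Fin (k + 2) → X) ∘ Fin.succAbove 0 = t := by
    funext j
    simp
  have omit_succ (i : Fin (k + 1)) :
      (Fin.cons x t : Fin (k + 2) → X) ∘ i.succ.succAbove = Fin.cons x (t ∘ i.succAbove) := by
    funext j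
    cases j using Fin.cases <;> simp
  rw [delta, Fin.sum_univ_succ, omit_zero]
  simp [omit_succ, delta, slice, pow_succ, sub_eq_add_neg]

lemma slice_delta (φ : (Fin (k + 1) → X) → A) (x : X) :
    slice x (delta φ) = φ - delta (slice x φ) :=
  funext (delta_cons φ x)

lemma delta_delta : ∀ {k : ℕ} (φ : (Fin k → X) → A), delta (delta φ) = 0
  | 0, φ => by
    funext s
    rw [← Fin.cons_self_tail s, delta_cons, delta_of_length_zero, delta_of_length_zero, slice,
      delta_of_length_zero, sub_self, Pi.zero_apply]
  | k + 1, φ => by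
    funext s
    rw [← Fin.cons_self_tail s, delta_cons, slice_delta, delta_sub, delta_delta (slice _ φ),
      sub_zero, sub_self, Pi.zero_apply]

/-- The prism operator of a self-map `f`, in recursive form; unfolded, it is
`(P φ)(s₀, …, s_{k-1}) = ∑ i, (-1)^i φ(s₀, …, s_i, f s_i, …, f s_{k-1})`. -/
def prism (f : X → X) : {k : ℕ} → ((Fin (k + 1) → X) → A) → (Fin k → X) → A
  | 0, _, _ => 0
  | _ + 1, φ, s => φ (Fin.cons (s 0) (f ∘ s)) - prism f (slice (s 0) φ) (Fin.tail s)

lemma prism_sub (f : X → X) : ∀ {k : ℕ} (φ ψ : (Fin (k + 1) → X) → A),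
    prism f (φ - ψ) = prism f φ - prism f ψ
  | 0, _, _ => (sub_zero 0).symm
  | k + 1, φ, ψ => by
    funext s
    simp only [prism, slice_sub, prism_sub f (slice (s 0) φ), Pi.sub_apply]
    abel

lemma comp_cons (f : X → X) (x : X) (t : Fin k → X) :
    f ∘ (Fin.cons x t : Fin (k + 1) → X) = Fin.cons (f x) (f ∘ t) := by
  funext j
  cases j using Fin.cases <;> simp

lemma prism_cons (f : X → X) (φ : (Fin (k + 2) → X) → A) (x : X) (t : Fin k → X) :
    prism f φ (Fin.cons x t) =
      slice (f x) (slice x φ) (f ∘ t) - prism f (slice x φ) t := by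
  simp [prism, comp_cons, slice]

lemma slice_prism (f : X → X) (φ : (Fin (k + 2) → X) → A) (x : X) :
    slice x (prism f φ) = (fun t => slice (f x) (slice x φ) (f ∘ t)) - prism f (slice x φ) :=
  funext (prism_cons f φ x)

lemma delta_prism_add_prism_delta (f : X → X) :
    ∀ {k : ℕ} (φ : (Fin (k + 1) → X) → A) (s : Fin (k + 1) → X),
      delta (prism f φ) s + prism f (delta φ) s = φ (f ∘ s) - φ s
  | 0, φ, s => by
    have cons_tail : (Fin.cons (s 0) (Fin.tail (f ∘ s)) : Fin 1 → X) = s := by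
      funext j
      fin_cases j
      rfl
    rw [delta_of_length_zero]
    simp only [prism, delta_cons, delta_of_length_zero, slice]
    rw [← cons_tail]
    simp [Matrix.empty_eq]
  | k + 1, φ, s => by
    obtain ⟨x, t, rfl⟩ : ∃ x t, s = Fin.cons x t := ⟨_, _, (Fin.cons_self_tail s).symm⟩
    have delta_comp : delta (fun t => slice (f x) (slice x φ) (f ∘ t)) t =
        delta (slice (f x) (slice x φ)) (f ∘ t) := rfl
    have homotopy_slice := delta_prism_add_prism_delta f (slice x φ) t
    rw [delta_cons, slice_prism, delta_sub, prism_cons, slice_delta, prism_sub, slice_sub,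
      slice_delta, comp_cons]
    change _ = slice (f x) φ (f ∘ t) - slice x φ t
    simp only [Pi.sub_apply, delta_comp]
    linear_combination (norm := abel) homotopy_slice

lemma prism_eq_zero (f : X → X) (S : Set X) :
    ∀ {k : ℕ} (φ : (Fin (k + 1) → X) → A) (s : Fin k → X), (∀ i, s i ∈ S) → (∀ i, f (s i) ∈ S) →
      (∀ t, (∀ i, t i ∈ S) → φ t = 0) → prism f φ s = 0
  | 0, _, _, _, _, _ => rfl
  | k + 1, φ, s, mem, map_mem, vanish => by
    have cons_mem {m : ℕ} (t : Fin m → X) (ht : ∀ i, t i ∈ S) :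
        ∀ i, (Fin.cons (s 0) t : Fin (m + 1) → X) i ∈ S :=
      Fin.cases (mem 0) ht
    have prism_slice : prism f (slice (s 0) φ) (Fin.tail s) = 0 :=
      prism_eq_zero f S _ _ (fun i => mem i.succ) (fun i => map_mem i.succ)
        fun t ht => vanish _ (cons_mem t ht)
    rw [prism, vanish _ (cons_mem (f ∘ s) map_mem), prism_slice, sub_zero]

end Tuples

section Torsion

variable {A K : Type*} [AddCommGroup A]

lemma exists_smul_eq_zero_of_finite {M : Submonoid ℕ} (hA : Module.IsTorsion' A M)
    {T : Set A} (hT : T.Finite) : ∃ m ∈ M, ∀ a ∈ T, m • a = 0 := by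
  induction T, hT using Set.Finite.induction_on with
  | empty => exact ⟨1, M.one_mem, by simp⟩
  | @insert a T _ _ ih =>
    obtain ⟨m, hm, hT⟩ := ih
    obtain ⟨l, hl⟩ := @hA a
    refine ⟨m * l, M.mul_mem hm l.2, ?_⟩
    rintro b (rfl | hb)
    · rw [mul_smul, show (l : ℕ) • b = 0 from hl, smul_zero]
    · rw [mul_comm, mul_smul, hT b hb, smul_zero]

variable [TopologicalSpace K]

lemma mk_delta_prism_mem_cobounds (f : K → K) : ∀ {n : ℕ} (φ : Cochain A K n),
    ((delta (prism f φ) : Cochain A K n) : QC A K n) ∈ cobounds A K n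
  | 0, φ => by
    have delta_eq_zero : (delta (prism f φ) : Cochain A K 0) = 0 :=
      funext fun s => delta_of_length_zero _ s
    rw [delta_eq_zero]
    exact zero_mem _
  | _ + 1, φ => ⟨(prism f φ : Cochain A K _), rfl⟩

variable [CompactSpace K] [R1Space K] {n : ℕ}

open scoped Uniformity Topology in
lemma exists_finite_range_small {U : Set (Set K)} (hU : IsOpenCover U) :
    ∃ f : K → K, (range f).Finite ∧ ∃ W : Set (Set K), IsOpenCover W ∧
      ∀ w ∈ W, ∃ u ∈ U, w ⊆ u ∧ MapsTo f w u := by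
  let _ : UniformSpace K := uniformSpaceOfCompactR1
  obtain ⟨V, V_mem, ball_V⟩ := lebesgue_number_lemma_sUnion (isCompact_univ (X := K)) hU.1 hU.2.ge
  obtain ⟨E, E_mem, E_symm, E_comp⟩ := comp_symm_mem_uniformity_sets V_mem
  let w (x : K) : Set K := interior (UniformSpace.ball x E)
  have w_mem (x : K) : w x ∈ 𝓝 x := interior_mem_nhds.2 (UniformSpace.ball_mem_nhds x E_mem)
  have w_entourage {x y : K} (hy : y ∈ w x) : (x, y) ∈ E :=
    interior_subset (s := UniformSpace.ball x E) hy
  obtain ⟨T, -, T_cover⟩ := isCompact_univ.elim_nhds_subcover w fun x _ => w_mem x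
  choose f f_mem f_near using fun x => mem_iUnion₂.1 (T_cover (mem_univ x))
  refine ⟨f, T.finite_toSet.subset (range_subset_iff.2 f_mem), range w,
    ⟨forall_mem_range.2 fun x => isOpen_interior,
      eq_univ_of_forall fun x => ⟨_, ⟨x, rfl⟩, mem_of_mem_nhds (w_mem x)⟩⟩, ?_⟩
  rintro _ ⟨x, rfl⟩
  obtain ⟨u, hu, ball_subset⟩ := ball_V x (mem_univ x)
  exact ⟨u, hu,
    fun y hy => ball_subset (E_comp ⟨y, w_entourage hy, refl_mem_uniformity E_mem⟩),
    fun y hy => ball_subset (E_comp ⟨y, w_entourage hy, E_symm.symm _ _ (w_entourage (f_near y))⟩)⟩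

lemma exists_finite_range_cohomologous {φ : Cochain A K n} (hφ : (φ : QC A K n) ∈ cocycles A K n) :
    ∃ ψ : Cochain A K n, (range ψ).Finite ∧
      ((ψ - φ : Cochain A K n) : QC A K n) ∈ cobounds A K n := by
  obtain ⟨U, cover, vanish⟩ := (QuotientAddGroup.eq_zero_iff _).1 hφ
  obtain ⟨f, f_finite, W, W_cover, near⟩ := exists_finite_range_small cover
  refine ⟨pull A f n φ, ?_, ?_⟩
  · refine ((Set.Finite.pi' fun _ : Fin (n + 1) => f_finite).image φ).subset ?_
    rintro _ ⟨s, rfl⟩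
    exact ⟨f ∘ s, fun i => mem_range_self _, rfl⟩
  · have prism_mem : prism f (delta φ) ∈ locZero A K n := by
      refine ⟨W, W_cover, fun s ⟨w, hw, hs⟩ => ?_⟩
      obtain ⟨u, hu, w_subset, w_mapsTo⟩ := near w hw
      exact prism_eq_zero f u _ s (fun i => w_subset (hs i)) (fun i => w_mapsTo (hs i))
        fun t ht => vanish t ⟨u, hu, ht⟩
    have homotopy : pull A f n φ - φ = delta (prism f φ) + prism f (delta φ) :=
      funext fun s => (delta_prism_add_prism_delta f φ s).symm
    rw [homotopy, QuotientAddGroup.mk_add, (QuotientAddGroup.eq_zero_iff _).2 prism_mem, add_zero]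
    exact mk_delta_prism_mem_cobounds f φ

variable (K n) in
lemma isTorsion'_ASH {M : Submonoid ℕ} (hA : Module.IsTorsion' A M) :
    Module.IsTorsion' (ASH A n K) M := by
  rintro ⟨⟨φ⟩, hφ⟩
  obtain ⟨ψ, range_finite, cohomologous⟩ := exists_finite_range_cohomologous hφ
  obtain ⟨m, hm, annihilates⟩ := exists_smul_eq_zero_of_finite hA range_finite
  have smul_ψ : m • ψ = 0 := funext fun s => annihilates _ (mem_range_self s)
  have smul_φ : m • φ = -(m • (ψ - φ)) := by rw [smul_sub, smul_ψ, zero_sub, neg_neg]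
  refine ⟨⟨m, hm⟩, (QuotientAddGroup.eq_zero_iff _).2 ?_⟩
  change ((m • φ : Cochain A K n) : QC A K n) ∈ cobounds A K n
  rw [smul_φ]
  exact neg_mem (nsmul_mem cohomologous m)

end Torsion

section Coefficients

variable {A B C : Type*} [AddCommGroup A] [AddCommGroup B] [AddCommGroup C]
  (X : Type*) (n : ℕ)

lemma d_comp (g : A →+ B) (φ : Cochain A X n) : d B X n (g ∘ φ) = g ∘ d A X n φ := by
  funext s
  simp [d, map_sum]

variable [TopologicalSpace X]

lemma comp_mem_locZero (g : A →+ B) {φ : Cochain A X n} (hφ : φ ∈ locZero A X n) :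
    g ∘ φ ∈ locZero B X n := by
  obtain ⟨U, cover, vanish⟩ := hφ
  exact ⟨U, cover, fun s small => by simp [vanish s small]⟩

/-- The map of cochain groups `QC A X n → QC B X n` induced by a homomorphism of coefficients. -/
def push (g : A →+ B) : QC A X n →+ QC B X n :=
  QuotientAddGroup.map _ _ (g.compLeft (Fin (n + 1) → X)) fun _ => comp_mem_locZero X n g

lemma dQ_push (g : A →+ B) (x : QC A X n) :
    dQ B X n (push X n g x) = push X (n + 1) g (dQ A X n x) := by
  induction x using QuotientAddGroup.induction_on with
  | H φ => exact congrArg (QuotientAddGroup.mk' _) (d_comp X n g φ)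

lemma dQ_dQ (x : QC A X n) : dQ A X (n + 1) (dQ A X n x) = 0 := by
  induction x using QuotientAddGroup.induction_on with
  | H φ => exact congrArg (QuotientAddGroup.mk' _) (delta_delta φ)

lemma push_injective {g : A →+ B} (hg : Injective g) : Injective (push X n g) := by
  rw [injective_iff_map_eq_zero]
  intro x hx
  induction x using QuotientAddGroup.induction_on with
  | H φ =>
    obtain ⟨U, cover, vanish⟩ := (QuotientAddGroup.eq_zero_iff _).1 hx
    exact (QuotientAddGroup.eq_zero_iff _).2
      ⟨U, cover, fun s small => (map_eq_zero_iff g hg).1 (vanish s small)⟩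

lemma push_surjective {g : A →+ B} (hg : Surjective g) : Surjective (push X n g) :=
  QuotientAddGroup.map_surjective_of_surjective _ _ _
    ((QuotientAddGroup.mk_surjective).comp hg.comp_left) _

lemma push_exact {f : A →+ B} {g : B →+ C} (hfg : Exact f g) :
    Exact (push X n f) (push X n g) := by
  intro x
  induction x using QuotientAddGroup.induction_on with
  | H φ =>
    refine ⟨fun hx => ?_, ?_⟩
    · obtain ⟨U, cover, vanish⟩ := (QuotientAddGroup.eq_zero_iff _).1 hx
      refine ⟨((invFun f ∘ φ : Cochain A X n) : QC A X n), ?_⟩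
      refine (QuotientAddGroup.eq_iff_sub_mem).2 ⟨U, cover, fun s small => sub_eq_zero.2 ?_⟩
      exact invFun_eq ((hfg _).1 (vanish s small))
    · rintro ⟨y, hy⟩
      rw [← hy]
      induction y using QuotientAddGroup.induction_on with
      | H ψ => exact congrArg (QuotientAddGroup.mk' _) (funext fun s => hfg.apply_apply_eq_zero _)

end Coefficients

open CategoryTheory Limits

universe u v

section Functoriality

variable (X : Type u) [TopologicalSpace X]

/-- The Alexander–Spanier cochain complex of `X`, as a functor of the coefficient group. -/
def complexFunctor : AddCommGrpCat.{v} ⥤ CochainComplex AddCommGrpCat.{max u v} ℕ where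
  obj A := CochainComplex.of (fun n => .of (QC A X n)) (fun n => AddCommGrpCat.ofHom (dQ A X n))
    fun n => AddCommGrpCat.ext (dQ_dQ X n)
  map g := CochainComplex.ofHom (fun n => AddCommGrpCat.ofHom (push X n g.hom)) fun n => by
    ext x
    simpa using dQ_push X n g.hom x
  map_id A := by
    ext n φ
    rfl
  map_comp f g := by
    ext n φ
    rfl

instance : (complexFunctor.{u, v} X).Additive where
  map_add {A B f g} := by
    ext n x
    induction x using QuotientAddGroup.induction_on with
    | H φ => rfl

lemma complexFunctor_shortExact {S : ShortComplex AddCommGrpCat.{v}} (hS : S.ShortExact) :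
    (S.map (complexFunctor.{u, v} X)).ShortExact :=
  HomologicalComplex.shortExact_of_degreewise_shortExact _ fun n =>
    { mono_f := (AddCommGrpCat.mono_iff_injective _).2 <|
        push_injective X n hS.ab_injective_f
      epi_g := (AddCommGrpCat.epi_iff_surjective _).2 <|
        push_surjective X n hS.ab_surjective_g
      exact := (ShortComplex.ab_exact_iff_function_exact _).2 <|
        push_exact X n ((ShortComplex.ab_exact_iff_function_exact _).1 hS.exact) }

/-- The homology of a cochain complex of abelian groups as a quotient of prescribed subgroups of
cocycles and coboundaries. -/
def homologyEquivQuotient (K : CochainComplex AddCommGrpCat.{v} ℕ) (i j k : ℕ)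
    (hi : (ComplexShape.up ℕ).prev j = i) (hk : (ComplexShape.up ℕ).next j = k)
    {Z B : AddSubgroup (K.X j)} (ker_eq : (K.d j k).hom.ker = Z)
    (range_eq : (K.d i j).hom.range = B) : K.homology j ≃+ Z ⧸ B.comap Z.subtype :=
  (K.homologyIsoSc' i j k hi hk ≪≫
    (K.sc' i j k).abHomologyIso).addCommGroupIsoToAddEquiv.trans <|
    QuotientAddGroup.congr _ _ (AddEquiv.addSubgroupCongr ker_eq) <| by
      subst ker_eq range_eq
      ext x
      constructor
      · rintro ⟨_, ⟨y, rfl⟩, rfl⟩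
        exact ⟨y, rfl⟩
      · rintro ⟨y, hy⟩
        exact ⟨_, ⟨y, rfl⟩, Subtype.ext hy⟩

lemma complexFunctor_d (A : AddCommGrpCat.{v}) (n : ℕ) :
    ((complexFunctor X).obj A).d n (n + 1) = AddCommGrpCat.ofHom (dQ A X n) :=
  CochainComplex.of_d (fun n => AddCommGrpCat.of (QC A X n))
    (fun n => AddCommGrpCat.ofHom (dQ A X n)) n

/-- Alexander–Spanier cohomology of `X` in degree `n`, as a functor of the coefficient group. -/
def cohomologyFunctor (n : ℕ) : AddCommGrpCat.{v} ⥤ AddCommGrpCat.{max u v} :=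
  complexFunctor X ⋙ HomologicalComplex.homologyFunctor _ _ n

instance (n : ℕ) : (cohomologyFunctor.{u, v} X n).Additive :=
  inferInstanceAs (complexFunctor X ⋙ HomologicalComplex.homologyFunctor _ _ n).Additive

/-- The values of `cohomologyFunctor` are the groups `ASH`. -/
def cohomologyEquiv (A : AddCommGrpCat.{v}) :
    (n : ℕ) → ((cohomologyFunctor X n).obj A ≃+ ASH A n X)
  | 0 => homologyEquivQuotient ((complexFunctor X).obj A) 0 0 1 (by simp) (by simp)
      (Z := cocycles A X 0) (B := cobounds A X 0)
      (congrArg (fun g => g.hom.ker) (complexFunctor_d X A 0)) (by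
        rw [HomologicalComplex.shape _ _ _ (by simp)]
        exact AddMonoidHom.range_zero)
  | n + 1 => homologyEquivQuotient ((complexFunctor X).obj A) n (n + 1) (n + 2) (by simp) (by simp)
      (Z := cocycles A X (n + 1)) (B := cobounds A X (n + 1))
      (congrArg (fun g => g.hom.ker) (complexFunctor_d X A (n + 1)))
      (congrArg (fun g => g.hom.range) (complexFunctor_d X A n))

end Functoriality

section LongExactSequence

variable {X : Type u} [TopologicalSpace X] {n : ℕ}

lemma isZero_cohomologyFunctor_iff {A : AddCommGrpCat.{v}} :
    IsZero ((cohomologyFunctor X n).obj A) ↔ Subsingleton (ASH A n X) := by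
  rw [AddCommGrpCat.isZero_iff_subsingleton]
  exact (cohomologyEquiv X A n).toEquiv.subsingleton_congr

lemma cohomologyFunctor_map_nsmul_id (A : AddCommGrpCat.{v}) (m : ℕ)
    (x : (cohomologyFunctor.{u, v} X n).obj A) :
    (cohomologyFunctor X n).map (m • 𝟙 A) x = m • x := by
  rw [Functor.map_nsmul, CategoryTheory.Functor.map_id]
  rfl

variable {S : ShortComplex AddCommGrpCat.{v}} (hS : S.ShortExact)
include hS

lemma nontrivial_left (h : Nontrivial (ASH S.X₁ (n + 1) X)) :
    Nontrivial (ASH S.X₃ n X) ∨ Nontrivial (ASH S.X₂ (n + 1) X) := by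
  contrapose! h
  simp only [← isZero_cohomologyFunctor_iff] at h ⊢
  exact ((complexFunctor_shortExact X hS).homology_exact₁ n (n + 1) rfl).isZero_of_both_isZero
    h.1 h.2

lemma nontrivial_right (h : Nontrivial (ASH S.X₃ n X)) :
    Nontrivial (ASH S.X₂ n X) ∨ Nontrivial (ASH S.X₁ (n + 1) X) := by
  contrapose! h
  simp only [← isZero_cohomologyFunctor_iff] at h ⊢
  exact ((complexFunctor_shortExact X hS).homology_exact₃ n (n + 1) rfl).isZero_of_both_isZero
    h.1 h.2

lemma cohomologyFunctor_map_injective (h : Subsingleton (ASH S.X₁ n X)) :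
    Injective ((cohomologyFunctor.{u, v} X n).map S.g) :=
  (AddCommGrpCat.mono_iff_injective _).1 <|
    ((complexFunctor_shortExact X hS).homology_exact₂ n).mono_g <|
      (isZero_cohomologyFunctor_iff.2 h).eq_zero_of_src _

end LongExactSequence

section Divisibility

variable {K : Type u} [TopologicalSpace K] [CompactSpace K] [R1Space K] {n : ℕ}

variable (K n) in
lemma isTorsion'_cohomologyFunctor {A : AddCommGrpCat.{v}} {M : Submonoid ℕ}
    (hA : Module.IsTorsion' A M) : Module.IsTorsion' ((cohomologyFunctor K n).obj A) M := by
  intro x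
  obtain ⟨m, hm⟩ := isTorsion'_ASH K n hA (x := cohomologyEquiv K A n x)
  refine ⟨m, (cohomologyEquiv K A n).injective ?_⟩
  rw [map_zero, ← hm]
  exact map_nsmul (cohomologyEquiv K A n) (m : ℕ) x

lemma subsingleton_ASH_of_shortExact_nsmul {p : ℕ} {C A : AddCommGrpCat.{v}} {i : C ⟶ A}
    {w : i ≫ (p • 𝟙 A) = 0} (hS : (ShortComplex.mk i (p • 𝟙 A) w).ShortExact)
    (hA : Module.IsTorsion' A (Submonoid.powers p)) (hC : Subsingleton (ASH C n K)) :
    Subsingleton (ASH A n K) := by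
  have smul_injective : Injective fun x : (cohomologyFunctor K n).obj A => p • x := by
    rw [← funext (cohomologyFunctor_map_nsmul_id A p)]
    exact cohomologyFunctor_map_injective hS hC
  rw [← isZero_cohomologyFunctor_iff, AddCommGrpCat.isZero_iff_subsingleton]
  refine subsingleton_of_forall_eq 0 fun x => ?_
  obtain ⟨k, hk⟩ := (Submodule.isTorsion'_powers_iff p).1 (isTorsion'_cohomologyFunctor K n hA) x
  refine smul_injective.iterate k ?_
  simpa [smul_iterate] using hk

lemma subsingleton_ASH_of_isIso_nsmul {S : ShortComplex AddCommGrpCat.{v}} (hS : S.ShortExact)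
    {M : Submonoid ℕ} (h_iso : ∀ m ∈ M, IsIso (m • 𝟙 S.X₂)) (h₃ : Module.IsTorsion' S.X₃ M)
    (h₁ : Subsingleton (ASH S.X₁ n K)) : Subsingleton (ASH S.X₂ n K) := by
  rw [← isZero_cohomologyFunctor_iff, AddCommGrpCat.isZero_iff_subsingleton]
  refine subsingleton_of_forall_eq 0 fun x => ?_
  obtain ⟨⟨m, hm⟩, hx⟩ :=
    isTorsion'_cohomologyFunctor K n h₃ (x := (cohomologyFunctor K n).map S.g x)
  have smul_x : m • x = 0 := by
    refine cohomologyFunctor_map_injective hS h₁ ?_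
    rw [map_nsmul, map_zero]
    exact hx
  have := h_iso m hm
  refine (AddCommGrpCat.mono_iff_injective ((cohomologyFunctor K n).map (m • 𝟙 S.X₂))).1
    inferInstance ?_
  rw [cohomologyFunctor_map_nsmul_id, smul_x, map_zero]

end Divisibility

lemma exists_compact_model (B : Type u) [TopologicalSpace B] [LocallyCompactSpace B] [T2Space B] :
    ∃ (K : Type u) (_ : TopologicalSpace K) (_ : CompactSpace K) (_ : T2Space K),
      ∀ (A : Type v) [AddCommGroup A] (n : ℕ), Nontrivial (Hc A n B) ↔ Nontrivial (ASH A n K) := by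
  by_cases h : CompactSpace B
  · exact ⟨B, inferInstance, h, inferInstance, fun A _ n => by rw [Hc, if_pos h]⟩
  · exact ⟨OnePoint B, inferInstance, inferInstance, inferInstance,
      fun A _ n => by rw [Hc, if_neg h]⟩

section Dimension

variable {X : Type u} [TopologicalSpace X]

lemma le_cohDim {A : Type v} [AddCommGroup A] {n : ℕ} {B : Set X} (hB : LocallyCompactSpace B)
    (h : Nontrivial (Hc A n B)) : (n : ℕ∞) ≤ cohDim A X :=
  le_sSup ⟨n, rfl, B, hB, h⟩

lemma cohDim_le [T2Space X] {A : Type v} [AddCommGroup A] {c : ℕ∞}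
    (h : ∀ (K : Type u) [TopologicalSpace K] [CompactSpace K] [T2Space K],
      (∀ (A' : Type v) [AddCommGroup A'] (n : ℕ), Nontrivial (ASH A' n K) →
        (n : ℕ∞) ≤ cohDim A' X) →
      ∀ n : ℕ, Nontrivial (ASH A n K) → (n : ℕ∞) ≤ c) :
    cohDim A X ≤ c := by
  refine sSup_le ?_
  rintro _ ⟨n, rfl, B, hB, nontrivial⟩
  obtain ⟨K, _, _, _, model⟩ := exists_compact_model B
  exact h K (fun A' _ m hm => le_cohDim hB ((model A' m).2 hm)) n ((model A n).1 nontrivial)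

variable (X) [T2Space X]

lemma cohDim_le_of_nsmul {p : ℕ} {C A : AddCommGrpCat.{v}} {i : C ⟶ A}
    {w : i ≫ (p • 𝟙 A) = 0} (hS : (ShortComplex.mk i (p • 𝟙 A) w).ShortExact)
    (hA : Module.IsTorsion' A (Submonoid.powers p)) : cohDim A X ≤ cohDim C X := by
  refine cohDim_le fun K _ _ _ le_cohDim n hn => le_cohDim _ n ?_
  contrapose! hn
  exact subsingleton_ASH_of_shortExact_nsmul hS hA hn

variable {S : ShortComplex AddCommGrpCat.{v}} (hS : S.ShortExact)
include hS

lemma cohDim_left_le : cohDim S.X₁ X ≤ max (cohDim S.X₂ X) (cohDim S.X₃ X + 1) := by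
  refine cohDim_le fun K _ _ _ le_cohDim n hn => ?_
  obtain _ | n := n
  · exact zero_le
  obtain h₃ | h₂ := nontrivial_left hS hn
  · exact le_max_of_le_right (by push_cast; gcongr; exact le_cohDim _ n h₃)
  · exact le_max_of_le_left (le_cohDim _ _ h₂)

lemma cohDim_right_le : cohDim S.X₃ X ≤ max (cohDim S.X₂ X) (cohDim S.X₁ X - 1) := by
  refine cohDim_le fun K _ _ _ le_cohDim n hn => ?_
  obtain h₂ | h₁ := nontrivial_right hS hn
  · exact le_max_of_le_left (le_cohDim _ _ h₂)
  · exact le_max_of_le_right (ENat.le_sub_of_add_le_right ENat.one_ne_top (le_cohDim _ _ h₁))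

lemma cohDim_middle_le {M : Submonoid ℕ} (h_iso : ∀ m ∈ M, IsIso (m • 𝟙 S.X₂))
    (h₃ : Module.IsTorsion' S.X₃ M) : cohDim S.X₂ X ≤ cohDim S.X₁ X := by
  refine cohDim_le fun K _ _ _ le_cohDim n hn => le_cohDim _ n ?_
  contrapose! hn
  exact subsingleton_ASH_of_isIso_nsmul hS h_iso h₃ hn

end Dimension

end AS

lemma exists_mul_pow_add_mul_eq_one {p : ℕ} (hp : p.Prime) {b : ℕ} (hb : ¬ p ∣ b) (k : ℕ) :
    ∃ u v : ℤ, (u * p ^ k + v * b : ℚ) = 1 := by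
  obtain ⟨u, v, huv⟩ :=
    Nat.isCoprime_iff_coprime.2 ((hp.coprime_iff_not_dvd.2 hb).pow_left k)
  exact ⟨u, v, by exact_mod_cast huv⟩

namespace ZLocalAt

variable {p : ℕ} {hp : p.Prime}

lemma mem_iff {q : ℚ} : q ∈ ZLocalAt p hp ↔ ∃ b : ℕ, ¬ p ∣ b ∧ ∃ a : ℤ, b * q = a := by
  refine ⟨fun hq => ⟨q.den, hq, q.num, Rat.den_mul_eq_num q⟩, ?_⟩
  rintro ⟨b, hb, a, hab⟩ (dvd_den : p ∣ q.den)
  have b_ne_zero : (b : ℚ) ≠ 0 := fun h => hb (by simp [Nat.cast_eq_zero.1 h])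
  have q_eq : q = Rat.divInt a b := by
    rw [Rat.divInt_eq_div, Int.cast_natCast, eq_div_iff b_ne_zero, mul_comm, hab]
  have den_dvd : q.den ∣ b := by
    rw [q_eq]
    exact_mod_cast Rat.den_dvd a b
  exact hb (dvd_den.trans den_dvd)

lemma intCast_mem (m : ℤ) : (m : ℚ) ∈ ZLocalAt p hp :=
  mem_iff.2 ⟨1, hp.not_dvd_one, m, by simp⟩

lemma exists_intCast_eq {q : ℚ} (hq : q ∈ ZLocalAt p hp) {k : ℕ} {m : ℤ} (hm : p ^ k * q = m) :
    ∃ c : ℤ, (c : ℚ) = q := by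
  obtain ⟨b, hb, a, hab⟩ := mem_iff.1 hq
  obtain ⟨u, v, bezout⟩ := exists_mul_pow_add_mul_eq_one hp hb k
  refine ⟨u * m + v * a, ?_⟩
  push_cast
  linear_combination q * bezout - u * hm - v * hab

lemma exists_pow_mul_eq_intCast_and_sub_mem (hp : p.Prime) (r : ℚ) :
    ∃ s : ℚ, (∃ k : ℕ, ∃ m : ℤ, p ^ k * s = m) ∧ r - s ∈ ZLocalAt p hp := by
  obtain ⟨k, b, hb, den_eq⟩ := Nat.exists_eq_pow_mul_and_not_dvd r.den_nz p hp.ne_one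
  obtain ⟨u, v, bezout⟩ := exists_mul_pow_add_mul_eq_one hp hb k
  have num_eq : (p : ℚ) ^ k * b * r = r.num := by
    rw [← Rat.den_mul_eq_num r, den_eq]
    push_cast
    rfl
  refine ⟨v * b * r, ⟨k, v * r.num, ?_⟩, mem_iff.2 ⟨b, hb, u * r.num, ?_⟩⟩
  · push_cast
    linear_combination v * num_eq
  · push_cast
    linear_combination u * num_eq - b * r * bezout

lemma nsmul_injective : Injective fun q : ZLocalAt p hp => p • q :=
  smul_right_injective _ hp.ne_zero

lemma ratCast_den_ne_zero (q : ZLocalAt p hp) : ((q : ℚ).den : ZMod p) ≠ 0 :=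
  fun h => q.2 ((ZMod.natCast_eq_zero_iff _ _).1 h)

/-- Reduction modulo `p` of the `p`-local integers, the numerator times the inverse of the
denominator. -/
def toZMod (p : ℕ) (hp : p.Prime) : ZLocalAt p hp →+ ZMod p :=
  have := Fact.mk hp
  AddMonoidHom.mk' (fun q => ((q : ℚ) : ZMod p)) fun q r =>
    Rat.cast_add_of_ne_zero (ratCast_den_ne_zero q) (ratCast_den_ne_zero r)

lemma toZMod_surjective : Surjective (toZMod p hp) := by
  have := Fact.mk hp
  intro x
  obtain ⟨m, rfl⟩ := ZMod.intCast_surjective x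
  exact ⟨⟨m, intCast_mem m⟩, Rat.cast_intCast m⟩

lemma exact_nsmul_toZMod : Exact (fun q : ZLocalAt p hp => p • q) (toZMod p hp) := by
  have := Fact.mk hp
  intro q
  refine ⟨fun (hq : ((q : ℚ) : ZMod p) = 0) => ?_, ?_⟩
  · rw [Rat.cast_def, div_eq_zero_iff, or_iff_left (ratCast_den_ne_zero q),
      ZMod.intCast_zmod_eq_zero_iff_dvd] at hq
    obtain ⟨c, num_eq⟩ := hq
    have p_ne_zero : (p : ℚ) ≠ 0 := mod_cast hp.ne_zero
    refine ⟨⟨q / p, mem_iff.2 ⟨(q : ℚ).den, q.2, c, ?_⟩⟩, Subtype.ext ?_⟩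
    · rw [← mul_div_assoc, Rat.den_mul_eq_num, num_eq, div_eq_iff p_ne_zero]
      push_cast
      ring
    · simp [mul_div_cancel₀ _ p_ne_zero]
  · rintro ⟨r, rfl⟩
    simp

end ZLocalAt

namespace Prufer

variable {p : ℕ}

lemma mk_mem_iff {r : ℚ} :
    (r : ℚ ⧸ AddSubgroup.zmultiples (1 : ℚ)) ∈ Prufer p ↔ ∃ k : ℕ, ∃ m : ℤ, p ^ k * r = m := by
  refine exists_congr fun k => ?_
  rw [← QuotientAddGroup.mk_nsmul, QuotientAddGroup.eq_zero_iff, AddSubgroup.mem_zmultiples_iff]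
  simp [eq_comm]

lemma exists_mk_eq (x : Prufer p) : ∃ (r : ℚ) (hr : _), ⟨(r : ℚ ⧸ _), hr⟩ = x := by
  obtain ⟨x, hx⟩ := x
  obtain ⟨r, rfl⟩ := QuotientAddGroup.mk_surjective x
  exact ⟨r, hx, rfl⟩

lemma isTorsion' (p : ℕ) : Module.IsTorsion' (Prufer p) (Submonoid.powers p) :=
  (Submodule.isTorsion'_powers_iff p).2 fun x => x.2.imp fun _ hk => Subtype.ext hk

lemma nsmul_surjective (hp : p ≠ 0) : Surjective fun x : Prufer p => p • x := by
  intro x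
  obtain ⟨r, hr, rfl⟩ := exists_mk_eq x
  obtain ⟨k, m, hm⟩ := mk_mem_iff.1 hr
  have mul_div : (p : ℚ) * (r / p) = r := mul_div_cancel₀ _ (mod_cast hp)
  refine ⟨⟨(r / p : ℚ), mk_mem_iff.2 ⟨k + 1, m, ?_⟩⟩, Subtype.ext ?_⟩
  · rw [← hm, pow_succ, mul_assoc, mul_div]
  · exact congrArg QuotientAddGroup.mk ((nsmul_eq_mul p (r / p : ℚ)).trans mul_div)

/-- The class of `1 / p`, a generator of the `p`-torsion of the Prüfer group. -/
def invP (hp : p ≠ 0) : Prufer p :=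
  ⟨(1 / p : ℚ), mk_mem_iff.2 ⟨1, 1, by simp [hp]⟩⟩

lemma coe_zsmul_invP (hp : p ≠ 0) (m : ℤ) :
    ((m • invP hp : Prufer p) : ℚ ⧸ AddSubgroup.zmultiples (1 : ℚ)) = (m / p : ℚ) :=
  congrArg _ ((zsmul_eq_mul _ _).trans (mul_one_div _ _))

lemma zsmul_invP_eq_zero_iff (hp : p ≠ 0) {m : ℤ} : m • invP hp = 0 ↔ (p : ℤ) ∣ m := by
  rw [← ZeroMemClass.coe_eq_zero, coe_zsmul_invP, QuotientAddGroup.eq_zero_iff,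
    AddSubgroup.mem_zmultiples_iff]
  refine exists_congr fun c => ?_
  rw [zsmul_eq_mul, mul_one, eq_div_iff (mod_cast hp), eq_comm, mul_comm]
  norm_cast

/-- The embedding of `ℤ/p` into the Prüfer group as its `p`-torsion, sending `1` to `1 / p`. -/
def ofZMod (hp : p ≠ 0) : ZMod p →+ Prufer p :=
  ZMod.lift p ⟨zmultiplesHom _ (invP hp), (zsmul_invP_eq_zero_iff hp).2 dvd_rfl⟩

lemma ofZMod_intCast (hp : p ≠ 0) (m : ℤ) : ofZMod hp m = m • invP hp :=
  ZMod.lift_coe _ _ _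

lemma ofZMod_injective (hp : p ≠ 0) : Injective (ofZMod hp) := by
  rw [injective_iff_map_eq_zero]
  intro x hx
  obtain ⟨m, rfl⟩ := ZMod.intCast_surjective x
  rw [ofZMod_intCast, zsmul_invP_eq_zero_iff] at hx
  exact (ZMod.intCast_zmod_eq_zero_iff_dvd _ _).2 hx

lemma exact_ofZMod_nsmul (hp : p ≠ 0) : Exact (ofZMod hp) fun x : Prufer p => p • x := by
  intro x
  refine ⟨fun hx => ?_, ?_⟩
  · obtain ⟨r, hr, rfl⟩ := exists_mk_eq x
    obtain ⟨m, hm⟩ := AddSubgroup.mem_zmultiples_iff.1 <|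
      (QuotientAddGroup.eq_zero_iff (p • r)).1 (congrArg Subtype.val hx)
    rw [zsmul_eq_mul, mul_one, nsmul_eq_mul, mul_comm, ← div_eq_iff (mod_cast hp)] at hm
    refine ⟨m, Subtype.ext ?_⟩
    rw [ofZMod_intCast, coe_zsmul_invP, hm]
  · rintro ⟨y, rfl⟩
    simp [← map_nsmul]

variable (hp : p.Prime)

lemma zmultiples_one_le_zLocalAt : AddSubgroup.zmultiples (1 : ℚ) ≤ ZLocalAt p hp :=
  AddSubgroup.zmultiples_le.2 (mod_cast ZLocalAt.intCast_mem (hp := hp) 1)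

/-- The canonical map `ℤ(p^∞) → ℚ / ℤ_(p)` induced by the identity of `ℚ`. -/
def toQuotient : Prufer p →+ ℚ ⧸ ZLocalAt p hp :=
  (QuotientAddGroup.map _ _ (AddMonoidHom.id ℚ) (zmultiples_one_le_zLocalAt hp)).comp
    (Prufer p).subtype

lemma toQuotient_injective : Injective (toQuotient hp) := by
  rw [injective_iff_map_eq_zero]
  intro x hx
  obtain ⟨r, hr, rfl⟩ := exists_mk_eq x
  obtain ⟨k, m, hm⟩ := mk_mem_iff.1 hr
  obtain ⟨c, hc⟩ := ZLocalAt.exists_intCast_eq ((QuotientAddGroup.eq_zero_iff r).1 hx) hm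
  exact Subtype.ext <| (QuotientAddGroup.eq_zero_iff r).2 <|
    AddSubgroup.mem_zmultiples_iff.2 ⟨c, by simpa using hc⟩

lemma toQuotient_surjective : Surjective (toQuotient hp) := by
  intro x
  obtain ⟨r, rfl⟩ := QuotientAddGroup.mk_surjective x
  obtain ⟨s, hs, sub_mem⟩ := ZLocalAt.exists_pow_mul_eq_intCast_and_sub_mem hp r
  exact ⟨⟨s, mk_mem_iff.2 hs⟩, (QuotientAddGroup.eq_iff_sub_mem.2 sub_mem).symm⟩

/-- The canonical isomorphism of the Prüfer group with `ℚ / ℤ_(p)`. -/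
def equivQuotient : Prufer p ≃+ ℚ ⧸ ZLocalAt p hp :=
  AddEquiv.ofBijective (toQuotient hp) ⟨toQuotient_injective hp, toQuotient_surjective hp⟩

/-- The projection of `ℚ` onto the Prüfer group with kernel `ℤ_(p)`. -/
def ofRat : ℚ →+ Prufer p :=
  (equivQuotient hp).symm.toAddMonoidHom.comp (QuotientAddGroup.mk' (ZLocalAt p hp))

lemma ofRat_surjective : Surjective (ofRat hp) :=
  (equivQuotient hp).symm.surjective.comp (QuotientAddGroup.mk'_surjective _)

lemma exact_subtype_ofRat : Exact (ZLocalAt p hp).subtype (ofRat hp) := fun r => by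
  change (equivQuotient hp).symm r = 0 ↔ _
  rw [AddEquiv.map_eq_zero_iff, QuotientAddGroup.eq_zero_iff]
  simp

end Prufer

section CoefficientSequences

open CategoryTheory

universe v

lemma shortExact_of_exact {A B C : AddCommGrpCat.{v}} {f : A ⟶ B} {g : B ⟶ C}
    (hf : Injective f) (hfg : Exact f g) (hg : Surjective g) :
    (ShortComplex.mk f g (AddCommGrpCat.ext hfg.apply_apply_eq_zero)).ShortExact where
  mono_f := (AddCommGrpCat.mono_iff_injective f).2 hf
  epi_g := (AddCommGrpCat.epi_iff_surjective g).2 hg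
  exact := (ShortComplex.ab_exact_iff_function_exact _).2 hfg

variable {p : ℕ}

lemma coe_nsmul_id (A : AddCommGrpCat.{v}) (m : ℕ) : ⇑(m • 𝟙 A) = fun x : A => m • x := by
  ext x
  simp

lemma isIso_nsmul_id_rat (hp : p ≠ 0) :
    ∀ m ∈ Submonoid.powers p, IsIso (m • 𝟙 (AddCommGrpCat.of ℚ)) := by
  rintro _ ⟨k, rfl⟩
  have pow_ne_zero : ((p ^ k : ℕ) : ℚ) ≠ 0 := mod_cast pow_ne_zero k hp
  rw [ConcreteCategory.isIso_iff_bijective, coe_nsmul_id]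
  refine ⟨smul_right_injective ℚ (mod_cast pow_ne_zero), fun q => ⟨q / (p ^ k : ℕ), ?_⟩⟩
  exact (nsmul_eq_mul _ _).trans (mul_div_cancel₀ q pow_ne_zero)

lemma exact_ofZMod_nsmul_id (hp : p ≠ 0) :
    Exact (AddCommGrpCat.ofHom (Prufer.ofZMod hp)) (p • 𝟙 (AddCommGrpCat.of (Prufer p))) := by
  rw [coe_nsmul_id]
  exact Prufer.exact_ofZMod_nsmul hp

lemma shortExact_zMod_prufer (hp : p ≠ 0) :
    (ShortComplex.mk (AddCommGrpCat.ofHom (Prufer.ofZMod hp))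
      (p • 𝟙 (AddCommGrpCat.of (Prufer p)))
      (AddCommGrpCat.ext (exact_ofZMod_nsmul_id hp).apply_apply_eq_zero)).ShortExact :=
  shortExact_of_exact (Prufer.ofZMod_injective hp) (exact_ofZMod_nsmul_id hp)
    (by rw [coe_nsmul_id]; exact Prufer.nsmul_surjective hp)

lemma exact_nsmul_id_toZMod (hp : p.Prime) :
    Exact (p • 𝟙 (AddCommGrpCat.of (ZLocalAt p hp)))
      (AddCommGrpCat.ofHom (ZLocalAt.toZMod p hp)) := by
  rw [coe_nsmul_id]
  exact ZLocalAt.exact_nsmul_toZMod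

lemma shortExact_zLocalAt_zMod (hp : p.Prime) :
    (ShortComplex.mk (p • 𝟙 (AddCommGrpCat.of (ZLocalAt p hp)))
      (AddCommGrpCat.ofHom (ZLocalAt.toZMod p hp))
      (AddCommGrpCat.ext (exact_nsmul_id_toZMod hp).apply_apply_eq_zero)).ShortExact :=
  shortExact_of_exact (by rw [coe_nsmul_id]; exact ZLocalAt.nsmul_injective)
    (exact_nsmul_id_toZMod hp) ZLocalAt.toZMod_surjective

lemma shortExact_zLocalAt_rat_prufer (hp : p.Prime) :
    (ShortComplex.mk (AddCommGrpCat.ofHom (ZLocalAt p hp).subtype)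
      (AddCommGrpCat.ofHom (Prufer.ofRat hp))
      (AddCommGrpCat.ext (Prufer.exact_subtype_ofRat hp).apply_apply_eq_zero)).ShortExact :=
  shortExact_of_exact Subtype.val_injective (Prufer.exact_subtype_ofRat hp)
    (Prufer.ofRat_surjective hp)

theorem bockstein_inequalities_general (p : ℕ) (hp : p.Prime)
    (X : Type*) [TopologicalSpace X] [T2Space X] :
    cohDim ↥(Prufer p) X ≤ cohDim (ZMod p) X ∧
    cohDim (ZMod p) X ≤ cohDim ↥(Prufer p) X + 1 ∧
    cohDim ℚ X ≤ cohDim ↥(ZLocalAt p hp) X ∧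
    cohDim (ZMod p) X ≤ cohDim ↥(ZLocalAt p hp) X ∧
    cohDim ↥(Prufer p) X ≤ max (cohDim ℚ X) (cohDim ↥(ZLocalAt p hp) X - 1) ∧
    cohDim ↥(ZLocalAt p hp) X ≤ max (cohDim ℚ X) (cohDim ↥(Prufer p) X + 1) := by
  have zMod_prufer := shortExact_zMod_prufer hp.ne_zero
  have zLocalAt_zMod := shortExact_zLocalAt_zMod hp
  have zLocalAt_rat_prufer := shortExact_zLocalAt_rat_prufer hp
  have prufer_torsion := Prufer.isTorsion' p
  have rat_iso := isIso_nsmul_id_rat hp.ne_zero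
  exact ⟨(AS.cohDim_le_of_nsmul X zMod_prufer prufer_torsion :),
    (AS.cohDim_left_le X zMod_prufer).trans (max_le le_self_add le_rfl),
    (AS.cohDim_middle_le X zLocalAt_rat_prufer rat_iso prufer_torsion :),
    (AS.cohDim_right_le X zLocalAt_zMod).trans (max_le le_rfl tsub_le_self),
    (AS.cohDim_right_le X zLocalAt_rat_prufer :), (AS.cohDim_left_le X zLocalAt_rat_prufer :)⟩

end CoefficientSequences

/-- **Proposition 7** (Bockstein's inequalities).  For any locally compact metric space `X`
and prime `p`:
(1) `dim_{ℤ(p^∞)} X ≤ dim_{ℤ/p} X`;  (2) `dim_{ℤ/p} X ≤ dim_{ℤ(p^∞)} X + 1`;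
(3) `dim_ℚ X ≤ dim_{ℤ_(p)} X`;  (4) `dim_{ℤ/p} X ≤ dim_{ℤ_(p)} X`;
(5) `dim_{ℤ(p^∞)} X ≤ max (dim_ℚ X) (dim_{ℤ_(p)} X - 1)`;
(6) `dim_{ℤ_(p)} X ≤ max (dim_ℚ X) (dim_{ℤ(p^∞)} X + 1)`. -/
theorem bockstein_inequalities (p : ℕ) (hp : p.Prime)
    (X : Type) [MetricSpace X] [LocallyCompactSpace X] :
    cohDim ↥(Prufer p) X ≤ cohDim (ZMod p) X ∧
    cohDim (ZMod p) X ≤ cohDim ↥(Prufer p) X + 1 ∧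
    cohDim ℚ X ≤ cohDim ↥(ZLocalAt p hp) X ∧
    cohDim (ZMod p) X ≤ cohDim ↥(ZLocalAt p hp) X ∧
    cohDim ↥(Prufer p) X ≤ max (cohDim ℚ X) (cohDim ↥(ZLocalAt p hp) X - 1) ∧
    cohDim ↥(ZLocalAt p hp) X ≤ max (cohDim ℚ X) (cohDim ↥(Prufer p) X + 1) :=
  bockstein_inequalities_general p hp X
end
end
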